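/- For all μ, ν ∈ M¹₊(Ω), the reduced measures satisfy |μ* − ν*| ≤ |μ − ν|; equivalently, since |μ − ν| = sup{μ,ν} − inf{μ,ν} for positive measures, (sup{μ*, ν*})(A) + (inf{μ, ν})(A) ≤ (sup{μ, ν})(A) + (inf{μ*, ν*})(A) for every Borel set A ⊂ Ω. -/

import Mathlib

open MeasureTheory Set Filter Topology
open scoped ENNReal NNReal

noncomputable section

/-- Euclidean space `ℝ^N`. -/
abbrev Euc (N : ℕ) : Type := EuclideanSpace ℝ (Fin N)

/-- `ρ(x) = dist(x, ∂Ω)`, realized as the distance from `x` to the complement of `Ω`. -/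
def rho {N : ℕ} (Ω : Set (Euc N)) (x : Euc N) : ℝ := Metric.infDist x Ωᶜ

/-- The Laplacian (in the space variable) of `f : ℝ^N → ℝ`. -/
def lap {N : ℕ} (f : Euc N → ℝ) (x : Euc N) : ℝ :=
  ∑ i : Fin N, fderiv ℝ (fun y => fderiv ℝ f y (EuclideanSpace.single i 1)) x
    (EuclideanSpace.single i 1)

/-- The parabolic cylinder `Q_T = Ω × (0,T)`. -/
def QT {N : ℕ} (Ω : Set (Euc N)) (T : ℝ) : Set (Euc N × ℝ) := Ω ×ˢ Ioo 0 T

/-- `∂_t ζ + Δ ζ` for a function `ζ(x,t)` (curried). -/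
def heatAdj {N : ℕ} (ζ : Euc N → ℝ → ℝ) (p : Euc N × ℝ) : ℝ :=
  deriv (ζ p.1) p.2 + lap (fun y => ζ y p.2) p.1

/-- `C^{2,1}` regularity: `ζ`, `∂_t ζ`, `∇_x ζ` and `D²_x ζ` exist and are continuous. -/
def C21 {N : ℕ} (ζ : Euc N → ℝ → ℝ) : Prop :=
  Continuous (fun p : Euc N × ℝ => ζ p.1 p.2) ∧
  (∀ (x : Euc N) (t : ℝ), DifferentiableAt ℝ (ζ x) t) ∧
  Continuous (fun p : Euc N × ℝ => deriv (ζ p.1) p.2) ∧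
  (∀ (t : ℝ) (x : Euc N), DifferentiableAt ℝ (fun y => ζ y t) x) ∧
  Continuous (fun p : Euc N × ℝ => fderiv ℝ (fun y => ζ y p.2) p.1) ∧
  (∀ (t : ℝ) (x : Euc N), DifferentiableAt ℝ (fun y => fderiv ℝ (fun z => ζ z t) y) x) ∧
  Continuous (fun p : Euc N × ℝ => fderiv ℝ (fun y => fderiv ℝ (fun z => ζ z p.2) y) p.1)

/-- Membership in `C^{2,1}_{ℓ,0}(Q̄_T)` : `C^{2,1}` regularity together with
vanishing on `∂Ω × [0,T] ∪ Ω̄ × {T}`. -/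
def TestZero {N : ℕ} (Ω : Set (Euc N)) (T : ℝ) (ζ : Euc N → ℝ → ℝ) : Prop :=
  C21 ζ ∧ (∀ x ∈ frontier Ω, ∀ t ∈ Icc (0:ℝ) T, ζ x t = 0) ∧
  (∀ x ∈ closure Ω, ζ x T = 0)

/-- `g : ℝ → ℝ` continuous, nondecreasing and vanishing on `(-∞,0]`. -/
def GoodG (g : ℝ → ℝ) : Prop := Continuous g ∧ Monotone g ∧ ∀ r : ℝ, r ≤ 0 → g r = 0

/-- `μ ∈ M¹₊(Ω)` : a positive Radon measure on `Ω` with `∫_Ω ρ dμ < ∞`. -/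
def MemM1 {N : ℕ} (Ω : Set (Euc N)) (μ : Measure (Euc N)) : Prop :=
  μ Ωᶜ = 0 ∧ (∀ K : Set (Euc N), K ⊆ Ω → IsCompact K → μ K < ⊤) ∧
  (∫⁻ x, ENNReal.ofReal (rho Ω x) ∂μ) < ⊤

/-- A positive Radon measure on the (open) set `U`. -/
def RadonOn {N : ℕ} (U : Set (Euc N)) (ν : Measure (Euc N)) : Prop :=
  ν Uᶜ = 0 ∧ ∀ K : Set (Euc N), K ⊆ U → IsCompact K → ν K < ⊤

/-- Weak solution of `(P_μ)` : `∂_t u - Δu + g(u) = 0` in `Q_T`, `u = 0` on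
`∂Ω × (0,T)`, `u(·,0) = μ`. -/
def WeakSol {N : ℕ} (Ω : Set (Euc N)) (T : ℝ) (g : ℝ → ℝ) (μ : Measure (Euc N))
    (u : Euc N × ℝ → ℝ) : Prop :=
  IntegrableOn u (QT Ω T) ∧
  IntegrableOn (fun p => g (u p) * rho Ω p.1) (QT Ω T) ∧
  ∀ ζ : Euc N → ℝ → ℝ, TestZero Ω T ζ →
    (∫ p in QT Ω T,
      (-(u p) * deriv (ζ p.1) p.2 - u p * lap (fun y => ζ y p.2) p.1 + ζ p.1 p.2 * g (u p)))
      = ∫ x, ζ x 0 ∂μ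

/-- Weak subsolution of `(P_μ)`. -/
def WeakSubSol {N : ℕ} (Ω : Set (Euc N)) (T : ℝ) (g : ℝ → ℝ) (μ : Measure (Euc N))
    (u : Euc N × ℝ → ℝ) : Prop :=
  IntegrableOn u (QT Ω T) ∧
  IntegrableOn (fun p => g (u p) * rho Ω p.1) (QT Ω T) ∧
  ∀ ζ : Euc N → ℝ → ℝ, TestZero Ω T ζ → (∀ x t, 0 ≤ ζ x t) →
    (∫ p in QT Ω T,
      (-(u p) * deriv (ζ p.1) p.2 - u p * lap (fun y => ζ y p.2) p.1 + ζ p.1 p.2 * g (u p)))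
      ≤ ∫ x, ζ x 0 ∂μ

/-- `μ` is a good measure relative to `g` : `(P_μ)` admits a weak solution. -/
def GoodMeasure {N : ℕ} (Ω : Set (Euc N)) (T : ℝ) (g : ℝ → ℝ) (μ : Measure (Euc N)) : Prop :=
  ∃ u, WeakSol Ω T g μ u

/-- Essential limit of `F(t)` as `t → 0⁺` equals `L`. -/
def EssLimInit (F : ℝ → ℝ) (L : ℝ) : Prop :=
  Tendsto F ((𝓝[>] (0:ℝ)) ⊓ (ae (volume : Measure ℝ))) (𝓝 L)

/-- Essential limit of `F(t)` as `t → 0⁺` is `+∞`. -/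
def EssLimInitTop (F : ℝ → ℝ) : Prop :=
  Tendsto F ((𝓝[>] (0:ℝ)) ⊓ (ae (volume : Measure ℝ))) atTop

/-- `ν` is the initial trace of `u` on `U ⊆ Ω` : for every `φ ∈ C_c(U)`,
`ess lim_{t→0} ∫_Ω u(·,t) φ dx = ∫ φ dν`. -/
def InitTraceOn {N : ℕ} (Ω U : Set (Euc N)) (u : Euc N × ℝ → ℝ) (ν : Measure (Euc N)) : Prop :=
  ∀ φ : Euc N → ℝ, Continuous φ → HasCompactSupport φ → tsupport φ ⊆ U →
    EssLimInit (fun t => ∫ x in Ω, u (x, t) * φ x) (∫ x, φ x ∂ν)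

/-- `μstar` is the reduced measure of `μ` : the largest good measure `≤ μ`. -/
def IsReducedMeasure {N : ℕ} (Ω : Set (Euc N)) (T : ℝ) (g : ℝ → ℝ)
    (μ μstar : Measure (Euc N)) : Prop :=
  MemM1 Ω μstar ∧ μstar ≤ μ ∧ GoodMeasure Ω T g μstar ∧
  ∀ ν : Measure (Euc N), MemM1 Ω ν → GoodMeasure Ω T g ν → ν ≤ μ → ν ≤ μstar

/-- The `N`-dimensional Hausdorff measure on `ℝ^N`. -/
def hausN {N : ℕ} : Measure (Euc N) := MeasureTheory.Measure.hausdorffMeasure (N : ℝ)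

/-!
The crux is that a finite measure `m` with compact support in `Ω` lying below a good measure is
itself good. Let `u` solve the problem for the good measure. Subtracting from the heat potential `k`
of `m` a corrector `b`, the heat potential of the localized absorption of `u` plus a multiple of
`t²`, gives `k - b ≤ u` near the support of `m`, so that `g (k - b)` is controlled by the source of
`b` and `k - b` is a subsolution for `m`. Starting from the solution of the linear problem, which
lies above `k - b`, a monotone iteration with Lipschitz regularizations of `g` produces a decreasing
sequence of approximate solutions. Their absorptions are bounded away from `t = 0`, and since the
integral of `b` over `{t < ε}` is `o(ε)` they do not concentrate at `t = 0`; by Vitali's theorem the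
limit solves the semilinear problem.

Applied to the restrictions of `μ* ⊓ ν` to the compact subsets of `Ω`, this yields `μ* ⊓ ν ≤ ν*` by
maximality of `ν*`, and symmetrically `ν* ⊓ μ ≤ μ*`. For densities with respect to `μ + ν` these
two inequalities, together with `μ* ≤ μ` and `ν* ≤ ν`, imply the claim pointwise.
-/

set_option maxSynthPendingDepth 3

section ParabolicCalculus

/-- The standard unit vectors of `ℝ^N`, spelled as in the definition of `lap`. -/
abbrev unitVec {N : ℕ} (i : Fin N) : Euc N := EuclideanSpace.single i (1 : ℝ)

/-- `f(x, t)` is of class `C^{2,1}`, with `∂_t f = τ`, `∇_x f = D` and `D²_x f = H`. Carrying the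
derivatives as data makes the product and chain rules one-liners. -/
structure HasParabolicDerivs {N : ℕ} (f τ : Euc N × ℝ → ℝ) (D : Euc N × ℝ → Euc N →L[ℝ] ℝ)
    (H : Euc N × ℝ → Euc N →L[ℝ] Euc N →L[ℝ] ℝ) : Prop where
  continuous : Continuous f
  continuous_time : Continuous τ
  continuous_space : Continuous D
  continuous_space₂ : Continuous H
  hasDerivAt_time : ∀ p : Euc N × ℝ, HasDerivAt (fun s => f (p.1, s)) (τ p) p.2
  hasFDerivAt_space : ∀ p : Euc N × ℝ, HasFDerivAt (fun y => f (y, p.2)) (D p) p.1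
  hasFDerivAt_space₂ : ∀ p : Euc N × ℝ, HasFDerivAt (fun y => D (y, p.2)) (H p) p.1

/-- `C^{2,1}` regularity of a function of `p = (x, t)`. -/
def IsC21 {N : ℕ} (f : Euc N × ℝ → ℝ) : Prop := C21 (fun x t => f (x, t))

/-- The adjoint heat operator `∂_t + Δ` acting on functions of `p = (x, t)`. -/
def adjHeat {N : ℕ} (f : Euc N × ℝ → ℝ) (p : Euc N × ℝ) : ℝ := heatAdj (fun x t => f (x, t)) p

/-- The derivative in the space variable of a function of `p = (x, t)`. -/
def spaceFDeriv {N : ℕ} (f : Euc N × ℝ → ℝ) (p : Euc N × ℝ) : Euc N →L[ℝ] ℝ :=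
  fderiv ℝ (fun y => f (y, p.2)) p.1

variable {N : ℕ} {f f₁ f₂ τ τ₁ τ₂ : Euc N × ℝ → ℝ} {D D₁ D₂ : Euc N × ℝ → Euc N →L[ℝ] ℝ}
  {H H₁ H₂ : Euc N × ℝ → Euc N →L[ℝ] Euc N →L[ℝ] ℝ}

namespace HasParabolicDerivs

lemma spaceFDeriv_eq (h : HasParabolicDerivs f τ D H) : spaceFDeriv f = D :=
  funext fun p => (h.hasFDerivAt_space p).fderiv

lemma isC21 (h : HasParabolicDerivs f τ D H) : IsC21 f := by
  have hfderiv : ∀ t : ℝ, (fun y => fderiv ℝ (fun z => f (z, t)) y) = fun y => D (y, t) :=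
    fun t => funext fun y => (h.hasFDerivAt_space (y, t)).fderiv
  refine ⟨h.continuous, fun x t => (h.hasDerivAt_time (x, t)).differentiableAt,
    h.continuous_time.congr fun p => ((h.hasDerivAt_time p).deriv).symm,
    fun t x => (h.hasFDerivAt_space (x, t)).differentiableAt,
    h.continuous_space.congr fun p => ((h.hasFDerivAt_space p).fderiv).symm, fun t x => ?_,
    h.continuous_space₂.congr fun p => ?_⟩
  · rw [hfderiv]
    exact (h.hasFDerivAt_space₂ (x, t)).differentiableAt
  · rw [hfderiv]
    exact ((h.hasFDerivAt_space₂ p).fderiv).symm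

lemma adjHeat_eq (h : HasParabolicDerivs f τ D H) (p) :
    adjHeat f p = τ p + ∑ i, H p (unitVec i) (unitVec i) := by
  unfold adjHeat heatAdj lap
  congr 1
  · exact (h.hasDerivAt_time p).deriv
  · refine Finset.sum_congr rfl fun i _ => ?_
    have hpartial : (fun y => fderiv ℝ (fun z => f (z, p.2)) y (unitVec i)) =
        fun y => D (y, p.2) (unitVec i) := by
      funext y
      rw [(h.hasFDerivAt_space (y, p.2)).fderiv]
    rw [hpartial, ((h.hasFDerivAt_space₂ p).clm_apply (hasFDerivAt_const (unitVec i) p.1)).fderiv]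
    simp

lemma add (h₁ : HasParabolicDerivs f₁ τ₁ D₁ H₁) (h₂ : HasParabolicDerivs f₂ τ₂ D₂ H₂) :
    HasParabolicDerivs (f₁ + f₂) (τ₁ + τ₂) (D₁ + D₂) (H₁ + H₂) where
  continuous := h₁.continuous.add h₂.continuous
  continuous_time := h₁.continuous_time.add h₂.continuous_time
  continuous_space := h₁.continuous_space.add h₂.continuous_space
  continuous_space₂ := h₁.continuous_space₂.add h₂.continuous_space₂
  hasDerivAt_time p := (h₁.hasDerivAt_time p).add (h₂.hasDerivAt_time p)
  hasFDerivAt_space p := (h₁.hasFDerivAt_space p).add (h₂.hasFDerivAt_space p)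
  hasFDerivAt_space₂ p := (h₁.hasFDerivAt_space₂ p).add (h₂.hasFDerivAt_space₂ p)

lemma smul (c : ℝ) (h : HasParabolicDerivs f τ D H) :
    HasParabolicDerivs (c • f) (c • τ) (c • D) (c • H) where
  continuous := h.continuous.const_smul c
  continuous_time := h.continuous_time.const_smul c
  continuous_space := h.continuous_space.const_smul c
  continuous_space₂ := h.continuous_space₂.const_smul c
  hasDerivAt_time p := (h.hasDerivAt_time p).const_smul c
  hasFDerivAt_space p := (h.hasFDerivAt_space p).const_smul c
  hasFDerivAt_space₂ p := (h.hasFDerivAt_space₂ p).const_smul c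

lemma continuous_smulRight (h₁ : Continuous D₁) (h₂ : Continuous D₂) :
    Continuous fun p => (D₁ p).smulRight (D₂ p) :=
  ((ContinuousLinearMap.smulRightL ℝ (Euc N) (Euc N →L[ℝ] ℝ)).continuous.comp h₁).clm_apply h₂

lemma mul (h₁ : HasParabolicDerivs f₁ τ₁ D₁ H₁) (h₂ : HasParabolicDerivs f₂ τ₂ D₂ H₂) :
    HasParabolicDerivs (f₁ * f₂) (fun p => τ₁ p * f₂ p + f₁ p * τ₂ p)
      (fun p => f₁ p • D₂ p + f₂ p • D₁ p)
      (fun p => (f₁ p • H₂ p + (D₁ p).smulRight (D₂ p)) +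
        (f₂ p • H₁ p + (D₂ p).smulRight (D₁ p))) where
  continuous := h₁.continuous.mul h₂.continuous
  continuous_time :=
    (h₁.continuous_time.mul h₂.continuous).add (h₁.continuous.mul h₂.continuous_time)
  continuous_space :=
    (h₁.continuous.smul h₂.continuous_space).add (h₂.continuous.smul h₁.continuous_space)
  continuous_space₂ :=
    ((h₁.continuous.smul h₂.continuous_space₂).add
      (continuous_smulRight h₁.continuous_space h₂.continuous_space)).add
    ((h₂.continuous.smul h₁.continuous_space₂).add
      (continuous_smulRight h₂.continuous_space h₁.continuous_space))
  hasDerivAt_time p := (h₁.hasDerivAt_time p).mul (h₂.hasDerivAt_time p)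
  hasFDerivAt_space p := (h₁.hasFDerivAt_space p).mul (h₂.hasFDerivAt_space p)
  hasFDerivAt_space₂ p :=
    ((h₁.hasFDerivAt_space p).smul (h₂.hasFDerivAt_space₂ p)).add
      ((h₂.hasFDerivAt_space p).smul (h₁.hasFDerivAt_space₂ p))

lemma comp {J J' J'' : ℝ → ℝ} (hJ : ∀ s, HasDerivAt J (J' s) s)
    (hJ' : ∀ s, HasDerivAt J' (J'' s) s) (hc : Continuous J'') (h : HasParabolicDerivs f τ D H) :
    HasParabolicDerivs (fun p => J (f p)) (fun p => J' (f p) * τ p) (fun p => J' (f p) • D p)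
      (fun p => J' (f p) • H p + (J'' (f p) • D p).smulRight (D p)) := by
  have hJc : Continuous J := continuous_iff_continuousAt.2 fun s => (hJ s).continuousAt
  have hJ'c : Continuous J' := continuous_iff_continuousAt.2 fun s => (hJ' s).continuousAt
  have hf := h.continuous
  exact
  { continuous := hJc.comp hf
    continuous_time := (hJ'c.comp hf).mul h.continuous_time
    continuous_space := (hJ'c.comp hf).smul h.continuous_space
    continuous_space₂ := ((hJ'c.comp hf).smul h.continuous_space₂).add
      (continuous_smulRight ((hc.comp hf).smul h.continuous_space) h.continuous_space)
    hasDerivAt_time := fun p => (hJ (f p)).comp p.2 (h.hasDerivAt_time p)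
    hasFDerivAt_space := fun p => (hJ (f p)).comp_hasFDerivAt p.1 (h.hasFDerivAt_space p)
    hasFDerivAt_space₂ := fun p =>
      ((hJ' (f p)).comp_hasFDerivAt p.1 (h.hasFDerivAt_space p)).smul (h.hasFDerivAt_space₂ p) }

lemma translate (h : HasParabolicDerivs f τ D H) (q : Euc N × ℝ) :
    HasParabolicDerivs (fun p => f (q + p)) (fun p => τ (q + p)) (fun p => D (q + p))
      (fun p => H (q + p)) := by
  have hc : Continuous fun p : Euc N × ℝ => q + p := by fun_prop
  exact ⟨h.continuous.comp hc, h.continuous_time.comp hc, h.continuous_space.comp hc,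
    h.continuous_space₂.comp hc,
    fun p => HasDerivAt.comp_const_add (f := fun s => f (q.1 + p.1, s)) q.2 p.2
      (h.hasDerivAt_time (q + p)),
    fun p => (hasFDerivAt_comp_add_left (f := fun s => f (s, q.2 + p.2)) q.1).2
      (h.hasFDerivAt_space (q + p)),
    fun p => (hasFDerivAt_comp_add_left (f := fun s => D (s, q.2 + p.2)) q.1).2
      (h.hasFDerivAt_space₂ (q + p))⟩

lemma support_time_subset (h : HasParabolicDerivs f τ D H) :
    Function.support τ ⊆ tsupport f := fun p hp => by
  by_contra hn
  have hslice : (fun s => f (p.1, s)) =ᶠ[𝓝 p.2] fun _ => 0 :=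
    (notMem_tsupport_iff_eventuallyEq.1 hn).curry_nhds.self_of_nhds
  exact hp (by rw [← (h.hasDerivAt_time p).deriv, hslice.deriv_eq, deriv_const])

lemma support_space_subset (h : HasParabolicDerivs f τ D H) :
    Function.support D ⊆ tsupport f := fun p hp => by
  by_contra hn
  have hslice : (fun y => f (y, p.2)) =ᶠ[𝓝 p.1] fun _ => 0 :=
    (notMem_tsupport_iff_eventuallyEq.1 hn).curry_nhds.mono fun _ h => h.self_of_nhds
  exact hp (by rw [← (h.hasFDerivAt_space p).fderiv, hslice.fderiv_eq, fderiv_fun_const]; rfl)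

lemma support_space₂_subset (h : HasParabolicDerivs f τ D H) :
    Function.support H ⊆ tsupport f := fun p hp => by
  by_contra hn
  have hD : ∀ᶠ q in 𝓝 (p.1, p.2), D q = 0 := by
    filter_upwards [(isClosed_tsupport f).isOpen_compl.mem_nhds hn] with q hq
    by_contra hDq
    exact hq (h.support_space_subset hDq)
  have hslice : (fun y => D (y, p.2)) =ᶠ[𝓝 p.1] fun _ => 0 :=
    hD.curry_nhds.mono fun _ h => h.self_of_nhds
  exact hp (by rw [← (h.hasFDerivAt_space₂ p).fderiv, hslice.fderiv_eq, fderiv_fun_const]; rfl)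

end HasParabolicDerivs

lemma hasParabolicDerivs_space {φ : Euc N → ℝ} (hφ : ContDiff ℝ 2 φ) :
    HasParabolicDerivs (fun p : Euc N × ℝ => φ p.1) (fun _ => 0) (fun p => fderiv ℝ φ p.1)
      (fun p => fderiv ℝ (fderiv ℝ φ) p.1) := by
  have h₁ : ContDiff ℝ 1 (fderiv ℝ φ) := hφ.fderiv_right (m := 1) (by norm_num)
  have h₂ : ContDiff ℝ 0 (fderiv ℝ (fderiv ℝ φ)) := h₁.fderiv_right (m := 0) (by norm_num)
  exact ⟨hφ.continuous.comp continuous_fst, continuous_const,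
    h₁.continuous.comp continuous_fst, h₂.continuous.comp continuous_fst,
    fun p => hasDerivAt_const p.2 (φ p.1),
    fun p => ((hφ.differentiable (by norm_num)) p.1).hasFDerivAt,
    fun p => ((h₁.differentiable (by norm_num)) p.1).hasFDerivAt⟩

lemma hasParabolicDerivs_time {χ χ' : ℝ → ℝ} (hχ : ∀ t, HasDerivAt χ (χ' t) t)
    (hc : Continuous χ') :
    HasParabolicDerivs (fun p : Euc N × ℝ => χ p.2) (fun p => χ' p.2) (fun _ => 0)
      (fun _ => 0) := by
  have hχc : Continuous χ := continuous_iff_continuousAt.2 fun s => (hχ s).continuousAt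
  exact ⟨hχc.comp continuous_snd, hc.comp continuous_snd, continuous_const, continuous_const,
    fun p => hχ p.2, fun p => hasFDerivAt_const (χ p.2) p.1, fun p => hasFDerivAt_const _ p.1⟩

lemma hasParabolicDerivs_of_contDiff (hf : ContDiff ℝ 2 f) :
    HasParabolicDerivs f (fun p => fderiv ℝ f p (0, 1))
      (fun p => (fderiv ℝ f p).comp (ContinuousLinearMap.inl ℝ (Euc N) ℝ))
      (fun p => ((ContinuousLinearMap.compL ℝ (Euc N) (Euc N × ℝ) ℝ).flip
        (ContinuousLinearMap.inl ℝ (Euc N) ℝ)).comp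
          ((fderiv ℝ (fderiv ℝ f) p).comp (ContinuousLinearMap.inl ℝ (Euc N) ℝ))) := by
  have h₁ : ContDiff ℝ 1 (fderiv ℝ f) := hf.fderiv_right (m := 1) (by norm_num)
  have h₂ : ContDiff ℝ 0 (fderiv ℝ (fderiv ℝ f)) := h₁.fderiv_right (m := 0) (by norm_num)
  have hc := h₁.continuous
  have hinl : ∀ p : Euc N × ℝ, HasFDerivAt (fun y : Euc N => (y, p.2))
      (ContinuousLinearMap.inl ℝ (Euc N) ℝ) p.1 := fun p => hasFDerivAt_prodMk_left p.1 p.2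
  have hdf : ∀ p, HasFDerivAt f (fderiv ℝ f p) p := fun p =>
    ((hf.differentiable (by norm_num)) p).hasFDerivAt
  have hddf : ∀ p, HasFDerivAt (fderiv ℝ f) (fderiv ℝ (fderiv ℝ f) p) p := fun p =>
    ((h₁.differentiable (by norm_num)) p).hasFDerivAt
  exact ⟨hf.continuous, by fun_prop, by fun_prop,
    continuous_const.clm_comp (h₂.continuous.clm_comp continuous_const),
    fun p => (hdf p).comp_hasDerivAt p.2 ((hasDerivAt_const p.2 p.1).prodMk (hasDerivAt_id p.2)),
    fun p => (hdf p).comp p.1 (hinl p),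
    fun p => (((ContinuousLinearMap.compL ℝ (Euc N) (Euc N × ℝ) ℝ).flip
        (ContinuousLinearMap.inl ℝ (Euc N) ℝ)).hasFDerivAt).comp p.1
          ((hddf p).comp p.1 (hinl p))⟩

lemma isC21_of_contDiff (hf : ContDiff ℝ 2 f) : IsC21 f :=
  (hasParabolicDerivs_of_contDiff hf).isC21

namespace IsC21

lemma hasParabolicDerivs (h : IsC21 f) :
    ∃ τ H, HasParabolicDerivs f τ (spaceFDeriv f) H := by
  obtain ⟨hf, hτ, hτc, hD, hDc, hH, hHc⟩ := h
  exact ⟨fun p => deriv (fun s => f (p.1, s)) p.2,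
    fun p => fderiv ℝ (fun y => fderiv ℝ (fun z => f (z, p.2)) y) p.1, hf, hτc, hDc, hHc,
    fun p => (hτ p.1 p.2).hasDerivAt, fun p => (hD p.2 p.1).hasFDerivAt,
    fun p => (hH p.2 p.1).hasFDerivAt⟩

lemma continuous (h : IsC21 f) : Continuous f := h.1

lemma continuous_adjHeat (h : IsC21 f) : Continuous (adjHeat f) := by
  obtain ⟨τ, H, h⟩ := h.hasParabolicDerivs
  rw [show adjHeat f = fun p => τ p + ∑ i, H p (unitVec i) (unitVec i) from funext h.adjHeat_eq]
  have := h.continuous_time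
  have := h.continuous_space₂
  fun_prop

lemma add (h₁ : IsC21 f₁) (h₂ : IsC21 f₂) : IsC21 (f₁ + f₂) := by
  obtain ⟨_, _, h₁⟩ := h₁.hasParabolicDerivs
  obtain ⟨_, _, h₂⟩ := h₂.hasParabolicDerivs
  exact (h₁.add h₂).isC21

lemma smul (c : ℝ) (h : IsC21 f) : IsC21 (c • f) := by
  obtain ⟨_, _, h⟩ := h.hasParabolicDerivs
  exact (h.smul c).isC21

lemma mul (h₁ : IsC21 f₁) (h₂ : IsC21 f₂) : IsC21 (f₁ * f₂) := by
  obtain ⟨_, _, h₁⟩ := h₁.hasParabolicDerivs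
  obtain ⟨_, _, h₂⟩ := h₂.hasParabolicDerivs
  exact (h₁.mul h₂).isC21

lemma comp {J J' J'' : ℝ → ℝ} (hJ : ∀ s, HasDerivAt J (J' s) s)
    (hJ' : ∀ s, HasDerivAt J' (J'' s) s) (hc : Continuous J'') (h : IsC21 f) :
    IsC21 (fun p => J (f p)) := by
  obtain ⟨_, _, h⟩ := h.hasParabolicDerivs
  exact (h.comp hJ hJ' hc).isC21

lemma translate (h : IsC21 f) (q : Euc N × ℝ) : IsC21 (fun p => f (q + p)) := by
  obtain ⟨_, _, h⟩ := h.hasParabolicDerivs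
  exact (h.translate q).isC21

end IsC21

lemma adjHeat_add (h₁ : IsC21 f₁) (h₂ : IsC21 f₂) :
    adjHeat (f₁ + f₂) = adjHeat f₁ + adjHeat f₂ := by
  obtain ⟨_, _, h₁⟩ := h₁.hasParabolicDerivs
  obtain ⟨_, _, h₂⟩ := h₂.hasParabolicDerivs
  funext p
  rw [Pi.add_apply, (h₁.add h₂).adjHeat_eq, h₁.adjHeat_eq, h₂.adjHeat_eq]
  simp only [Pi.add_apply, _root_.add_apply, Finset.sum_add_distrib]
  ring

lemma adjHeat_smul (c : ℝ) (h : IsC21 f) : adjHeat (c • f) = c • adjHeat f := by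
  obtain ⟨_, _, h⟩ := h.hasParabolicDerivs
  funext p
  rw [Pi.smul_apply, (h.smul c).adjHeat_eq, h.adjHeat_eq]
  simp [Finset.mul_sum, mul_add]

lemma adjHeat_mul (h₁ : IsC21 f₁) (h₂ : IsC21 f₂) (p) : adjHeat (f₁ * f₂) p =
    f₁ p * adjHeat f₂ p + f₂ p * adjHeat f₁ p +
      2 * ∑ i, spaceFDeriv f₁ p (unitVec i) * spaceFDeriv f₂ p (unitVec i) := by
  obtain ⟨_, _, h₁⟩ := h₁.hasParabolicDerivs
  obtain ⟨_, _, h₂⟩ := h₂.hasParabolicDerivs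
  rw [(h₁.mul h₂).adjHeat_eq, h₁.adjHeat_eq, h₂.adjHeat_eq]
  simp only [_root_.add_apply, _root_.smul_apply, smul_eq_mul,
    ContinuousLinearMap.smulRight_apply, Finset.sum_add_distrib, ← Finset.mul_sum,
    mul_comm (spaceFDeriv f₂ p _)]
  ring

lemma adjHeat_comp {J J' J'' : ℝ → ℝ} (hJ : ∀ s, HasDerivAt J (J' s) s)
    (hJ' : ∀ s, HasDerivAt J' (J'' s) s) (hc : Continuous J'') (h : IsC21 f) (p) :
    adjHeat (fun p => J (f p)) p =
      J' (f p) * adjHeat f p + J'' (f p) * ∑ i, (spaceFDeriv f p (unitVec i)) ^ 2 := by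
  obtain ⟨_, _, h⟩ := h.hasParabolicDerivs
  rw [(h.comp hJ hJ' hc).adjHeat_eq, h.adjHeat_eq]
  simp only [_root_.add_apply, _root_.smul_apply, smul_eq_mul, mul_assoc, ← sq,
    ContinuousLinearMap.smulRight_apply, Finset.sum_add_distrib, ← Finset.mul_sum]
  ring

lemma adjHeat_space {φ : Euc N → ℝ} (hφ : ContDiff ℝ 2 φ) (p : Euc N × ℝ) :
    adjHeat (fun p : Euc N × ℝ => φ p.1) p =
      ∑ i, fderiv ℝ (fderiv ℝ φ) p.1 (unitVec i) (unitVec i) := by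
  rw [(hasParabolicDerivs_space hφ).adjHeat_eq, zero_add]

lemma adjHeat_time {χ χ' : ℝ → ℝ} (hχ : ∀ t, HasDerivAt χ (χ' t) t) (hc : Continuous χ')
    (p : Euc N × ℝ) : adjHeat (fun p : Euc N × ℝ => χ p.2) p = χ' p.2 := by
  rw [(hasParabolicDerivs_time hχ hc).adjHeat_eq]
  simp

lemma spaceFDeriv_time {χ χ' : ℝ → ℝ} (hχ : ∀ t, HasDerivAt χ (χ' t) t) (hc : Continuous χ')
    (p : Euc N × ℝ) : spaceFDeriv (fun p : Euc N × ℝ => χ p.2) p = 0 := by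
  rw [(hasParabolicDerivs_time hχ hc).spaceFDeriv_eq]

lemma adjHeat_translate (h : IsC21 f) (q p : Euc N × ℝ) :
    adjHeat (fun p => f (q + p)) p = adjHeat f (q + p) := by
  obtain ⟨_, _, h⟩ := h.hasParabolicDerivs
  rw [(h.translate q).adjHeat_eq, h.adjHeat_eq]

lemma adjHeat_congr {p : Euc N × ℝ} (h : f₁ =ᶠ[𝓝 p] f₂) : adjHeat f₁ p = adjHeat f₂ p := by
  have hcurry : ∀ᶠ y in 𝓝 p.1, ∀ᶠ s in 𝓝 p.2, f₁ (y, s) = f₂ (y, s) := h.curry_nhds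
  have hspace : ∀ᶠ y in 𝓝 p.1, (fun z => f₁ (z, p.2)) =ᶠ[𝓝 y] fun z => f₂ (z, p.2) :=
    (hcurry.mono fun _ h => h.self_of_nhds).eventually_nhds
  have htime : (fun s => f₁ (p.1, s)) =ᶠ[𝓝 p.2] fun s => f₂ (p.1, s) := hcurry.self_of_nhds
  unfold adjHeat heatAdj lap
  congr 1
  · exact htime.deriv_eq
  · refine Finset.sum_congr rfl fun i _ => ?_
    have hpartial : (fun y => fderiv ℝ (fun z => f₁ (z, p.2)) y (unitVec i)) =ᶠ[𝓝 p.1]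
        fun y => fderiv ℝ (fun z => f₂ (z, p.2)) y (unitVec i) := by
      filter_upwards [hspace] with y hy
      rw [hy.fderiv_eq]
    rw [hpartial.fderiv_eq]

lemma adjHeat_eq_zero_of_notMem_tsupport {p : Euc N × ℝ} (h : p ∉ tsupport f) :
    adjHeat f p = 0 := by
  rw [adjHeat_congr (f₂ := fun _ => (0 : ℝ)) (notMem_tsupport_iff_eventuallyEq.1 h)]
  simp [adjHeat, heatAdj, lap]

lemma support_adjHeat_subset : Function.support (adjHeat f) ⊆ tsupport f := fun _ hp =>
  by_contra fun h => hp (adjHeat_eq_zero_of_notMem_tsupport h)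

lemma hasCompactSupport_adjHeat (h : HasCompactSupport f) : HasCompactSupport (adjHeat f) :=
  h.mono' support_adjHeat_subset

end ParabolicCalculus

section IntegrationByParts

variable {N : ℕ} {f τ : Euc N × ℝ → ℝ} {D : Euc N × ℝ → Euc N →L[ℝ] ℝ}
  {H : Euc N × ℝ → Euc N →L[ℝ] Euc N →L[ℝ] ℝ}

instance : (volume : Measure (Euc N × ℝ)).IsAddHaarMeasure :=
  Measure.prod.instIsAddHaarMeasure volume volume

lemma integral_mul_lineDeriv_eq_neg {F F' η η' : Euc N × ℝ → ℝ} {v : Euc N × ℝ}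
    (hF : Continuous F) (hF' : Continuous F') (hη : Continuous η) (hη' : Continuous η')
    (hsη : HasCompactSupport η) (hsη' : HasCompactSupport η')
    (hFv : ∀ p, HasLineDerivAt ℝ F (F' p) p v) (hηv : ∀ p, HasLineDerivAt ℝ η (η' p) p v) :
    ∫ p, F p * η' p = -∫ p, F' p * η p :=
  integral_bilinear_hasLineDerivAt_right_eq_neg_left_of_integrable (μ := volume)
    (B := ContinuousLinearMap.mul ℝ ℝ)
    ((hF'.mul hη).integrable_of_hasCompactSupport hsη.mul_left)
    ((hF.mul hη').integrable_of_hasCompactSupport hsη'.mul_left)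
    ((hF.mul hη).integrable_of_hasCompactSupport hsη.mul_left)
    (fun p _ => hFv p) (fun p _ => hηv p)

namespace HasParabolicDerivs

lemma hasLineDerivAt_time (h : HasParabolicDerivs f τ D H) (p) :
    HasLineDerivAt ℝ f (τ p) p (0, 1) := by
  have hline : (fun t : ℝ => f (p + t • ((0 : Euc N), (1 : ℝ)))) = fun t => f (p.1, p.2 + t) :=
    funext fun t => congrArg f (Prod.ext (by simp) (by simp))
  rw [HasLineDerivAt, hline]
  exact HasDerivAt.comp_const_add (f := fun s => f (p.1, s)) p.2 0
    (by simpa using h.hasDerivAt_time p)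

lemma hasLineDerivAt_space (h : HasParabolicDerivs f τ D H) (v : Euc N) (p) :
    HasLineDerivAt ℝ f (D p v) p (v, 0) := by
  have hline : (fun t : ℝ => f (p + t • (v, (0 : ℝ)))) = fun t => f (p.1 + t • v, p.2) :=
    funext fun t => congrArg f (Prod.ext (by simp) (by simp))
  rw [HasLineDerivAt, hline]
  exact (h.hasFDerivAt_space p).hasLineDerivAt v

lemma hasLineDerivAt_space₂ (h : HasParabolicDerivs f τ D H) (v : Euc N) (p) :
    HasLineDerivAt ℝ (fun q => D q v) (H p v v) p (v, 0) := by
  have hline : (fun t : ℝ => D (p + t • (v, (0 : ℝ))) v) = fun t => D (p.1 + t • v, p.2) v :=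
    funext fun t => congrArg (fun z => D z v) (Prod.ext (by simp) (by simp))
  have hDv := ((h.hasFDerivAt_space₂ p).clm_apply (hasFDerivAt_const v p.1)).hasLineDerivAt v
  rw [HasLineDerivAt, hline]
  exact HasDerivAt.congr_deriv hDv (by simp)

lemma integral_mul_space₂ {η σ : Euc N × ℝ → ℝ} {A : Euc N × ℝ → Euc N →L[ℝ] ℝ}
    {E : Euc N × ℝ → Euc N →L[ℝ] Euc N →L[ℝ] ℝ} (h : HasParabolicDerivs f τ D H)
    (hη : HasParabolicDerivs η σ A E) (hs : HasCompactSupport η) (v : Euc N) :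
    ∫ p, f p * E p v v = ∫ p, H p v v * η p := by
  have hDv : Continuous fun p => D p v := h.continuous_space.clm_apply continuous_const
  have hHv : Continuous fun p => H p v v :=
    (h.continuous_space₂.clm_apply continuous_const).clm_apply continuous_const
  have hAv : Continuous fun p => A p v := hη.continuous_space.clm_apply continuous_const
  have hEv : Continuous fun p => E p v v :=
    (hη.continuous_space₂.clm_apply continuous_const).clm_apply continuous_const
  have hsA : HasCompactSupport fun p => A p v :=
    (hs.mono' hη.support_space_subset).mono fun p hp h0 => hp (by simp [h0])
  have hsE : HasCompactSupport fun p => E p v v :=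
    (hs.mono' hη.support_space₂_subset).mono fun p hp h0 => hp (by simp [h0])
  rw [integral_mul_lineDeriv_eq_neg h.continuous hDv hAv hEv hsA hsE
      (h.hasLineDerivAt_space v) (hη.hasLineDerivAt_space₂ v),
    integral_mul_lineDeriv_eq_neg hDv hHv hη.continuous hAv hs hsA
      (h.hasLineDerivAt_space₂ v) (hη.hasLineDerivAt_space v), neg_neg]

lemma integral_mul_adjHeat {η : Euc N × ℝ → ℝ} (h : HasParabolicDerivs f τ D H) (hη : IsC21 η)
    (hs : HasCompactSupport η) :
    ∫ p, f p * adjHeat η p = ∫ p, (-τ p + ∑ i, H p (unitVec i) (unitVec i)) * η p := by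
  obtain ⟨σ, E, k⟩ := hη.hasParabolicDerivs
  have hsσ : HasCompactSupport σ := hs.mono' k.support_time_subset
  have hfσ : Integrable fun p => f p * σ p :=
    (h.continuous.mul k.continuous_time).integrable_of_hasCompactSupport hsσ.mul_left
  have hτη : Integrable fun p => -(τ p * η p) :=
    ((h.continuous_time.mul k.continuous).integrable_of_hasCompactSupport hs.mul_left).neg
  have hfE : ∀ i, Integrable fun p => f p * E p (unitVec i) (unitVec i) := fun i =>
    (h.continuous.mul ((k.continuous_space₂.clm_apply continuous_const).clm_apply
      continuous_const)).integrable_of_hasCompactSupport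
      ((hs.mono' k.support_space₂_subset).mono fun p hp h0 => hp (by simp [h0]))
  have hHη : ∀ i, Integrable fun p => H p (unitVec i) (unitVec i) * η p := fun i =>
    (((h.continuous_space₂.clm_apply continuous_const).clm_apply continuous_const).mul
      k.continuous).integrable_of_hasCompactSupport hs.mul_left
  calc ∫ p, f p * adjHeat η p
      = ∫ p, (f p * σ p + ∑ i, f p * E p (unitVec i) (unitVec i)) := by
        simp only [k.adjHeat_eq, mul_add, Finset.mul_sum]
    _ = (-∫ p, τ p * η p) + ∑ i, ∫ p, H p (unitVec i) (unitVec i) * η p := by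
        rw [integral_add hfσ (integrable_finsetSum _ fun i _ => hfE i),
          integral_finsetSum _ fun i _ => hfE i,
          integral_mul_lineDeriv_eq_neg h.continuous h.continuous_time k.continuous
            k.continuous_time hs hsσ h.hasLineDerivAt_time k.hasLineDerivAt_time]
        simp only [h.integral_mul_space₂ k hs]
    _ = ∫ p, (-(τ p * η p) + ∑ i, H p (unitVec i) (unitVec i) * η p) := by
        rw [integral_add hτη (integrable_finsetSum _ fun i _ => hHη i), integral_neg,
          integral_finsetSum _ fun i _ => hHη i]
    _ = ∫ p, (-τ p + ∑ i, H p (unitVec i) (unitVec i)) * η p := by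
        simp only [add_mul, neg_mul, Finset.sum_mul]

end HasParabolicDerivs

end IntegrationByParts

section HeatKernel

variable {N : ℕ}

/-- The Gaussian `(4πt)^(-N/2) exp(-|x|²/4t)`. It is only meaningful for `t > 0`: for `t ≤ 0` the
formula returns junk values. -/
def gaussianKernel (p : Euc N × ℝ) : ℝ :=
  (4 * Real.pi * p.2) ^ (-(N : ℝ) / 2) * Real.exp (-‖p.1‖ ^ 2 / (4 * p.2))

/-- The heat kernel of `ℝ^N`, extended by `0` to `t ≤ 0`; it is the fundamental solution of
`∂_t - Δ`. -/
def heatKernel (p : Euc N × ℝ) : ℝ := if 0 < p.2 then gaussianKernel p else 0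

lemma gaussianKernel_pos {p : Euc N × ℝ} (hp : 0 < p.2) : 0 < gaussianKernel p := by
  unfold gaussianKernel
  positivity

lemma heatKernel_of_nonpos {p : Euc N × ℝ} (hp : p.2 ≤ 0) : heatKernel p = 0 := if_neg hp.not_gt

lemma heatKernel_of_pos {p : Euc N × ℝ} (hp : 0 < p.2) : heatKernel p = gaussianKernel p :=
  if_pos hp

lemma heatKernel_nonneg (p : Euc N × ℝ) : 0 ≤ heatKernel p := by
  unfold heatKernel
  split_ifs with h
  exacts [(gaussianKernel_pos h).le, le_rfl]

lemma measurable_heatKernel : Measurable (heatKernel (N := N)) := by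
  unfold heatKernel gaussianKernel
  exact Measurable.ite (measurableSet_lt measurable_const measurable_snd) (by fun_prop)
    measurable_const

lemma contDiffAt_gaussianKernel {p : Euc N × ℝ} (hp : 0 < p.2) :
    ContDiffAt ℝ 2 (gaussianKernel (N := N)) p := by
  unfold gaussianKernel
  have hbase : ContDiffAt ℝ 2 (fun p : Euc N × ℝ => 4 * Real.pi * p.2) p := by fun_prop
  exact (hbase.rpow_const_of_ne (by positivity)).mul
    ((contDiffAt_fst.norm_sq ℝ).neg.div (by fun_prop) (by positivity)).exp

lemma hasDerivAt_gaussianKernel (x : Euc N) {t : ℝ} (ht : 0 < t) :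
    HasDerivAt (fun s => gaussianKernel (x, s))
      ((-(N : ℝ) / (2 * t) + ‖x‖ ^ 2 / (4 * t ^ 2)) * gaussianKernel (x, t)) t := by
  have hpos : 0 < 4 * Real.pi * t := by positivity
  have hpow : HasDerivAt (fun s : ℝ => (4 * Real.pi * s) ^ (-(N : ℝ) / 2)) _ t :=
    ((hasDerivAt_id t).const_mul (4 * Real.pi)).rpow_const (p := -(N : ℝ) / 2) (Or.inl hpos.ne')
  have hexponent : HasDerivAt (fun s : ℝ => -‖x‖ ^ 2 / (4 * s)) (‖x‖ ^ 2 / (4 * t ^ 2)) t := by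
    refine ((hasDerivAt_const t (-‖x‖ ^ 2)).div ((hasDerivAt_id t).const_mul 4)
      (by simp [ht.ne'])).congr_deriv ?_
    simp only [id, mul_one, zero_mul, zero_sub, neg_mul, neg_neg]
    field_simp
  refine (hpow.mul hexponent.exp).congr_deriv ?_
  simp only [gaussianKernel, id, Real.rpow_sub_one hpos.ne']
  field_simp

lemma hasFDerivAt_gaussianKernel (x : Euc N) {t : ℝ} (ht : 0 < t) :
    HasFDerivAt (fun y => gaussianKernel (y, t))
      ((-gaussianKernel (x, t) / (2 * t)) • innerSL ℝ x) x := by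
  have hexponent : HasFDerivAt (fun y : Euc N => -‖y‖ ^ 2 / (4 * t))
      ((-1 / (2 * t)) • innerSL ℝ x) x := by
    refine (((hasStrictFDerivAt_norm_sq x).hasFDerivAt.const_mul (-1 / (4 * t))).congr_fderiv
      ?_).congr_of_eventuallyEq (Eventually.of_forall fun y => ?_)
    · ext v
      simp
      field_simp
      ring
    · simp only
      ring
  refine (hexponent.exp.const_mul ((4 * Real.pi * t) ^ (-(N : ℝ) / 2))).congr_fderiv ?_
  ext v
  simp [gaussianKernel]
  ring

lemma innerSL_unitVec (x : Euc N) (i : Fin N) : innerSL ℝ x (unitVec i) = x i := by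
  rw [innerSL_apply_apply, EuclideanSpace.inner_single_right]
  simp

lemma hasFDerivAt_neg_gaussianKernel_div (x : Euc N) {t : ℝ} (ht : 0 < t) :
    HasFDerivAt (fun y => -gaussianKernel (y, t) / (2 * t))
      ((gaussianKernel (x, t) / (4 * t ^ 2)) • innerSL ℝ x) x := by
  refine ((hasFDerivAt_gaussianKernel x ht).const_mul (-1 / (2 * t))).congr_fderiv ?_
    |>.congr_of_eventuallyEq (Eventually.of_forall fun z => by ring)
  ext v
  simp
  field_simp
  ring

lemma sum_hessian_gaussianKernel {x : Euc N} {t : ℝ} (ht : 0 < t) {G : Euc N →L[ℝ] Euc N →L[ℝ] ℝ}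
    (hG : HasFDerivAt (fun y => (-gaussianKernel (y, t) / (2 * t)) • innerSL ℝ y) G x) :
    ∑ i, G (unitVec i) (unitVec i) =
      (-(N : ℝ) / (2 * t) + ‖x‖ ^ 2 / (4 * t ^ 2)) * gaussianKernel (x, t) := by
  have hdiag : ∀ i, G (unitVec i) (unitVec i) =
      -gaussianKernel (x, t) / (2 * t) + gaussianKernel (x, t) / (4 * t ^ 2) * x i ^ 2 := by
    intro i
    rw [hG.unique ((hasFDerivAt_neg_gaussianKernel_div x ht).smul
      ((innerSL ℝ (E := Euc N)).hasFDerivAt (x := x)))]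
    change -gaussianKernel (x, t) / (2 * t) * innerSL ℝ (unitVec i) (unitVec i) +
      gaussianKernel (x, t) / (4 * t ^ 2) * innerSL ℝ x (unitVec i) * innerSL ℝ x (unitVec i) = _
    rw [innerSL_unitVec, innerSL_unitVec, PiLp.single_apply, if_pos rfl]
    ring
  rw [Finset.sum_congr rfl fun i _ => hdiag i, Finset.sum_add_distrib, Finset.sum_const,
    ← Finset.mul_sum, ← EuclideanSpace.real_norm_sq_eq, Finset.card_univ, Fintype.card_fin,
    nsmul_eq_mul]
  field_simp

section TimeCutoff

variable {c c' : ℝ → ℝ} {ε : ℝ}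

lemma cutoff_mul_heatKernel_eventuallyEq_zero (h0 : ∀ t ≤ ε, c t = 0) {p : Euc N × ℝ}
    (hp : p.2 < ε) : (fun p : Euc N × ℝ => c p.2 * heatKernel p) =ᶠ[𝓝 p] fun _ => 0 := by
  filter_upwards [(isOpen_lt continuous_snd continuous_const).mem_nhds hp] with q hq
  rw [h0 q.2 (le_of_lt hq), zero_mul]

lemma contDiff_cutoff_mul_heatKernel (hε : 0 < ε) (hc : ContDiff ℝ 2 c)
    (h0 : ∀ t ≤ ε, c t = 0) : ContDiff ℝ 2 (fun p : Euc N × ℝ => c p.2 * heatKernel p) := by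
  refine contDiff_iff_contDiffAt.2 fun p => ?_
  rcases lt_or_ge 0 p.2 with hp | hp
  · refine ((hc.contDiffAt.comp p contDiffAt_snd).mul
      (contDiffAt_gaussianKernel hp)).congr_of_eventuallyEq ?_
    filter_upwards [(isOpen_lt continuous_const continuous_snd).mem_nhds hp] with q hq
    rw [heatKernel_of_pos hq]
    rfl
  · exact contDiffAt_const.congr_of_eventuallyEq
      (cutoff_mul_heatKernel_eventuallyEq_zero h0 (hp.trans_lt hε))

/-- The heat kernel solves the heat equation, so only the time cutoff contributes. -/
lemma HasParabolicDerivs.forwardHeat_cutoff_mul_heatKernel (hε : 0 < ε)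
    (hc : ∀ t, HasDerivAt c (c' t) t) (h0 : ∀ t ≤ ε, c t = 0) {τ : Euc N × ℝ → ℝ}
    {D : Euc N × ℝ → Euc N →L[ℝ] ℝ} {H : Euc N × ℝ → Euc N →L[ℝ] Euc N →L[ℝ] ℝ}
    (h : HasParabolicDerivs (fun p : Euc N × ℝ => c p.2 * heatKernel p) τ D H) (p : Euc N × ℝ) :
    -τ p + ∑ i, H p (unitVec i) (unitVec i) = -(c' p.2 * heatKernel p) := by
  rcases lt_or_ge 0 p.2 with hp | hp
  · obtain ⟨x, t⟩ := p
    replace hp : 0 < t := hp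
    have hτ : τ (x, t) = c' t * gaussianKernel (x, t) +
        c t * ((-(N : ℝ) / (2 * t) + ‖x‖ ^ 2 / (4 * t ^ 2)) * gaussianKernel (x, t)) := by
      refine (h.hasDerivAt_time (x, t)).unique
        (((hc t).mul (hasDerivAt_gaussianKernel x hp)).congr_of_eventuallyEq ?_)
      filter_upwards [lt_mem_nhds hp] with s hs
      simp [heatKernel, hs]
    have hD : ∀ y, D (y, t) = c t • (-gaussianKernel (y, t) / (2 * t)) • innerSL ℝ y := fun y =>
      (h.hasFDerivAt_space (y, t)).unique
        (((hasFDerivAt_gaussianKernel y hp).const_mul (c t)).congr_of_eventuallyEq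
          (Eventually.of_forall fun z => by simp [heatKernel, hp]))
    have hgrad : DifferentiableAt ℝ
        (fun y : Euc N => (-gaussianKernel (y, t) / (2 * t)) • innerSL ℝ y) x :=
      (hasFDerivAt_neg_gaussianKernel_div x hp).differentiableAt.fun_smul
        (innerSL ℝ (E := Euc N)).differentiableAt
    have hH : H (x, t) =
        c t • fderiv ℝ (fun y : Euc N => (-gaussianKernel (y, t) / (2 * t)) • innerSL ℝ y) x := by
      have hx := h.hasFDerivAt_space₂ (x, t)
      simp only [hD] at hx
      exact hx.unique (hgrad.hasFDerivAt.const_smul (c t))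
    simp only [hτ, hH, _root_.smul_apply, smul_eq_mul, ← Finset.mul_sum]
    rw [sum_hessian_gaussianKernel hp hgrad.hasFDerivAt, heatKernel_of_pos (p := (x, t)) hp]
    ring
  · have hp' : p ∉ tsupport fun p : Euc N × ℝ => c p.2 * heatKernel p :=
      notMem_tsupport_iff_eventuallyEq.2
        (cutoff_mul_heatKernel_eventuallyEq_zero h0 (hp.trans_lt hε))
    have hτ : τ p = 0 := by_contra fun h' => hp' (h.support_time_subset h')
    have hH : H p = 0 := by_contra fun h' => hp' (h.support_space₂_subset h')
    simp [hτ, hH, heatKernel_of_nonpos hp]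

end TimeCutoff

end HeatKernel

section GaussianBounds

/-- The weight `(t₊)²`. It is a `C¹` function of time which vanishes for `t ≤ 0`, hence absorbs the
errors that the heat kernel makes away from its singularity. -/
def posSq (t : ℝ) : ℝ := (max t 0) ^ 2

lemma posSq_nonneg (t : ℝ) : 0 ≤ posSq t := sq_nonneg _

lemma posSq_mono {s t : ℝ} (h : s ≤ t) : posSq s ≤ posSq t := by
  unfold posSq
  gcongr

lemma posSq_of_nonneg {t : ℝ} (h : 0 ≤ t) : posSq t = t ^ 2 := by rw [posSq, max_eq_left h]

lemma posSq_of_nonpos {t : ℝ} (h : t ≤ 0) : posSq t = 0 := by simp [posSq, h]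

lemma continuous_posSq : Continuous posSq := by
  unfold posSq
  fun_prop

lemma hasDerivAt_posSq (t : ℝ) : HasDerivAt posSq (2 * max t 0) t := by
  rcases lt_trichotomy t 0 with h | rfl | h
  · have heq : posSq =ᶠ[𝓝 t] fun _ => 0 := by
      filter_upwards [gt_mem_nhds h] with s hs using posSq_of_nonpos (le_of_lt hs)
    rw [max_eq_right h.le, mul_zero]
    exact (hasDerivAt_const t (0 : ℝ)).congr_of_eventuallyEq heq
  · have hO : posSq =O[𝓝 0] fun x : ℝ => ‖x - 0‖ ^ 2 := by
      refine Asymptotics.IsBigO.of_bound 1 (Eventually.of_forall fun x => ?_)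
      rw [sub_zero, one_mul, norm_pow, norm_norm, posSq, norm_pow]
      gcongr
      rw [Real.norm_eq_abs, Real.norm_eq_abs, abs_of_nonneg (le_max_right _ _)]
      exact max_le (le_abs_self x) (abs_nonneg x)
    simpa using (hO.hasFDerivAt (𝕜 := ℝ) (by norm_num)).hasDerivAt
  · have heq : posSq =ᶠ[𝓝 t] fun s => s ^ 2 := by
      filter_upwards [lt_mem_nhds h] with s hs using posSq_of_nonneg (le_of_lt hs)
    have hsq : HasDerivAt (fun s : ℝ => s ^ 2) (2 * t) t := by simpa using hasDerivAt_pow 2 t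
    rw [max_eq_left h.le]
    exact hsq.congr_of_eventuallyEq heq

/-- The slab `{(x, t) | t < b}`. -/
def timeBelow (N : ℕ) (b : ℝ) : Set (Euc N × ℝ) := {p | p.2 < b}

lemma measurableSet_timeBelow (N : ℕ) (b : ℝ) : MeasurableSet (timeBelow N b) :=
  measurableSet_lt measurable_snd measurable_const

variable {N : ℕ}

lemma integral_gaussianKernel {t : ℝ} (ht : 0 < t) : ∫ x : Euc N, gaussianKernel (x, t) = 1 := by
  have hexp : ∀ x : Euc N, Real.exp (-‖x‖ ^ 2 / (4 * t)) =
      Real.exp (-(1 / (4 * t)) * ‖x‖ ^ 2) := fun x => by ring_nf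
  have hgauss := GaussianFourier.integral_rexp_neg_mul_sq_norm (V := Euc N)
    (show 0 < 1 / (4 * t) by positivity)
  rw [finrank_euclideanSpace, Fintype.card_fin,
    show Real.pi / (1 / (4 * t)) = 4 * Real.pi * t by field_simp] at hgauss
  simp only [gaussianKernel, integral_const_mul, hexp]
  rw [hgauss, ← Real.rpow_add (by positivity)]
  simp [neg_div]

lemma integrable_heatKernel_slice {t : ℝ} (ht : 0 < t) :
    Integrable fun x : Euc N => heatKernel (x, t) := by
  simp only [heatKernel_of_pos (p := (_, t)) ht]
  exact Integrable.of_integral_ne_zero (by rw [integral_gaussianKernel ht]; exact one_ne_zero)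

lemma integral_heatKernel_slice {t : ℝ} (ht : 0 < t) : ∫ x : Euc N, heatKernel (x, t) = 1 := by
  simp only [heatKernel_of_pos (p := (_, t)) ht]
  exact integral_gaussianKernel ht

lemma lintegral_heatKernel_slice (t : ℝ) :
    ∫⁻ x : Euc N, ENNReal.ofReal (heatKernel (x, t)) = if 0 < t then 1 else 0 := by
  split_ifs with ht
  · rw [← ofReal_integral_eq_lintegral_ofReal (integrable_heatKernel_slice ht)
      (Eventually.of_forall fun x => heatKernel_nonneg _), integral_heatKernel_slice ht,
      ENNReal.ofReal_one]
  · simp [heatKernel_of_nonpos (p := (_, t)) (not_lt.1 ht)]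

lemma setLIntegral_heatKernel_timeBelow (b : ℝ) (r : Euc N × ℝ) :
    ∫⁻ p in timeBelow N b, ENNReal.ofReal (heatKernel (p - r)) = ENNReal.ofReal (b - r.2) := by
  have hs := measurableSet_timeBelow N b
  have hm : Measurable fun p : Euc N × ℝ => ENNReal.ofReal (heatKernel (p - r)) :=
    (measurable_heatKernel.comp (measurable_id.sub_const r)).ennreal_ofReal
  have hslice : ∀ t : ℝ, ∫⁻ x : Euc N, ((timeBelow N b).indicator
      fun p => ENNReal.ofReal (heatKernel (p - r))) (x, t) = (Ioo r.2 b).indicator 1 t := by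
    intro t
    by_cases htb : t < b
    · have hshift : ∀ x : Euc N, ((timeBelow N b).indicator
          fun p => ENNReal.ofReal (heatKernel (p - r))) (x, t) =
            ENNReal.ofReal (heatKernel (x - r.1, t - r.2)) := fun x =>
        indicator_of_mem (show (x, t) ∈ timeBelow N b from htb) _
      simp only [hshift]
      rw [lintegral_sub_right_eq_self (fun x => ENNReal.ofReal (heatKernel (x, t - r.2))) r.1,
        lintegral_heatKernel_slice]
      simp [indicator, htb]
    · simp [indicator, timeBelow, htb]
  rw [← lintegral_indicator hs, Measure.volume_eq_prod,
    lintegral_prod_symm _ ((hm.indicator hs).aemeasurable), lintegral_congr hslice,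
    lintegral_indicator_one measurableSet_Ioo, Real.volume_Ioo]

lemma integrableOn_heatKernel_timeBelow (b : ℝ) (r : Euc N × ℝ) :
    IntegrableOn (fun p => heatKernel (p - r)) (timeBelow N b) := by
  refine ⟨(measurable_heatKernel.comp (measurable_id.sub_const r)).aestronglyMeasurable, ?_⟩
  rw [hasFiniteIntegral_iff_ofReal (Eventually.of_forall fun p => heatKernel_nonneg _),
    setLIntegral_heatKernel_timeBelow]
  exact ENNReal.ofReal_lt_top

lemma integrable_heatKernel_mul {h : Euc N × ℝ → ℝ} (hm : AEStronglyMeasurable h) {C b : ℝ}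
    (hC : ∀ p, |h p| ≤ C) (hb : ∀ p : Euc N × ℝ, b ≤ p.2 → h p = 0) (r : Euc N × ℝ) :
    Integrable fun p => heatKernel (p - r) * h p := by
  refine (((integrableOn_heatKernel_timeBelow b r).integrable_indicator
    (measurableSet_timeBelow N b)).mul_bdd (c := C) hm (Eventually.of_forall hC)).congr
    (Eventually.of_forall fun p => ?_)
  by_cases hp : p.2 < b
  · simp [indicator, timeBelow, hp]
  · simp [indicator, timeBelow, hp, hb p (not_lt.1 hp)]

lemma exists_bound_of_hasCompactSupport {h : Euc N × ℝ → ℝ} (hc : Continuous h)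
    (hs : HasCompactSupport h) :
    ∃ C b, 0 ≤ C ∧ (∀ p, |h p| ≤ C) ∧ ∀ p : Euc N × ℝ, b ≤ p.2 → h p = 0 := by
  obtain ⟨C, hC⟩ := hc.bounded_above_of_compact_support hs
  obtain ⟨R, hR⟩ := hs.isCompact.isBounded.subset_closedBall (0 : Euc N × ℝ)
  refine ⟨C, R + 1, (norm_nonneg _).trans (hC 0), hC, fun p hp => ?_⟩
  by_contra h0
  have hpR : ‖p‖ ≤ R := mem_closedBall_zero_iff.1 (hR (subset_tsupport h h0))
  have hp2 : |p.2| ≤ ‖p‖ := norm_snd_le p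
  linarith [le_abs_self p.2]

lemma integrable_heatKernel_mul_of_hasCompactSupport {h : Euc N × ℝ → ℝ} (hc : Continuous h)
    (hs : HasCompactSupport h) (r : Euc N × ℝ) :
    Integrable fun p => heatKernel (p - r) * h p := by
  obtain ⟨C, b, _, hC, hb⟩ := exists_bound_of_hasCompactSupport hc hs
  exact integrable_heatKernel_mul hc.aestronglyMeasurable hC hb r

lemma heatKernel_le {ε : ℝ} (hε : 0 < ε) (p : Euc N × ℝ) (hp : ε ≤ p.2) :
    heatKernel p ≤ (4 * Real.pi * ε) ^ (-(N : ℝ) / 2) := by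
  have hp0 : 0 < p.2 := hε.trans_le hp
  rw [heatKernel_of_pos hp0, ← mul_one ((4 * Real.pi * ε) ^ (-(N : ℝ) / 2)), gaussianKernel]
  gcongr ?_ * ?_
  · exact Real.rpow_le_rpow_of_nonpos (by positivity) (by gcongr)
      (div_nonpos_of_nonpos_of_nonneg (by simp) (by norm_num))
  · exact Real.exp_le_one_iff.2 (div_nonpos_of_nonpos_of_nonneg (by simp) (by positivity))

lemma exp_neg_div_le_pow_div (m : ℕ) {a t : ℝ} (ha : 0 < a) (ht : 0 < t) :
    Real.exp (-a / (4 * t)) ≤ m.factorial * 4 ^ m * t ^ m / a ^ m := by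
  rw [neg_div, Real.exp_neg]
  calc (Real.exp (a / (4 * t)))⁻¹
      ≤ ((a / (4 * t)) ^ m / m.factorial)⁻¹ :=
        inv_anti₀ (by positivity) (Real.pow_div_factorial_le_exp _ (by positivity) m)
    _ = m.factorial * 4 ^ m * t ^ m / a ^ m := by
        rw [div_pow, mul_pow]
        field_simp

lemma exists_gaussianKernel_le_pow_div (N k : ℕ) (T : ℝ) (hT : 0 < T) :
    ∃ K, 0 ≤ K ∧ ∀ p : Euc N × ℝ, p.1 ≠ 0 → 0 < p.2 → p.2 ≤ T →
      gaussianKernel p ≤ K * p.2 ^ k / ‖p.1‖ ^ (2 * (N + k)) := by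
  refine ⟨(4 * Real.pi * T) ^ ((N : ℝ) / 2) * ((N + k).factorial * 4 ^ (N + k)), by positivity,
    fun p hx ht hpT => ?_⟩
  have hx0 : 0 < ‖p.1‖ := norm_pos_iff.2 hx
  have hs0 : 0 < 4 * Real.pi * p.2 := by positivity
  have hts : p.2 ≤ 4 * Real.pi * p.2 := le_mul_of_one_le_left ht.le (by linarith [Real.pi_gt_three])
  have hexp := exp_neg_div_le_pow_div (N + k) (pow_pos hx0 2) ht
  rw [← pow_mul] at hexp
  have hpow : (4 * Real.pi * p.2) ^ (-(N : ℝ) / 2) * p.2 ^ N ≤ (4 * Real.pi * T) ^ ((N : ℝ) / 2) :=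
    calc (4 * Real.pi * p.2) ^ (-(N : ℝ) / 2) * p.2 ^ N
        ≤ (4 * Real.pi * p.2) ^ (-(N : ℝ) / 2) * (4 * Real.pi * p.2) ^ N := by gcongr
      _ = (4 * Real.pi * p.2) ^ ((N : ℝ) / 2) := by
          rw [← Real.rpow_natCast _ N, ← Real.rpow_add hs0]
          ring_nf
      _ ≤ (4 * Real.pi * T) ^ ((N : ℝ) / 2) := by gcongr
  calc gaussianKernel p
      ≤ (4 * Real.pi * p.2) ^ (-(N : ℝ) / 2) *
          ((N + k).factorial * 4 ^ (N + k) * p.2 ^ (N + k) / ‖p.1‖ ^ (2 * (N + k))) := by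
        unfold gaussianKernel
        gcongr
    _ = (4 * Real.pi * p.2) ^ (-(N : ℝ) / 2) * p.2 ^ N *
          ((N + k).factorial * 4 ^ (N + k) * p.2 ^ k / ‖p.1‖ ^ (2 * (N + k))) := by ring
    _ ≤ (4 * Real.pi * T) ^ ((N : ℝ) / 2) *
          ((N + k).factorial * 4 ^ (N + k) * p.2 ^ k / ‖p.1‖ ^ (2 * (N + k))) := by gcongr
    _ = _ := by ring

lemma exists_heatKernel_le_posSq (N : ℕ) {δ T : ℝ} (hδ : 0 < δ) (hT : 0 < T) :
    ∃ C, 0 ≤ C ∧ ∀ p : Euc N × ℝ, δ ≤ ‖p.1‖ → p.2 ≤ T → heatKernel p ≤ C * posSq p.2 := by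
  obtain ⟨K, hK0, hK⟩ := exists_gaussianKernel_le_pow_div N 2 T hT
  refine ⟨K / δ ^ (2 * (N + 2)), by positivity, fun p hx hpT => ?_⟩
  rcases le_or_gt p.2 0 with ht | ht
  · rw [heatKernel_of_nonpos ht, posSq_of_nonpos ht, mul_zero]
  · rw [heatKernel_of_pos ht, posSq_of_nonneg ht.le]
    calc gaussianKernel p ≤ K * p.2 ^ 2 / ‖p.1‖ ^ (2 * (N + 2)) :=
          hK p (norm_pos_iff.1 (hδ.trans_le hx)) ht hpT
      _ ≤ K * p.2 ^ 2 / δ ^ (2 * (N + 2)) := by gcongr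
      _ = K / δ ^ (2 * (N + 2)) * p.2 ^ 2 := by ring

lemma exists_norm_fderiv_heatKernel_le_posSq (N : ℕ) {δ T : ℝ} (hδ : 0 < δ) (hT : 0 < T) :
    ∃ C, 0 ≤ C ∧ ∀ p : Euc N × ℝ, δ ≤ ‖p.1‖ → p.2 ≤ T →
      ‖fderiv ℝ (fun y => heatKernel (y, p.2)) p.1‖ ≤ C * posSq p.2 := by
  obtain ⟨K, hK0, hK⟩ := exists_gaussianKernel_le_pow_div N 3 T hT
  refine ⟨K / δ ^ (2 * N + 5), by positivity, fun p hx hpT => ?_⟩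
  rcases le_or_gt p.2 0 with ht | ht
  · have hzero : (fun y : Euc N => heatKernel (y, p.2)) = fun _ => 0 :=
      funext fun y => heatKernel_of_nonpos ht
    simp [hzero, posSq_of_nonpos ht]
  · have hx0 : 0 < ‖p.1‖ := hδ.trans_le hx
    have hpos : (fun y : Euc N => heatKernel (y, p.2)) = fun y => gaussianKernel (y, p.2) :=
      funext fun y => heatKernel_of_pos ht
    rw [hpos, (hasFDerivAt_gaussianKernel p.1 ht).fderiv, posSq_of_nonneg ht.le, norm_smul,
      innerSL_apply_norm, norm_div, norm_neg, Real.norm_of_nonneg (gaussianKernel_pos ht).le,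
      Real.norm_of_nonneg (by positivity)]
    calc gaussianKernel p / (2 * p.2) * ‖p.1‖
        ≤ K * p.2 ^ 3 / ‖p.1‖ ^ (2 * (N + 3)) / (2 * p.2) * ‖p.1‖ := by
          gcongr
          exact hK p (norm_pos_iff.1 hx0) ht hpT
      _ = K * p.2 ^ 2 / ‖p.1‖ ^ (2 * N + 5) / 2 := by
          rw [show 2 * (N + 3) = 2 * N + 5 + 1 by ring]
          field_simp
          ring
      _ ≤ K * p.2 ^ 2 / ‖p.1‖ ^ (2 * N + 5) := half_le_self (by positivity)
      _ ≤ K * p.2 ^ 2 / δ ^ (2 * N + 5) := by gcongr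
      _ = K / δ ^ (2 * N + 5) * p.2 ^ 2 := by ring

end GaussianBounds

section RepresentationFormula

variable {N : ℕ} {η : Euc N × ℝ → ℝ}

lemma heatKernel_sqrt_smul (z : Euc N) {t : ℝ} (ht : 0 < t) :
    Real.sqrt t ^ N * heatKernel (Real.sqrt t • z, t) = heatKernel (z, 1) := by
  have hexp : -‖Real.sqrt t • z‖ ^ 2 / (4 * t) = -‖z‖ ^ 2 / (4 * 1) := by
    rw [norm_smul, mul_pow, Real.norm_of_nonneg (Real.sqrt_nonneg t), Real.sq_sqrt ht.le]
    field_simp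
  rw [heatKernel_of_pos (p := (Real.sqrt t • z, t)) ht, heatKernel_of_pos (p := (z, 1)) one_pos]
  simp only [gaussianKernel]
  rw [hexp, ← mul_assoc]
  congr 1
  rw [mul_one, Real.mul_rpow (by positivity) ht.le, Real.sqrt_eq_rpow,
    ← Real.rpow_natCast (t ^ (1 / 2 : ℝ)), ← Real.rpow_mul ht.le,
    mul_comm (_ ^ _) (t ^ (-(N : ℝ) / 2)), ← mul_assoc, ← Real.rpow_add ht,
    show (1 : ℝ) / 2 * N + -(N : ℝ) / 2 = 0 by ring, Real.rpow_zero, one_mul]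

/-- The Gaussian mean of the time slice `η (·, t)` at the origin, on the scale `√t`; it vanishes
for `t ≤ 0`. -/
def gaussianMean (η : Euc N × ℝ → ℝ) (t : ℝ) : ℝ := ∫ x, heatKernel (x, t) * η (x, t)

lemma gaussianMean_eq_integral_rescaled (η : Euc N × ℝ → ℝ) {t : ℝ} (ht : 0 < t) :
    gaussianMean η t = ∫ z : Euc N, heatKernel (z, 1) * η (Real.sqrt t • z, t) := by
  have hpow : 0 < Real.sqrt t ^ N := pow_pos (Real.sqrt_pos.2 ht) N
  have h := Measure.integral_comp_smul (volume : Measure (Euc N))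
    (fun x => heatKernel (x, t) * η (x, t)) (Real.sqrt t)
  rw [finrank_euclideanSpace, Fintype.card_fin, abs_of_pos (inv_pos.2 hpow), smul_eq_mul] at h
  simp only [← heatKernel_sqrt_smul _ ht, mul_assoc]
  rw [integral_const_mul, h, ← mul_assoc, mul_inv_cancel₀ hpow.ne', one_mul, gaussianMean]

lemma tendsto_gaussianMean (hc : Continuous η) {C : ℝ} (hC : ∀ p, |η p| ≤ C) :
    Tendsto (gaussianMean η) (𝓝[>] 0) (𝓝 (η 0)) := by
  have hone := integrable_heatKernel_slice (N := N) one_pos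
  have hη0 : η 0 = ∫ z : Euc N, heatKernel (z, 1) * η 0 := by
    rw [integral_mul_const, integral_heatKernel_slice one_pos, one_mul]
  rw [hη0]
  refine Tendsto.congr' (eventually_mem_nhdsWithin.mono fun t ht =>
    (gaussianMean_eq_integral_rescaled η ht).symm) ?_
  refine tendsto_integral_filter_of_dominated_convergence (fun z : Euc N => heatKernel (z, 1) * C)
    (Eventually.of_forall fun t => hone.aestronglyMeasurable.mul
      (Continuous.aestronglyMeasurable (by fun_prop)))
    (Eventually.of_forall fun t => Eventually.of_forall fun z => ?_) (hone.mul_const C)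
    (Eventually.of_forall fun z => ?_)
  · rw [norm_mul, Real.norm_of_nonneg (heatKernel_nonneg _)]
    exact mul_le_mul_of_nonneg_left (hC _) (heatKernel_nonneg _)
  · have hcont : Continuous fun t : ℝ => heatKernel (z, 1) * η (Real.sqrt t • z, t) := by fun_prop
    have hlim := (hcont.tendsto 0).mono_left (nhdsWithin_le_nhds (s := Ioi 0))
    rwa [Real.sqrt_zero, zero_smul] at hlim

lemma abs_gaussianMean_le {C : ℝ} (hC : ∀ p, |η p| ≤ C) (t : ℝ) : |gaussianMean η t| ≤ C := by
  rcases lt_or_ge 0 t with ht | ht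
  · calc |gaussianMean η t| ≤ ∫ x : Euc N, heatKernel (x, t) * C := by
          rw [← Real.norm_eq_abs]
          refine norm_integral_le_of_norm_le ((integrable_heatKernel_slice ht).mul_const C)
            (Eventually.of_forall fun x => ?_)
          rw [norm_mul, Real.norm_of_nonneg (heatKernel_nonneg _)]
          exact mul_le_mul_of_nonneg_left (hC _) (heatKernel_nonneg _)
      _ = C := by rw [integral_mul_const, integral_heatKernel_slice ht, one_mul]
  · have hzero : gaussianMean η t = 0 := by
      simp [gaussianMean, heatKernel_of_nonpos (p := (_, t)) ht]
    rw [hzero, abs_zero]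
    exact (abs_nonneg _).trans (hC 0)

lemma stronglyMeasurable_gaussianMean (hc : Continuous η) : StronglyMeasurable (gaussianMean η) :=
  StronglyMeasurable.integral_prod_left' (f := fun p : Euc N × ℝ => heatKernel p * η p)
    (measurable_heatKernel.mul hc.measurable).stronglyMeasurable

/-- A smooth monotone step from `0` on `(-∞, 1]` to `1` on `[2, ∞)`. -/
def smoothStep (s : ℝ) : ℝ := Real.smoothTransition (s - 1)

lemma contDiff_smoothStep : ContDiff ℝ 2 smoothStep :=
  Real.smoothTransition.contDiff.comp (contDiff_id.sub contDiff_const)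

lemma hasDerivAt_smoothStep (s : ℝ) : HasDerivAt smoothStep (deriv smoothStep s) s :=
  (contDiff_smoothStep.differentiable (by norm_num) s).hasDerivAt

lemma continuous_deriv_smoothStep : Continuous (deriv smoothStep) :=
  contDiff_smoothStep.continuous_deriv (by norm_num)

lemma smoothStep_of_le_one {s : ℝ} (hs : s ≤ 1) : smoothStep s = 0 :=
  Real.smoothTransition.zero_of_nonpos (by linarith)

lemma smoothStep_of_two_le {s : ℝ} (hs : 2 ≤ s) : smoothStep s = 1 :=
  Real.smoothTransition.one_of_one_le (by linarith)

lemma norm_smoothStep_le_one (s : ℝ) : ‖smoothStep s‖ ≤ 1 := by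
  rw [smoothStep, Real.norm_of_nonneg (Real.smoothTransition.nonneg _)]
  exact Real.smoothTransition.le_one _

lemma deriv_smoothStep_of_lt_one {s : ℝ} (hs : s < 1) : deriv smoothStep s = 0 := by
  have heq : smoothStep =ᶠ[𝓝 s] fun _ => 0 :=
    (gt_mem_nhds hs).mono fun r hr => smoothStep_of_le_one (le_of_lt hr)
  rw [heq.deriv_eq, deriv_const]

lemma deriv_smoothStep_of_two_lt {s : ℝ} (hs : 2 < s) : deriv smoothStep s = 0 := by
  have heq : smoothStep =ᶠ[𝓝 s] fun _ => 1 :=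
    (lt_mem_nhds hs).mono fun r hr => smoothStep_of_two_le (le_of_lt hr)
  rw [heq.deriv_eq, deriv_const]

lemma integrable_deriv_smoothStep : Integrable (deriv smoothStep) := by
  refine continuous_deriv_smoothStep.integrable_of_hasCompactSupport
    (HasCompactSupport.intro (isCompact_Icc (a := 1) (b := 2)) fun s hs => ?_)
  rw [mem_Icc, not_and_or, not_le, not_le] at hs
  exact hs.elim deriv_smoothStep_of_lt_one deriv_smoothStep_of_two_lt

lemma integral_deriv_smoothStep : ∫ s, deriv smoothStep s = 1 := by
  rw [integral_of_hasDerivAt_of_tendsto (m := 0) (n := 1) hasDerivAt_smoothStep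
    integrable_deriv_smoothStep, sub_zero]
  · exact tendsto_const_nhds.congr'
      ((eventually_le_atBot 1).mono fun s hs => (smoothStep_of_le_one hs).symm)
  · exact tendsto_const_nhds.congr'
      ((eventually_ge_atTop 2).mono fun s hs => (smoothStep_of_two_le hs).symm)

lemma integral_deriv_smoothStep_mul_heatKernel (hη : IsC21 η) (hs : HasCompactSupport η) {ε : ℝ}
    (hε : 0 < ε) :
    ∫ p : Euc N × ℝ, deriv smoothStep (p.2 / ε) / ε * (heatKernel p * η p) =
      ∫ s, deriv smoothStep s * gaussianMean η (ε * s) := by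
  have hint : Integrable fun p : Euc N × ℝ =>
      deriv smoothStep (p.2 / ε) / ε * (heatKernel p * η p) := by
    have hcont : Continuous fun p : Euc N × ℝ => deriv smoothStep (p.2 / ε) / ε * η p := by
      have := hη.continuous
      have := continuous_deriv_smoothStep
      fun_prop
    refine (integrable_heatKernel_mul_of_hasCompactSupport hcont hs.mul_left 0).congr
      (Eventually.of_forall fun p => ?_)
    simp only [sub_zero]
    ring
  rw [Measure.volume_eq_prod, integral_prod_symm _ hint]
  have hscale := Measure.integral_comp_mul_left
    (fun t => deriv smoothStep (t / ε) / ε * gaussianMean η t) ε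
  rw [abs_of_pos (by positivity), smul_eq_mul] at hscale
  calc ∫ t, ∫ x : Euc N, deriv smoothStep (t / ε) / ε * (heatKernel (x, t) * η (x, t))
      = ∫ t, deriv smoothStep (t / ε) / ε * gaussianMean η t := by
        simp only [integral_const_mul, gaussianMean]
    _ = ε * ∫ s, deriv smoothStep (ε * s / ε) / ε * gaussianMean η (ε * s) := by
        rw [hscale, ← mul_assoc, mul_inv_cancel₀ hε.ne', one_mul]
    _ = ∫ s, deriv smoothStep s * gaussianMean η (ε * s) := by
        rw [← integral_const_mul]
        congr 1 with s
        rw [mul_div_cancel_left₀ _ hε.ne']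
        field_simp

lemma integral_smoothStep_mul_heatKernel_mul_adjHeat (hη : IsC21 η) (hs : HasCompactSupport η)
    {ε : ℝ} (hε : 0 < ε) :
    ∫ p : Euc N × ℝ, smoothStep (p.2 / ε) * (heatKernel p * adjHeat η p) =
      -∫ s, deriv smoothStep s * gaussianMean η (ε * s) := by
  have hder (t : ℝ) :
      HasDerivAt (fun t => smoothStep (t / ε)) (deriv smoothStep (t / ε) / ε) t := by
    have h := (hasDerivAt_smoothStep (t / ε)).comp t ((hasDerivAt_id' t).div_const ε)
    rwa [mul_one_div] at h
  have hzero (t : ℝ) (ht : t ≤ ε) : smoothStep (t / ε) = 0 :=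
    smoothStep_of_le_one ((div_le_one hε).2 ht)
  obtain ⟨τ, H, h⟩ := (isC21_of_contDiff (contDiff_cutoff_mul_heatKernel (N := N) hε
    (contDiff_smoothStep.comp (contDiff_id.div_const ε)) hzero)).hasParabolicDerivs
  have hparts := h.integral_mul_adjHeat hη hs
  simp only [h.forwardHeat_cutoff_mul_heatKernel hε hder hzero, Function.comp_apply, id_eq,
    mul_assoc, neg_mul, integral_neg] at hparts
  rw [hparts, integral_deriv_smoothStep_mul_heatKernel hη hs hε]

lemma tendsto_integral_smoothStep_mul {f : Euc N × ℝ → ℝ} (hf : Integrable f)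
    (hf0 : ∀ p : Euc N × ℝ, p.2 ≤ 0 → f p = 0) :
    Tendsto (fun ε => ∫ p : Euc N × ℝ, smoothStep (p.2 / ε) * f p) (𝓝[>] 0) (𝓝 (∫ p, f p)) := by
  refine tendsto_integral_filter_of_dominated_convergence (fun p => ‖f p‖)
    (Eventually.of_forall fun ε => ?_)
    (Eventually.of_forall fun ε => Eventually.of_forall fun p => ?_) hf.norm
    (Eventually.of_forall fun p => ?_)
  · have := contDiff_smoothStep.continuous
    exact (Continuous.aestronglyMeasurable (by fun_prop)).mul hf.aestronglyMeasurable
  · rw [norm_mul]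
    exact mul_le_of_le_one_left (norm_nonneg _) (norm_smoothStep_le_one _)
  · rcases lt_or_ge 0 p.2 with hp | hp
    · refine tendsto_const_nhds.congr' ?_
      filter_upwards [Ioo_mem_nhdsGT (show 0 < p.2 / 2 by positivity)] with ε hε
      rw [smoothStep_of_two_le ((le_div_iff₀ hε.1).2 (by linarith [hε.2])), one_mul]
    · simp [hf0 p hp]

lemma tendsto_integral_deriv_smoothStep_mul_gaussianMean (hc : Continuous η) {C : ℝ}
    (hC : ∀ p, |η p| ≤ C) :
    Tendsto (fun ε => ∫ s, deriv smoothStep s * gaussianMean η (ε * s)) (𝓝[>] 0) (𝓝 (η 0)) := by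
  have hη0 : η 0 = ∫ s, deriv smoothStep s * η 0 := by
    rw [integral_mul_const, integral_deriv_smoothStep, one_mul]
  rw [hη0]
  refine tendsto_integral_filter_of_dominated_convergence (fun s => ‖deriv smoothStep s‖ * C)
    (Eventually.of_forall fun ε => continuous_deriv_smoothStep.aestronglyMeasurable.mul
      ((stronglyMeasurable_gaussianMean hc).comp_measurable
        (measurable_const_mul ε)).aestronglyMeasurable)
    (Eventually.of_forall fun ε => Eventually.of_forall fun s => ?_)
    (integrable_deriv_smoothStep.norm.mul_const C) (Eventually.of_forall fun s => ?_)
  · rw [norm_mul]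
    exact mul_le_mul_of_nonneg_left (abs_gaussianMean_le hC _) (norm_nonneg _)
  · rcases lt_or_ge s 1 with hs | hs
    · simp [deriv_smoothStep_of_lt_one hs]
    · refine ((tendsto_gaussianMean hc hC).comp ?_).const_mul _
      refine tendsto_nhdsWithin_iff.2 ⟨?_, eventually_mem_nhdsWithin.mono fun ε hε =>
        mul_pos hε (one_pos.trans_le hs)⟩
      exact ((continuous_mul_const s).tendsto' 0 0 (zero_mul s)).mono_left nhdsWithin_le_nhds

lemma integral_heatKernel_mul_adjHeat_zero (hη : IsC21 η) (hs : HasCompactSupport η) :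
    ∫ r, heatKernel r * adjHeat η r = -η 0 := by
  obtain ⟨C, -, -, hC, -⟩ := exists_bound_of_hasCompactSupport hη.continuous hs
  have hint : Integrable fun p : Euc N × ℝ => heatKernel p * adjHeat η p := by
    simpa using integrable_heatKernel_mul_of_hasCompactSupport hη.continuous_adjHeat
      (hasCompactSupport_adjHeat hs) 0
  refine tendsto_nhds_unique (tendsto_integral_smoothStep_mul hint fun p hp => by
    rw [heatKernel_of_nonpos hp, zero_mul]) ?_
  exact (tendsto_integral_deriv_smoothStep_mul_gaussianMean hη.continuous hC).neg.congr'
    (eventually_mem_nhdsWithin.mono fun ε hε =>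
      (integral_smoothStep_mul_heatKernel_mul_adjHeat hη hs hε).symm)

lemma integral_heatKernel_mul_adjHeat (hη : IsC21 η) (hs : HasCompactSupport η)
    (q : Euc N × ℝ) : ∫ p, heatKernel (p - q) * adjHeat η p = -η q := by
  have h := integral_heatKernel_mul_adjHeat_zero (hη.translate q)
    (hs.comp_homeomorph (Homeomorph.addLeft q))
  simp only [adjHeat_translate hη, add_zero] at h
  rw [← h, ← integral_add_left_eq_self (fun p => heatKernel (p - q) * adjHeat η p) q]
  simp only [add_sub_cancel_left]

end RepresentationFormula

section HeatPotentials

variable {N : ℕ}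

/-- The forward heat potential `Γ * κ` of a space-time measure. -/
def heatPotential (κ : Measure (Euc N × ℝ)) (p : Euc N × ℝ) : ℝ := ∫ r, heatKernel (p - r) ∂κ

/-- The backward heat potential of a function, the solution of `∂_t W + ΔW = -h` that vanishes for
large times. -/
def backwardPotential (h : Euc N × ℝ → ℝ) (p : Euc N × ℝ) : ℝ := ∫ r, heatKernel (r - p) * h r

section Forward

variable {κ : Measure (Euc N × ℝ)}

lemma heatPotential_nonneg (κ : Measure (Euc N × ℝ)) (p : Euc N × ℝ) : 0 ≤ heatPotential κ p :=
  integral_nonneg fun _ => heatKernel_nonneg _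

lemma heatPotential_of_nonpos (h0 : ∀ᵐ r ∂κ, 0 ≤ r.2) {p : Euc N × ℝ} (hp : p.2 ≤ 0) :
    heatPotential κ p = 0 :=
  integral_eq_zero_of_ae (h0.mono fun r hr =>
    heatKernel_of_nonpos (show p.2 - r.2 ≤ 0 by linarith))

variable [IsFiniteMeasure κ]

lemma integrable_heatKernel_sub_prod (h0 : ∀ᵐ r ∂κ, 0 ≤ r.2) (b : ℝ) :
    Integrable (fun z : (Euc N × ℝ) × (Euc N × ℝ) => heatKernel (z.1 - z.2))
      ((volume.restrict (timeBelow N b)).prod κ) := by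
  have hm : Measurable fun z : (Euc N × ℝ) × (Euc N × ℝ) => heatKernel (z.1 - z.2) :=
    measurable_heatKernel.comp (measurable_fst.sub measurable_snd)
  refine ⟨hm.aestronglyMeasurable, ?_⟩
  rw [hasFiniteIntegral_iff_ofReal (Eventually.of_forall fun p => heatKernel_nonneg _),
    lintegral_prod_symm _ hm.ennreal_ofReal.aemeasurable]
  simp only [setLIntegral_heatKernel_timeBelow]
  calc ∫⁻ r, ENNReal.ofReal (b - r.2) ∂κ ≤ ∫⁻ _, ENNReal.ofReal b ∂κ :=
        lintegral_mono_ae (h0.mono fun r hr => ENNReal.ofReal_le_ofReal (by linarith))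
    _ < ⊤ := by
        rw [lintegral_const]
        exact ENNReal.mul_lt_top ENNReal.ofReal_lt_top (measure_lt_top κ _)

lemma integrableOn_heatPotential (h0 : ∀ᵐ r ∂κ, 0 ≤ r.2) (b : ℝ) :
    IntegrableOn (heatPotential κ) (timeBelow N b) :=
  (integrable_heatKernel_sub_prod h0 b).integral_prod_left

lemma integral_heatPotential_mul (h0 : ∀ᵐ r ∂κ, 0 ≤ r.2) {h : Euc N × ℝ → ℝ}
    (hm : AEStronglyMeasurable h) {C b : ℝ} (hC : ∀ p, |h p| ≤ C)
    (hb : ∀ p : Euc N × ℝ, b ≤ p.2 → h p = 0) :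
    Integrable (fun p => heatPotential κ p * h p) ∧ Integrable (backwardPotential h) κ ∧
      ∫ p, heatPotential κ p * h p = ∫ r, backwardPotential h r ∂κ := by
  have hb' : ∀ p ∉ timeBelow N b, h p = 0 := fun p hp => hb p (not_lt.1 hp)
  have hprod : Integrable (fun z : (Euc N × ℝ) × (Euc N × ℝ) => heatKernel (z.1 - z.2) * h z.1)
      ((volume.restrict (timeBelow N b)).prod κ) :=
    (integrable_heatKernel_sub_prod h0 b).mul_bdd (c := C) hm.restrict.comp_fst
      (Eventually.of_forall fun z => hC _)
  have hinner : ∀ r, ∫ p in timeBelow N b, heatKernel (p - r) * h p = backwardPotential h r :=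
    fun r => setIntegral_eq_integral_of_forall_compl_eq_zero fun p hp => by rw [hb' p hp, mul_zero]
  have houter : ∀ p, ∫ r, heatKernel (p - r) * h p ∂κ = heatPotential κ p * h p :=
    fun p => integral_mul_const _ _
  have hleft := hprod.integral_prod_left
  have hright := hprod.integral_prod_right
  have hswap := integral_integral_swap (f := fun p r => heatKernel (p - r) * h p) hprod
  simp only [hinner, houter] at hleft hright hswap
  refine ⟨(integrableOn_iff_integrable_of_support_subset fun p hp => ?_).1 hleft, hright, ?_⟩
  · by_contra hn
    exact hp (by simp only [hb' p hn, mul_zero])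
  · rw [← hswap]
    exact (setIntegral_eq_integral_of_forall_compl_eq_zero fun p hp => by
      rw [hb' p hp, mul_zero]).symm

lemma integral_heatPotential_mul_adjHeat (h0 : ∀ᵐ r ∂κ, 0 ≤ r.2) {η : Euc N × ℝ → ℝ}
    (hη : IsC21 η) (hs : HasCompactSupport η) :
    Integrable (fun p => heatPotential κ p * adjHeat η p) ∧
      ∫ p, heatPotential κ p * adjHeat η p = -∫ r, η r ∂κ := by
  obtain ⟨C, b, -, hC, hb⟩ :=
    exists_bound_of_hasCompactSupport hη.continuous_adjHeat (hasCompactSupport_adjHeat hs)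
  obtain ⟨hint, -, heq⟩ :=
    integral_heatPotential_mul h0 hη.continuous_adjHeat.aestronglyMeasurable hC hb
  refine ⟨hint, ?_⟩
  rw [heq, ← integral_neg]
  exact integral_congr_ae (Eventually.of_forall (integral_heatKernel_mul_adjHeat hη hs))

lemma setIntegral_heatPotential_timeBelow_le (h0 : ∀ᵐ r ∂κ, 0 ≤ r.2) (ε : ℝ) :
    ∫ p in timeBelow N ε, heatPotential κ p ≤ ε * κ.real (timeBelow N ε) := by
  have hkernel : ∀ r : Euc N × ℝ,
      ∫ p in timeBelow N ε, heatKernel (p - r) = (ENNReal.ofReal (ε - r.2)).toReal := fun r => by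
    rw [integral_eq_lintegral_of_nonneg_ae (Eventually.of_forall fun p => heatKernel_nonneg _)
      (integrableOn_heatKernel_timeBelow ε r).aestronglyMeasurable,
      setLIntegral_heatKernel_timeBelow]
  calc ∫ p in timeBelow N ε, heatPotential κ p
      = ∫ r, (ENNReal.ofReal (ε - r.2)).toReal ∂κ := by
        simp only [heatPotential, ← hkernel]
        exact integral_integral_swap (f := fun p r => heatKernel (p - r))
          (integrable_heatKernel_sub_prod h0 ε)
    _ ≤ ∫ r, (timeBelow N ε).indicator (fun _ => ε) r ∂κ := by
        refine integral_mono_of_nonneg (Eventually.of_forall fun r => ENNReal.toReal_nonneg)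
          ((integrable_const ε).indicator (measurableSet_timeBelow N ε)) ?_
        filter_upwards [h0] with r hr
        by_cases hrε : r ∈ timeBelow N ε
        · rw [indicator_of_mem hrε, ENNReal.toReal_ofReal (sub_nonneg.2 (le_of_lt hrε))]
          linarith
        · rw [indicator_of_notMem hrε, ENNReal.ofReal_of_nonpos (sub_nonpos.2 (not_lt.1 hrε)),
            ENNReal.toReal_zero]
    _ = ε * κ.real (timeBelow N ε) := by
        rw [integral_indicator_const _ (measurableSet_timeBelow N ε), smul_eq_mul, mul_comm]

end Forward

section Backward

variable {h : Euc N × ℝ → ℝ}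

lemma backwardPotential_eq_convolution (h : Euc N × ℝ → ℝ) :
    backwardPotential h =
      convolution (fun r => heatKernel (-r)) h (ContinuousLinearMap.mul ℝ ℝ) volume := by
  funext p
  rw [convolution_def, ← integral_sub_left_eq_self _ _ p]
  simp [backwardPotential]

lemma locallyIntegrable_heatKernel_neg :
    LocallyIntegrable fun r : Euc N × ℝ => heatKernel (-r) := by
  have hloc : LocallyIntegrable (heatKernel (N := N)) := fun p => by
    refine ⟨timeBelow N (p.2 + 1), (isOpen_lt continuous_snd continuous_const).mem_nhds
      (lt_add_one p.2), ?_⟩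
    simpa using integrableOn_heatKernel_timeBelow (N := N) (p.2 + 1) 0
  refine locallyIntegrable_iff.2 fun K hK => ?_
  have hneg := ((Measure.measurePreserving_neg
    (volume : Measure (Euc N × ℝ))).integrableOn_comp_preimage
      (MeasurableEquiv.neg (Euc N × ℝ)).measurableEmbedding).2 (hloc.integrableOn_isCompact hK.neg)
  simpa [Function.comp_def] using hneg

lemma backwardPotential_nonneg (hh : ∀ p, 0 ≤ h p) (p : Euc N × ℝ) : 0 ≤ backwardPotential h p :=
  integral_nonneg fun _ => mul_nonneg (heatKernel_nonneg _) (hh _)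

lemma backwardPotential_eq_zero {b : ℝ} (hb : ∀ p : Euc N × ℝ, b ≤ p.2 → h p = 0)
    {p : Euc N × ℝ} (hp : b ≤ p.2) : backwardPotential h p = 0 := by
  refine integral_eq_zero_of_ae (Eventually.of_forall fun r => ?_)
  rcases lt_or_ge r.2 b with hr | hr
  · simp [heatKernel_of_nonpos (p := r - p) (show r.2 - p.2 ≤ 0 by linarith)]
  · simp [hb r hr]

lemma contDiff_backwardPotential {n : ℕ∞} (hh : ContDiff ℝ n h) (hs : HasCompactSupport h) :
    ContDiff ℝ n (backwardPotential h) := by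
  rw [backwardPotential_eq_convolution]
  exact hs.contDiff_convolution_right _ locallyIntegrable_heatKernel_neg hh

lemma fderiv_backwardPotential (hh : ContDiff ℝ 1 h) (hs : HasCompactSupport h)
    (p v : Euc N × ℝ) :
    fderiv ℝ (backwardPotential h) p v = backwardPotential (fun r => fderiv ℝ h r v) p := by
  rw [backwardPotential_eq_convolution,
    (hs.hasFDerivAt_convolution_right _ locallyIntegrable_heatKernel_neg hh p).fderiv,
    convolution_precompR_apply _ locallyIntegrable_heatKernel_neg (hs.fderiv ℝ)
      (hh.continuous_fderiv (by norm_num)), backwardPotential_eq_convolution]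

lemma adjHeat_eq_of_contDiff (hh : ContDiff ℝ 2 h) (p : Euc N × ℝ) :
    adjHeat h p = fderiv ℝ h p (0, 1) +
      ∑ i, fderiv ℝ (fun r => fderiv ℝ h r (unitVec i, 0)) p (unitVec i, 0) := by
  have hd : Differentiable ℝ (fderiv ℝ h) :=
    (hh.fderiv_right (m := 1) (by norm_num)).differentiable (by norm_num)
  rw [(hasParabolicDerivs_of_contDiff hh).adjHeat_eq]
  congr 1
  refine Finset.sum_congr rfl fun i _ => ?_
  rw [fderiv_clm_apply (hd p) (differentiableAt_const _)]
  simp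

/-- Convolution commutes with derivatives, which reduces this to the representation formula. -/
lemma adjHeat_backwardPotential (hh : ContDiff ℝ 3 h) (hs : HasCompactSupport h)
    (p : Euc N × ℝ) : adjHeat (backwardPotential h) p = -h p := by
  have hh2 : ContDiff ℝ 2 h := hh.of_le (by norm_num)
  have hd (v) : ContDiff ℝ 2 fun r => fderiv ℝ h r v :=
    (hh.fderiv_right (m := 2) (by norm_num)).clm_apply contDiff_const
  have hd1 (v) : ContDiff ℝ 1 fun r => fderiv ℝ h r v := (hd v).of_le (by norm_num)
  have hds (v) : HasCompactSupport fun r => fderiv ℝ h r v := hs.fderiv_apply ℝ v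
  have hcommute : adjHeat (backwardPotential h) p = backwardPotential (adjHeat h) p := by
    rw [adjHeat_eq_of_contDiff (contDiff_backwardPotential (n := 2) hh2 hs)]
    simp only [fderiv_backwardPotential (hh2.of_le (by norm_num)) hs,
      fderiv_backwardPotential (hd1 _) (hds _)]
    simp only [backwardPotential, adjHeat_eq_of_contDiff hh2, mul_add, Finset.mul_sum]
    have hint₁ := integrable_heatKernel_mul_of_hasCompactSupport (hd (0, 1)).continuous (hds _) p
    have hint₂ (i : Fin N) := integrable_heatKernel_mul_of_hasCompactSupport
      (((hd (unitVec i, 0)).continuous_fderiv (by norm_num)).clm_apply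
        (continuous_const (y := ((unitVec i, 0) : Euc N × ℝ)))) ((hds _).fderiv_apply ℝ _) p
    rw [integral_add hint₁ (integrable_finsetSum Finset.univ fun i _ => hint₂ i),
      integral_finsetSum _ fun i _ => hint₂ i]
  rw [hcommute]
  exact integral_heatKernel_mul_adjHeat (isC21_of_contDiff hh2) hs p

lemma integrable_posSq_mul (hc : Continuous h) (hs : HasCompactSupport h) :
    Integrable fun r : Euc N × ℝ => posSq r.2 * h r :=
  ((continuous_posSq.comp continuous_snd).mul hc).integrable_of_hasCompactSupport hs.mul_left

lemma exists_backwardPotential_le (N : ℕ) {δ T : ℝ} (hδ : 0 < δ) (hT : 0 < T) :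
    ∃ C, 0 ≤ C ∧ ∀ h : Euc N × ℝ → ℝ, Continuous h → HasCompactSupport h → (∀ r, 0 ≤ h r) →
      ∀ p : Euc N × ℝ, 0 ≤ p.2 → (∀ r, h r ≠ 0 → δ ≤ ‖r.1 - p.1‖ ∧ r.2 ≤ T) →
        backwardPotential h p ≤ C * ∫ r, posSq r.2 * h r := by
  obtain ⟨C, hC0, hC⟩ := exists_heatKernel_le_posSq N hδ hT
  refine ⟨C, hC0, fun h hc hs hn p hp hfar => ?_⟩
  rw [← integral_const_mul]
  refine integral_mono (integrable_heatKernel_mul_of_hasCompactSupport hc hs p)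
    ((integrable_posSq_mul hc hs).const_mul C) fun r => ?_
  by_cases hr : h r = 0
  · simp [hr]
  obtain ⟨hδr, hrT⟩ := hfar r hr
  calc heatKernel (r - p) * h r ≤ C * posSq (r.2 - p.2) * h r :=
        mul_le_mul_of_nonneg_right (hC (r - p) hδr (show r.2 - p.2 ≤ T by linarith)) (hn r)
    _ ≤ C * posSq r.2 * h r := mul_le_mul_of_nonneg_right
        (mul_le_mul_of_nonneg_left (posSq_mono (by linarith)) hC0) (hn r)
    _ = C * (posSq r.2 * h r) := mul_assoc _ _ _

lemma differentiable_heatKernel_slice (t : ℝ) :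
    Differentiable ℝ fun y : Euc N => heatKernel (y, t) := fun y => by
  rcases lt_or_ge 0 t with ht | ht
  · simp only [heatKernel_of_pos (p := (_, t)) ht]
    exact (hasFDerivAt_gaussianKernel y ht).differentiableAt
  · simp only [heatKernel_of_nonpos (p := (_, t)) ht]
    exact differentiableAt_const _

lemma exists_abs_heatKernel_sub_le (N : ℕ) {δ T : ℝ} (hδ : 0 < δ) (hT : 0 < T) :
    ∃ C, 0 ≤ C ∧ ∀ (x y : Euc N) (t : ℝ), δ ≤ ‖y‖ → ‖x - y‖ < δ / 2 → t ≤ T →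
      |heatKernel (x, t) - heatKernel (y, t)| ≤ C * posSq t * ‖x - y‖ := by
  obtain ⟨C, hC0, hC⟩ := exists_norm_fderiv_heatKernel_le_posSq N (half_pos hδ) hT
  refine ⟨C, hC0, fun x y t hy hxy ht => ?_⟩
  refine (convex_ball y (δ / 2)).norm_image_sub_le_of_norm_fderiv_le
    (fun z _ => differentiable_heatKernel_slice t z) (fun z hz => hC (z, t) ?_ ht)
    (Metric.mem_ball_self (half_pos hδ)) (mem_ball_iff_norm.2 hxy)
  have hyz := norm_sub_norm_le y z
  rw [norm_sub_rev] at hyz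
  rw [mem_ball_iff_norm] at hz
  change δ / 2 ≤ ‖z‖
  linarith

lemma exists_norm_spaceFDeriv_backwardPotential_le (N : ℕ) {δ T : ℝ} (hδ : 0 < δ) (hT : 0 < T) :
    ∃ C, 0 ≤ C ∧ ∀ h : Euc N × ℝ → ℝ, ContDiff ℝ 1 h → HasCompactSupport h → (∀ r, 0 ≤ h r) →
      ∀ p : Euc N × ℝ, 0 ≤ p.2 → (∀ r, h r ≠ 0 → δ ≤ ‖r.1 - p.1‖ ∧ r.2 ≤ T) →
        ‖spaceFDeriv (backwardPotential h) p‖ ≤ C * ∫ r, posSq r.2 * h r := by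
  obtain ⟨C, hC0, hC⟩ := exists_abs_heatKernel_sub_le N hδ hT
  refine ⟨C, hC0, fun h hh hs hn p hp hfar => ?_⟩
  have hslice : DifferentiableAt ℝ (fun y => backwardPotential h (y, p.2)) p.1 := by
    have := (contDiff_backwardPotential (n := 1) hh hs).differentiable (by norm_num)
    fun_prop
  have hint (q) := integrable_heatKernel_mul_of_hasCompactSupport hh.continuous hs q
  have hI : 0 ≤ ∫ r, posSq r.2 * h r :=
    integral_nonneg fun r => mul_nonneg (posSq_nonneg _) (hn r)
  refine hslice.hasFDerivAt.le_of_lip' (by positivity) ?_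
  filter_upwards [Metric.ball_mem_nhds p.1 (half_pos hδ)] with x hx
  rw [mem_ball_iff_norm, ← norm_neg] at hx
  rw [backwardPotential, backwardPotential, ← integral_sub (hint _) (hint _),
    mul_assoc, mul_comm (∫ r, posSq r.2 * h r), ← mul_assoc, ← integral_const_mul]
  refine norm_integral_le_of_norm_le ((integrable_posSq_mul hh.continuous hs).const_mul _)
    (Eventually.of_forall fun r => ?_)
  by_cases hr : h r = 0
  · simp [hr]
  obtain ⟨hδr, hrT⟩ := hfar r hr
  have hsub : r.1 - x - (r.1 - p.1) = -(x - p.1) := by abel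
  have hkernel := hC (r.1 - x) (r.1 - p.1) (r.2 - p.2) hδr (by rwa [hsub]) (by linarith)
  rw [hsub, norm_neg] at hkernel
  rw [← sub_mul, norm_mul, Real.norm_of_nonneg (hn r), ← mul_assoc]
  refine mul_le_mul_of_nonneg_right (hkernel.trans ?_) (hn r)
  rw [mul_right_comm]
  exact mul_le_mul_of_nonneg_left (posSq_mono (by linarith)) (by positivity)

end Backward

end HeatPotentials

section Cutoffs

lemma setIntegral_nonneg_of_forall_isCompact {X : Type*} [TopologicalSpace X] [T2Space X]
    [MeasurableSpace X] [OpensMeasurableSpace X] {μ : Measure X} [μ.InnerRegularCompactLTTop]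
    {f : X → ℝ} {O : Set X} (hf : IntegrableOn f O μ)
    (h : ∀ K ⊆ O, IsCompact K → 0 ≤ ∫ x in K, f x ∂μ) {s : Set X}
    (hs : MeasurableSet s) (hsO : s ⊆ O) (hμs : μ s ≠ ∞) : 0 ≤ ∫ x in s, f x ∂μ := by
  have hex (n : ℕ) := hs.exists_isCompact_sdiff_lt hμs (ε := (n : ℝ≥0∞)⁻¹) (by simp)
  choose K hKs hK hμK using hex
  have hsmall : Tendsto (fun n => μ (s \ K n)) atTop (𝓝 0) :=
    tendsto_of_tendsto_of_tendsto_of_le_of_le tendsto_const_nhds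
      ENNReal.tendsto_inv_nat_nhds_zero (fun _ => zero_le) fun n => (hμK n).le
  have hfs : IntegrableOn f s μ := hf.mono_set hsO
  have hlim : Tendsto (fun n => ∫ x in s \ K n, f x ∂μ) atTop (𝓝 0) := by
    have hsmall' : Tendsto (μ.restrict s ∘ fun n => s \ K n) atTop (𝓝 0) :=
      tendsto_of_tendsto_of_tendsto_of_le_of_le tendsto_const_nhds hsmall (fun _ => zero_le)
        fun n => Measure.restrict_apply_le _ _
    have hlim := hfs.tendsto_setIntegral_nhds_zero hsmall'
    simpa only [Measure.restrict_restrict (hs.diff (hK _).measurableSet),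
      inter_eq_left.2 sdiff_subset] using hlim
  refine le_of_tendsto' hlim fun n => ?_
  rw [setIntegral_sdiff (hK n).measurableSet hfs (hKs n)]
  linarith [h (K n) ((hKs n).trans hsO) (hK n)]

variable {E : Type*} [NormedAddCommGroup E] [NormedSpace ℝ E]

/-- The function `c` is a smooth cutoff of the set `K` at scale `δ`: it takes values in `[0, 1]`,
equals `1` on `K`, and does not vanish exactly on the open `δ`-thickening of `K`. -/
structure IsSmoothCutoff (K : Set E) (δ : ℝ) (c : E → ℝ) : Prop where
  contDiff : ContDiff ℝ (⊤ : ℕ∞) c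
  mem_Icc : ∀ x, c x ∈ Icc 0 1
  eq_one : ∀ x ∈ K, c x = 1
  support_eq : Function.support c = Metric.thickening δ K

/-- The function `c` is a nonnegative smooth test function with compact support in `O`. -/
structure IsNonnegTest (O : Set E) (c : E → ℝ) : Prop where
  contDiff : ContDiff ℝ (⊤ : ℕ∞) c
  hasCompactSupport : HasCompactSupport c
  tsupport_subset : tsupport c ⊆ O
  nonneg : ∀ x, 0 ≤ c x

lemma IsNonnegTest.mem_of_ne_zero {O : Set E} {c : E → ℝ} (hc : IsNonnegTest O c) {x : E}
    (hx : c x ≠ 0) : x ∈ O :=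
  hc.tsupport_subset (subset_tsupport c hx)

lemma IsSmoothCutoff.tsupport_subset {K : Set E} {δ : ℝ} {c : E → ℝ} (hc : IsSmoothCutoff K δ c) :
    tsupport c ⊆ Metric.cthickening δ K := by
  rw [tsupport, hc.support_eq]
  exact Metric.closure_thickening_subset_cthickening δ K

lemma tendsto_smoothCutoff_indicator {K : Set E} (hK : IsClosed K) {u : ℕ → ℝ}
    (hu : Tendsto u atTop (𝓝 0)) {c : ℕ → E → ℝ} (hc : ∀ n, IsSmoothCutoff K (u n) (c n)) (x : E) :
    Tendsto (fun n => c n x) atTop (𝓝 (K.indicator 1 x)) := by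
  by_cases hx : x ∈ K
  · simp [(hc _).eq_one x hx, hx]
  rw [indicator_of_notMem hx]
  refine tendsto_const_nhds.congr' ?_
  obtain ⟨ε, hε, hxε⟩ : ∃ ε, 0 < ε ∧ x ∉ Metric.thickening ε K := by
    rw [← hK.closure_eq, Metric.closure_eq_iInter_thickening K] at hx
    simpa using hx
  filter_upwards [hu.eventually_lt_const hε] with n hn
  refine (Function.notMem_support.1 fun hxn => ?_).symm
  rw [(hc n).support_eq] at hxn
  exact hxε (Metric.thickening_mono hn.le K hxn)

variable [FiniteDimensional ℝ E]

lemma exists_isSmoothCutoff {K : Set E} (hK : IsClosed K) {δ : ℝ} (hδ : 0 < δ) :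
    ∃ c, IsSmoothCutoff K δ c := by
  obtain ⟨c, hc, hrange, hsupport, hone⟩ := exists_contMDiff_support_eq_eq_one_iff
    (modelWithCornersSelf ℝ E) (n := (⊤ : ℕ∞)) (Metric.isOpen_thickening (δ := δ) (E := K))
    hK (Metric.self_subset_thickening hδ K)
  exact ⟨c, contMDiff_iff_contDiff.1 hc, fun x => hrange (mem_range_self x),
    fun x => (hone x).1, hsupport⟩

lemma IsSmoothCutoff.hasCompactSupport {K : Set E} {δ : ℝ} {c : E → ℝ}
    (hc : IsSmoothCutoff K δ c) (hK : IsCompact K) : HasCompactSupport c :=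
  hK.cthickening.of_isClosed_subset (isClosed_tsupport c) hc.tsupport_subset

lemma exists_contDiff_eventually_eq_one {K O : Set E} (hK : IsCompact K) (hO : IsOpen O)
    (hKO : K ⊆ O) :
    ∃ c : E → ℝ, ContDiff ℝ (⊤ : ℕ∞) c ∧ (∀ x, 0 ≤ c x) ∧ (∀ x ∈ K, c =ᶠ[𝓝 x] 1) ∧
      HasCompactSupport c ∧ tsupport c ⊆ O := by
  obtain ⟨δ, hδ, hδO⟩ := hK.exists_cthickening_subset_open hO hKO
  have hδ2 := half_pos hδ
  obtain ⟨c, hc⟩ :=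
    exists_isSmoothCutoff (Metric.isClosed_cthickening (δ := δ / 2) (E := K)) hδ2
  refine ⟨c, hc.contDiff, fun x => (hc.mem_Icc x).1, fun x hx => ?_,
    hc.hasCompactSupport hK.cthickening, hc.tsupport_subset.trans ?_⟩
  · filter_upwards [Metric.isOpen_thickening.mem_nhds (Metric.self_subset_thickening hδ2 K hx)]
      with y hy using hc.eq_one y (Metric.thickening_subset_cthickening _ _ hy)
  · have h := Metric.cthickening_cthickening_subset hδ2.le hδ2.le K
    rw [add_halves] at h
    exact h.trans hδO

variable [MeasurableSpace E] [BorelSpace E] {μ : Measure E} {f : E → ℝ} {O : Set E}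

lemma setIntegral_nonneg_of_forall_isNonnegTest (hO : IsOpen O) (hf : IntegrableOn f O μ)
    (h : ∀ c, IsNonnegTest O c → 0 ≤ ∫ x in O, f x * c x ∂μ) {K : Set E} (hK : IsCompact K)
    (hKO : K ⊆ O) : 0 ≤ ∫ x in K, f x ∂μ := by
  obtain ⟨δ, hδ, hδO⟩ := hK.exists_cthickening_subset_open hO hKO
  obtain ⟨u, -, hu, hu0⟩ := exists_seq_strictAnti_tendsto' hδ
  choose c hc using fun n => exists_isSmoothCutoff hK.isClosed (hu n).1
  have hlim : Tendsto (fun n => ∫ x in O, f x * c n x ∂μ) atTop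
      (𝓝 (∫ x in O, f x * K.indicator 1 x ∂μ)) := by
    refine tendsto_integral_of_dominated_convergence (fun x => |f x|) (fun n =>
      hf.aestronglyMeasurable.mul (hc n).contDiff.continuous.aestronglyMeasurable) hf.abs
      (fun n => Eventually.of_forall fun x => ?_) (Eventually.of_forall fun x =>
        (tendsto_smoothCutoff_indicator hK.isClosed hu0 hc x).const_mul _)
    rw [norm_mul, Real.norm_eq_abs, Real.norm_of_nonneg ((hc n).mem_Icc x).1]
    exact mul_le_of_le_one_right (abs_nonneg _) ((hc n).mem_Icc x).2
  have hind (x : E) : f x * K.indicator 1 x = K.indicator f x := by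
    by_cases hx : x ∈ K <;> simp [hx]
  simp only [hind, setIntegral_indicator hK.measurableSet, inter_eq_right.2 hKO] at hlim
  refine ge_of_tendsto' hlim fun n => h _ ⟨(hc n).contDiff, (hc n).hasCompactSupport hK,
    (hc n).tsupport_subset.trans ?_, fun x => ((hc n).mem_Icc x).1⟩
  exact (Metric.cthickening_mono (hu n).2.le K).trans hδO

lemma ae_nonneg_of_forall_isNonnegTest [μ.InnerRegularCompactLTTop] (hO : IsOpen O)
    (hf : IntegrableOn f O μ) (h : ∀ c, IsNonnegTest O c → 0 ≤ ∫ x in O, f x * c x ∂μ) :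
    ∀ᵐ x ∂μ.restrict O, 0 ≤ f x := by
  refine ae_nonneg_of_forall_setIntegral_nonneg hf fun s hs hμs => ?_
  rw [Measure.restrict_apply hs] at hμs
  rw [Measure.restrict_restrict hs]
  exact setIntegral_nonneg_of_forall_isCompact hf
    (fun K hKO hK => setIntegral_nonneg_of_forall_isNonnegTest hO hf h hK hKO)
    (hs.inter hO.measurableSet) inter_subset_right hμs.ne

end Cutoffs

section Localization

variable {N : ℕ} {Ω E U : Set (Euc N)} {φ : Euc N → ℝ} {δ T : ℝ}

/-- Test functions for the local problem: `C^{2,1}` functions on space-time with compact support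
in `Ω × (-∞, T)`. -/
structure IsLocalTest (Ω : Set (Euc N)) (T : ℝ) (η : Euc N × ℝ → ℝ) : Prop where
  isC21 : IsC21 η
  hasCompactSupport : HasCompactSupport η
  tsupport_subset : tsupport η ⊆ Ω ×ˢ Iio T

/-- The function `φ` localizes to `Ω` around the set `E`: it is a smooth function with compact
support in `Ω` that equals `1` on the `δ`-neighbourhood of an open set `U` which itself contains the
`δ`-neighbourhood of `E`. -/
structure IsLocalizer (Ω E U : Set (Euc N)) (φ : Euc N → ℝ) (δ : ℝ) : Prop where
  isOpen : IsOpen U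
  isBounded : Bornology.IsBounded U
  subset : E ⊆ U
  pos : 0 < δ
  contDiff : ContDiff ℝ (⊤ : ℕ∞) φ
  hasCompactSupport : HasCompactSupport φ
  tsupport_subset : tsupport φ ⊆ Ω
  mem_Icc : ∀ x, φ x ∈ Icc 0 1
  eq_one : ∀ y ∈ U, ∀ x, ‖y - x‖ < δ → φ x = 1
  le_norm_sub : ∀ x ∉ U, ∀ e ∈ E, δ ≤ ‖x - e‖

lemma exists_isLocalizer (hΩ : IsOpen Ω) (hE : IsCompact E) (hEΩ : E ⊆ Ω) :
    ∃ U φ δ, IsLocalizer Ω E U φ δ := by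
  obtain ⟨d, hd, hdΩ⟩ := hE.exists_cthickening_subset_open hΩ hEΩ
  have hd4 : 0 < d / 4 := by positivity
  obtain ⟨c, hc⟩ := exists_isSmoothCutoff (Metric.isClosed_cthickening (δ := d / 2) (E := E)) hd4
  refine ⟨Metric.thickening (d / 4) E, c, d / 4,
    { isOpen := Metric.isOpen_thickening
      isBounded := hE.isBounded.thickening
      subset := Metric.self_subset_thickening hd4 E
      pos := hd4
      contDiff := hc.contDiff
      hasCompactSupport := hc.hasCompactSupport hE.cthickening
      tsupport_subset := ?_
      mem_Icc := hc.mem_Icc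
      eq_one := fun y hy x hxy => hc.eq_one x (Metric.thickening_subset_cthickening _ _ ?_)
      le_norm_sub := fun x hx e he => not_lt.1 fun hlt =>
        hx (Metric.mem_thickening_iff.2 ⟨e, he, by rwa [dist_eq_norm]⟩) }⟩
  · refine hc.tsupport_subset.trans
      ((Metric.cthickening_cthickening_subset hd4.le (half_pos hd).le E).trans ?_)
    exact (Metric.cthickening_mono (by linarith) E).trans hdΩ
  · obtain ⟨e, he, hye⟩ := Metric.mem_thickening_iff.1 hy
    refine Metric.mem_thickening_iff.2 ⟨e, he, ?_⟩
    have htriangle := dist_triangle x y e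
    rw [dist_comm x y, dist_eq_norm y x] at htriangle
    linarith

namespace IsLocalizer

lemma nonneg (G : IsLocalizer Ω E U φ δ) (x : Euc N) : 0 ≤ φ x := (G.mem_Icc x).1

lemma le_one (G : IsLocalizer Ω E U φ δ) (x : Euc N) : φ x ≤ 1 := (G.mem_Icc x).2

lemma eq_one_of_mem (G : IsLocalizer Ω E U φ δ) {x : Euc N} (hx : x ∈ U) : φ x = 1 :=
  G.eq_one x hx x (by simpa using G.pos)

lemma subset_domain (G : IsLocalizer Ω E U φ δ) : U ⊆ Ω := fun x hx =>
  G.tsupport_subset (subset_tsupport φ (by simp [G.eq_one_of_mem hx]))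

lemma prod_subset_QT (G : IsLocalizer Ω E U φ δ) (T : ℝ) : U ×ˢ Ioo 0 T ⊆ QT Ω T :=
  prod_mono G.subset_domain le_rfl

lemma eventuallyEq_one (G : IsLocalizer Ω E U φ δ) {x y : Euc N} (hy : y ∈ U)
    (hyx : ‖y - x‖ < δ) : φ =ᶠ[𝓝 x] 1 := by
  have hopen : IsOpen {z | ‖y - z‖ < δ} := isOpen_lt (by fun_prop) continuous_const
  filter_upwards [hopen.mem_nhds hyx] with z hz using G.eq_one y hy z hz

end IsLocalizer

lemma abs_sum_apply_unitVec_le (H : Euc N →L[ℝ] Euc N →L[ℝ] ℝ) :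
    |∑ i, H (unitVec i) (unitVec i)| ≤ N * ‖H‖ := by
  refine (Finset.abs_sum_le_sum_abs _ _).trans
    ((Finset.sum_le_card_nsmul _ _ ‖H‖ fun i _ => ?_).trans (by simp))
  simpa using H.le_opNorm₂ (unitVec i) (unitVec i)

lemma abs_sum_apply_mul_apply_unitVec_le (L M : Euc N →L[ℝ] ℝ) :
    |∑ i, L (unitVec i) * M (unitVec i)| ≤ N * (‖L‖ * ‖M‖) := by
  refine (Finset.abs_sum_le_sum_abs _ _).trans
    ((Finset.sum_le_card_nsmul _ _ (‖L‖ * ‖M‖) fun i _ => ?_).trans (by simp))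
  rw [abs_mul]
  exact mul_le_mul (by simpa using L.le_opNorm (unitVec i))
    (by simpa using M.le_opNorm (unitVec i)) (abs_nonneg _) (norm_nonneg _)

/-- The backward potential of `c` multiplied by a localizer in space and by a cutoff that removes
negative times. -/
def localizedBackwardPotential (φ : Euc N → ℝ) (c : Euc N × ℝ → ℝ) (p : Euc N × ℝ) : ℝ :=
  Real.smoothTransition (p.2 + 1) * (φ p.1 * backwardPotential c p)

variable {c : Euc N × ℝ → ℝ}

lemma localizedBackwardPotential_of_nonneg {p : Euc N × ℝ} (hp : 0 ≤ p.2) :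
    localizedBackwardPotential φ c p = φ p.1 * backwardPotential c p := by
  rw [localizedBackwardPotential, Real.smoothTransition.one_of_one_le (by linarith), one_mul]

lemma localizedBackwardPotential_nonneg (hφ : ∀ x, 0 ≤ φ x) (hc : ∀ p, 0 ≤ c p)
    (p : Euc N × ℝ) : 0 ≤ localizedBackwardPotential φ c p :=
  mul_nonneg (Real.smoothTransition.nonneg _) (mul_nonneg (hφ _) (backwardPotential_nonneg hc p))

lemma tsupport_localizedBackwardPotential_subset {b : ℝ}
    (hb : ∀ p : Euc N × ℝ, b ≤ p.2 → c p = 0) :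
    tsupport (localizedBackwardPotential φ c) ⊆ tsupport φ ×ˢ Icc (-1) b := by
  refine closure_minimal (fun p hp => ?_) ((isClosed_tsupport φ).prod isClosed_Icc)
  refine ⟨subset_tsupport φ fun hφ => hp ?_, not_lt.1 fun hlt => hp ?_, not_lt.1 fun hlt => hp ?_⟩
  · simp [localizedBackwardPotential, hφ]
  · simp [localizedBackwardPotential, Real.smoothTransition.zero_of_nonpos
      (show p.2 + 1 ≤ 0 by linarith)]
  · simp [localizedBackwardPotential, backwardPotential_eq_zero hb hlt.le]

lemma isC21_localizedBackwardPotential (hφ : ContDiff ℝ 2 φ) (hc : ContDiff ℝ 2 c)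
    (hs : HasCompactSupport c) : IsC21 (localizedBackwardPotential φ c) :=
  (isC21_of_contDiff (Real.smoothTransition.contDiff.comp
    (contDiff_snd.add contDiff_const))).mul ((hasParabolicDerivs_space hφ).isC21.mul
      (isC21_of_contDiff (contDiff_backwardPotential (n := 2) hc hs)))

lemma isLocalTest_localizedBackwardPotential (G : IsLocalizer Ω E U φ δ)
    (hc : IsNonnegTest (U ×ˢ Ioo 0 T) c) : IsLocalTest Ω T (localizedBackwardPotential φ c) := by
  obtain ⟨ε, hε, hεT⟩ := IsCompact.exists_forall_le' hc.hasCompactSupport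
    (continuous_const.sub continuous_snd).continuousOn (f := fun p => T - p.2) (a := 0)
    fun p hp => sub_pos.2 (hc.tsupport_subset hp).2.2
  have hts := tsupport_localizedBackwardPotential_subset (φ := φ) (c := c) (b := T - ε / 2)
    fun p hp => by
      by_contra hne
      linarith [hεT p (subset_tsupport c hne)]
  exact
    { isC21 := isC21_localizedBackwardPotential (contDiff_infty.1 G.contDiff 2)
        (contDiff_infty.1 hc.contDiff 2) hc.hasCompactSupport
      hasCompactSupport := (G.hasCompactSupport.isCompact.prod isCompact_Icc).of_isClosed_subset
        (isClosed_tsupport _) hts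
      tsupport_subset := hts.trans
        (prod_mono G.tsupport_subset fun t ht => lt_of_le_of_lt ht.2 (by linarith)) }

/-- The terms of `(∂_t + Δ)(φ W)` that differentiate the localizer `φ`, where `W` is the backward
potential of `c`. -/
def localizationError (φ : Euc N → ℝ) (c : Euc N × ℝ → ℝ) (p : Euc N × ℝ) : ℝ :=
  backwardPotential c p * (∑ i, fderiv ℝ (fderiv ℝ φ) p.1 (unitVec i) (unitVec i)) +
    2 * ∑ i, fderiv ℝ φ p.1 (unitVec i) * spaceFDeriv (backwardPotential c) p (unitVec i)

lemma adjHeat_localizedBackwardPotential_add (G : IsLocalizer Ω E U φ δ)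
    (hc : IsNonnegTest (U ×ˢ Ioo 0 T) c) {p : Euc N × ℝ} (hp : 0 < p.2) :
    adjHeat (localizedBackwardPotential φ c) p + c p = localizationError φ c p := by
  have hφ : ContDiff ℝ 2 φ := contDiff_infty.1 G.contDiff 2
  have hc2 : ContDiff ℝ 2 c := contDiff_infty.1 hc.contDiff 2
  have hW : IsC21 (backwardPotential c) :=
    isC21_of_contDiff (contDiff_backwardPotential (n := 2) hc2 hc.hasCompactSupport)
  have hproduct : localizedBackwardPotential φ c =ᶠ[𝓝 p]
      (fun q : Euc N × ℝ => φ q.1) * backwardPotential c := by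
    filter_upwards [(isOpen_lt continuous_const continuous_snd).mem_nhds hp] with q hq
    exact localizedBackwardPotential_of_nonneg (le_of_lt hq)
  have hφc : φ p.1 * c p = c p := by
    by_cases h : c p = 0
    · simp [h]
    · rw [G.eq_one_of_mem (hc.mem_of_ne_zero h).1, one_mul]
  rw [adjHeat_congr hproduct, adjHeat_mul (hasParabolicDerivs_space hφ).isC21 hW,
    adjHeat_backwardPotential (contDiff_infty.1 hc.contDiff 3) hc.hasCompactSupport,
    adjHeat_space hφ, (hasParabolicDerivs_space hφ).spaceFDeriv_eq, localizationError]
  linear_combination -hφc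

lemma localizationError_eq_zero {p : Euc N × ℝ} (h : φ =ᶠ[𝓝 p.1] 1) :
    localizationError φ c p = 0 := by
  have h' : fderiv ℝ φ =ᶠ[𝓝 p.1] 0 := by
    filter_upwards [h.fderiv (𝕜 := ℝ)] with x hx
    rw [hx, Pi.one_def, fderiv_fun_const]
  simp [localizationError, h'.fderiv_eq, h'.eq_of_nhds]

lemma exists_abs_localizationError_le (G : IsLocalizer Ω E U φ δ) (hT : 0 < T) :
    ∃ C, 0 ≤ C ∧ ∀ c, IsNonnegTest (U ×ˢ Ioo 0 T) c → ∀ p : Euc N × ℝ, 0 < p.2 →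
      |localizationError φ c p| ≤ C * ∫ r, posSq r.2 * c r := by
  obtain ⟨C, hC0, hC⟩ := exists_backwardPotential_le N G.pos hT
  obtain ⟨D, hD0, hD⟩ := exists_norm_spaceFDeriv_backwardPotential_le N G.pos hT
  have hφ' : ContDiff ℝ 1 (fderiv ℝ φ) :=
    (contDiff_infty.1 G.contDiff 2).fderiv_right (m := 1) (by norm_num)
  obtain ⟨A, hA⟩ := hφ'.continuous.bounded_above_of_compact_support (G.hasCompactSupport.fderiv ℝ)
  obtain ⟨B, hB⟩ := (hφ'.continuous_fderiv (by norm_num)).bounded_above_of_compact_support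
    ((G.hasCompactSupport.fderiv ℝ).fderiv ℝ)
  have hA0 : 0 ≤ A := (norm_nonneg _).trans (hA 0)
  have hB0 : 0 ≤ B := (norm_nonneg _).trans (hB 0)
  refine ⟨C * (N * B) + 2 * (N * (A * D)), by positivity, fun c hc p hp => ?_⟩
  have hJ : 0 ≤ ∫ r, posSq r.2 * c r :=
    integral_nonneg fun r => mul_nonneg (posSq_nonneg _) (hc.nonneg _)
  by_cases hnear : ∃ y ∈ U, ‖y - p.1‖ < δ
  · obtain ⟨y, hy, hyp⟩ := hnear
    rw [localizationError_eq_zero (G.eventuallyEq_one hy hyp), abs_zero]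
    positivity
  have hfar (r : Euc N × ℝ) (hr : c r ≠ 0) : δ ≤ ‖r.1 - p.1‖ ∧ r.2 ≤ T :=
    ⟨not_lt.1 fun hlt => hnear ⟨r.1, (hc.mem_of_ne_zero hr).1, hlt⟩,
      (hc.mem_of_ne_zero hr).2.2.le⟩
  have hW := hC c hc.contDiff.continuous hc.hasCompactSupport hc.nonneg p hp.le hfar
  have hDW := hD c (contDiff_infty.1 hc.contDiff 1) hc.hasCompactSupport hc.nonneg p hp.le hfar
  calc |localizationError φ c p|
      ≤ backwardPotential c p * (N * ‖fderiv ℝ (fderiv ℝ φ) p.1‖) +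
          2 * (N * (‖fderiv ℝ φ p.1‖ * ‖spaceFDeriv (backwardPotential c) p‖)) := by
        refine (abs_add_le _ _).trans ?_
        rw [abs_mul, abs_mul, abs_of_nonneg (backwardPotential_nonneg hc.nonneg p), abs_two]
        gcongr
        · exact backwardPotential_nonneg hc.nonneg p
        · exact abs_sum_apply_unitVec_le _
        · exact abs_sum_apply_mul_apply_unitVec_le _ _
    _ ≤ C * (∫ r, posSq r.2 * c r) * (N * B) +
          2 * (N * (A * (D * ∫ r, posSq r.2 * c r))) := by
        gcongr
        · exact hB _
        · exact hA _
    _ = _ := by ring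

end Localization

section DataMeasures

variable {N : ℕ}

/-- The measure on space-time with density `f⁺` on `Q`, as data for the heat potential. -/
def sourceMeasure (Q : Set (Euc N × ℝ)) (f : Euc N × ℝ → ℝ) : Measure (Euc N × ℝ) :=
  (volume.restrict Q).withDensity fun p => ENNReal.ofReal (f p)

/-- The initial datum `m` seen as the measure `m ⊗ δ₀` on space-time. -/
def initialMeasure (m : Measure (Euc N)) : Measure (Euc N × ℝ) := m.map fun y => (y, (0 : ℝ))

variable {Ω : Set (Euc N)} {Q : Set (Euc N × ℝ)} {f : Euc N × ℝ → ℝ} {m : Measure (Euc N)}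

lemma measurableSet_QT (hΩ : IsOpen Ω) (T : ℝ) : MeasurableSet (QT Ω T) :=
  hΩ.measurableSet.prod measurableSet_Ioo

lemma isFiniteMeasure_sourceMeasure (hf : IntegrableOn f Q) :
    IsFiniteMeasure (sourceMeasure Q f) :=
  isFiniteMeasure_withDensity_ofReal hf.2

lemma ae_sourceMeasure_nonneg_snd (hΩ : IsOpen Ω) (T : ℝ) (f : Euc N × ℝ → ℝ) :
    ∀ᵐ r ∂sourceMeasure (QT Ω T) f, 0 ≤ r.2 := by
  refine (withDensity_absolutelyContinuous _ _).ae_le ?_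
  filter_upwards [ae_restrict_mem (measurableSet_QT hΩ T)] with r hr using hr.2.1.le

lemma integral_sourceMeasure (hf : IntegrableOn f Q)
    (hf0 : ∀ᵐ p ∂volume.restrict Q, 0 ≤ f p) (w : Euc N × ℝ → ℝ) :
    ∫ p, w p ∂sourceMeasure Q f = ∫ p in Q, f p * w p := by
  rw [sourceMeasure, integral_withDensity_eq_integral_toReal_smul₀
    hf.aestronglyMeasurable.aemeasurable.ennreal_ofReal
    (Eventually.of_forall fun p => ENNReal.ofReal_lt_top)]
  refine integral_congr_ae ?_
  filter_upwards [hf0] with p hp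
  rw [ENNReal.toReal_ofReal hp, smul_eq_mul]

instance [IsFiniteMeasure m] : IsFiniteMeasure (initialMeasure m) := by
  unfold initialMeasure
  infer_instance

lemma ae_initialMeasure_iff {P : Euc N × ℝ → Prop} (hP : MeasurableSet {p | P p}) :
    (∀ᵐ r ∂initialMeasure m, P r) ↔ ∀ᵐ y ∂m, P (y, 0) :=
  ae_map_iff (by fun_prop) hP

lemma ae_initialMeasure_nonneg_snd (m : Measure (Euc N)) : ∀ᵐ r ∂initialMeasure m, 0 ≤ r.2 :=
  (ae_initialMeasure_iff (measurableSet_le measurable_const measurable_snd)).2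
    (Eventually.of_forall fun _ => le_rfl)

lemma integral_initialMeasure (m : Measure (Euc N)) {w : Euc N × ℝ → ℝ} (hw : Continuous w) :
    ∫ r, w r ∂initialMeasure m = ∫ y, w (y, 0) ∂m :=
  integral_map (by fun_prop) hw.aestronglyMeasurable

end DataMeasures

section LocalLowerBound

lemma integrable_mul_of_hasCompactSupport {X : Type*} [TopologicalSpace X] [MeasurableSpace X]
    [OpensMeasurableSpace X] {μ : Measure X} {v w : X → ℝ} (hv : Integrable v μ)
    (hw : Continuous w) (hs : HasCompactSupport w) : Integrable (fun x => v x * w x) μ := by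
  obtain ⟨C, hC⟩ := hw.bounded_above_of_compact_support hs
  exact hv.mul_bdd (c := C)
    (hw.stronglyMeasurable_of_hasCompactSupport hs).aestronglyMeasurable (Eventually.of_forall hC)

lemma IsNonnegTest.setIntegral_mul {E : Type*} [NormedAddCommGroup E] [NormedSpace ℝ E]
    [MeasurableSpace E] {μ : Measure E} {O S : Set E} {c : E → ℝ} (hc : IsNonnegTest O c)
    (hOS : O ⊆ S) (f : E → ℝ) : ∫ x in S, f x * c x ∂μ = ∫ x, f x * c x ∂μ :=
  setIntegral_eq_integral_of_forall_compl_eq_zero fun x hx => by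
    rw [of_not_not fun hne => hx (hOS (hc.mem_of_ne_zero hne)), mul_zero]

variable {N : ℕ}

lemma integrableOn_posSq {Q : Set (Euc N × ℝ)} (hQ : Bornology.IsBounded Q) :
    IntegrableOn (fun p : Euc N × ℝ => posSq p.2) Q :=
  ((continuous_posSq.comp continuous_snd).continuousOn.integrableOn_compact
    hQ.isCompact_closure).mono_set subset_closure

variable {Ω E U : Set (Euc N)} {φ : Euc N → ℝ} {δ T : ℝ} {c v F : Euc N × ℝ → ℝ}
  {m : Measure (Euc N)}

lemma integral_localizedBackwardPotential_zero [IsFiniteMeasure m] (G : IsLocalizer Ω E U φ δ)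
    (hm : m Eᶜ = 0) (hc : IsNonnegTest (U ×ˢ Ioo 0 T) c) :
    ∫ y, localizedBackwardPotential φ c (y, 0) ∂m =
      ∫ p, heatPotential (initialMeasure m) p * c p := by
  have hcont := hc.contDiff.continuous
  obtain ⟨B, b, -, hB, hb⟩ := exists_bound_of_hasCompactSupport hcont hc.hasCompactSupport
  obtain ⟨-, -, hdual⟩ := integral_heatPotential_mul (ae_initialMeasure_nonneg_snd m)
    hcont.aestronglyMeasurable hB hb
  rw [hdual, integral_initialMeasure m
    (contDiff_backwardPotential hc.contDiff hc.hasCompactSupport).continuous]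
  refine integral_congr_ae ?_
  filter_upwards [compl_mem_ae_iff.2 hm] with y hy
  rw [localizedBackwardPotential_of_nonneg le_rfl,
    G.eq_one_of_mem (G.subset (notMem_compl_iff.1 hy)), one_mul]

lemma setIntegral_mul_localizedBackwardPotential (hΩ : IsOpen Ω)
    (hF : IntegrableOn (fun p => φ p.1 * F p) (QT Ω T)) (hF0 : ∀ p, 0 ≤ φ p.1 * F p)
    (hc : IsNonnegTest (U ×ˢ Ioo 0 T) c) :
    ∫ p in QT Ω T, F p * localizedBackwardPotential φ c p =
      ∫ p, heatPotential (sourceMeasure (QT Ω T) fun p => φ p.1 * F p) p * c p := by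
  have hcont := hc.contDiff.continuous
  have := isFiniteMeasure_sourceMeasure hF
  obtain ⟨B, b, -, hB, hb⟩ := exists_bound_of_hasCompactSupport hcont hc.hasCompactSupport
  obtain ⟨-, -, hdual⟩ := integral_heatPotential_mul
    (ae_sourceMeasure_nonneg_snd hΩ T fun p => φ p.1 * F p) hcont.aestronglyMeasurable hB hb
  rw [hdual, integral_sourceMeasure hF (Eventually.of_forall hF0)]
  refine setIntegral_congr_fun (measurableSet_QT hΩ T) fun p hp => ?_
  simp only [localizedBackwardPotential_of_nonneg hp.2.1.le]
  ring

lemma setIntegral_mul_neg_adjHeat_localized_le (G : IsLocalizer Ω E U φ δ) (hΩ : IsOpen Ω)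
    (hv : IntegrableOn v (QT Ω T)) (hc : IsNonnegTest (U ×ˢ Ioo 0 T) c) {A : ℝ}
    (hA : ∀ p : Euc N × ℝ, 0 < p.2 → |localizationError φ c p| ≤ A) :
    ∫ p in QT Ω T, v p * -adjHeat (localizedBackwardPotential φ c) p ≤
      (∫ p, v p * c p) + A * ∫ p in QT Ω T, |v p| := by
  have hη := isLocalTest_localizedBackwardPotential G hc
  have hvc := integrable_mul_of_hasCompactSupport hv hc.contDiff.continuous hc.hasCompactSupport
  rw [← hc.setIntegral_mul (G.prod_subset_QT T) v, ← integral_const_mul,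
    ← integral_add hvc (hv.abs.const_mul A)]
  refine setIntegral_mono_on (integrable_mul_of_hasCompactSupport hv hη.isC21.continuous_adjHeat.neg
    (hasCompactSupport_adjHeat hη.hasCompactSupport).neg)
    (hvc.add (hv.abs.const_mul A)) (measurableSet_QT hΩ T) fun p hp => ?_
  have herr := adjHeat_localizedBackwardPotential_add G hc hp.2.1
  calc v p * -adjHeat (localizedBackwardPotential φ c) p
      = v p * c p - v p * localizationError φ c p := by rw [← herr]; ring
    _ ≤ v p * c p + |v p * localizationError φ c p| := by
        linarith [neg_le_abs (v p * localizationError φ c p)]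
    _ ≤ v p * c p + A * |v p| := by
        rw [abs_mul, mul_comm A]
        gcongr
        exact hA p hp.2.1

/-- Testing the inequality for `v` with localized backward potentials transfers it, by duality, to
the heat potentials of the data; the localization error is of order `t₊²`. -/
lemma exists_heatPotential_sub_le [IsFiniteMeasure m] (G : IsLocalizer Ω E U φ δ)
    (hΩ : IsOpen Ω) (hT : 0 < T) (hm : m Eᶜ = 0) (hv : IntegrableOn v (QT Ω T))
    (hF : IntegrableOn (fun p => φ p.1 * F p) (QT Ω T)) (hF0 : ∀ p, 0 ≤ F p)
    (hsuper : ∀ η, IsLocalTest Ω T η → (∀ p, 0 ≤ η p) →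
      (∫ y, η (y, 0) ∂m) - (∫ p in QT Ω T, F p * η p) ≤ ∫ p in QT Ω T, v p * -adjHeat η p) :
    ∃ C, 0 ≤ C ∧ ∀ᵐ p ∂volume.restrict (U ×ˢ Ioo 0 T),
      heatPotential (initialMeasure m) p -
        heatPotential (sourceMeasure (QT Ω T) fun p => φ p.1 * F p) p - C * posSq p.2 ≤ v p := by
  obtain ⟨C, hC0, hC⟩ := exists_abs_localizationError_le G hT
  set κ := sourceMeasure (QT Ω T) fun p => φ p.1 * F p
  set A := C * ∫ p in QT Ω T, |v p|
  have := isFiniteMeasure_sourceMeasure hF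
  have hslab : U ×ˢ Ioo 0 T ⊆ timeBelow N T := fun p hp => hp.2.2
  have hv' : IntegrableOn v (U ×ˢ Ioo 0 T) := hv.mono_set (G.prod_subset_QT T)
  have hk : IntegrableOn (heatPotential (initialMeasure m)) (U ×ˢ Ioo 0 T) :=
    (integrableOn_heatPotential (ae_initialMeasure_nonneg_snd m) T).mono_set hslab
  have hκ : IntegrableOn (heatPotential κ) (U ×ˢ Ioo 0 T) :=
    (integrableOn_heatPotential (ae_sourceMeasure_nonneg_snd hΩ T _) T).mono_set hslab
  have hq : IntegrableOn (fun p : Euc N × ℝ => A * posSq p.2) (U ×ˢ Ioo 0 T) :=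
    (integrableOn_posSq (G.isBounded.prod (Metric.isBounded_Ioo 0 T))).const_mul A
  refine ⟨A, by positivity, ?_⟩
  suffices ∀ᵐ p ∂volume.restrict (U ×ˢ Ioo 0 T),
      0 ≤ v p - heatPotential (initialMeasure m) p + heatPotential κ p + A * posSq p.2 by
    filter_upwards [this] with p hp
    linarith
  refine ae_nonneg_of_forall_isNonnegTest (G.isOpen.prod isOpen_Ioo) (((hv'.sub hk).add hκ).add hq)
    fun c hc => ?_
  have hmul {f : Euc N × ℝ → ℝ} (hf : IntegrableOn f (U ×ˢ Ioo 0 T)) :=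
    integrable_mul_of_hasCompactSupport hf hc.contDiff.continuous hc.hasCompactSupport
  have htest := hsuper _ (isLocalTest_localizedBackwardPotential G hc)
    (localizedBackwardPotential_nonneg G.nonneg hc.nonneg)
  rw [integral_localizedBackwardPotential_zero G hm hc, setIntegral_mul_localizedBackwardPotential
    hΩ hF (fun p => mul_nonneg (G.nonneg _) (hF0 _)) hc] at htest
  have herr := setIntegral_mul_neg_adjHeat_localized_le G hΩ hv hc (hC c hc)
  have hvk : Integrable (fun p => v p * c p - heatPotential (initialMeasure m) p * c p)
      (volume.restrict (U ×ˢ Ioo 0 T)) := (hmul hv').sub (hmul hk)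
  have hvkκ : Integrable (fun p => v p * c p - heatPotential (initialMeasure m) p * c p +
      heatPotential κ p * c p) (volume.restrict (U ×ˢ Ioo 0 T)) := hvk.add (hmul hκ)
  simp only [add_mul, sub_mul]
  rw [integral_add hvkκ (hmul hq), integral_add hvk (hmul hκ), integral_sub (hmul hv') (hmul hk)]
  simp only [hc.setIntegral_mul subset_rfl, mul_assoc, integral_const_mul] at *
  linarith [mul_right_comm C (∫ r, posSq r.2 * c r) (∫ p in QT Ω T, |v p|)]

end LocalLowerBound

section DominatedFunctionals

lemma exists_linearMap_comp_eq_of_le_sublinear {V E : Type*} [AddCommGroup V] [Module ℝ V]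
    [AddCommGroup E] [Module ℝ E] (A : V →ₗ[ℝ] E) (S : V →ₗ[ℝ] ℝ) {P : E → ℝ}
    (hsmul : ∀ c : ℝ, 0 < c → ∀ x, P (c • x) = c * P x) (hadd : ∀ x y, P (x + y) ≤ P x + P y)
    (hS : ∀ v, S v ≤ P (A v)) :
    ∃ g : E →ₗ[ℝ] ℝ, (∀ v, g (A v) = S v) ∧ ∀ x, g x ≤ P x := by
  have hP0 : P 0 = 0 := by
    have := hsmul 2 two_pos 0
    rw [smul_zero] at this
    linarith
  have hker : S ∈ (LinearMap.ker A).dualAnnihilator := by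
    refine (Submodule.mem_dualAnnihilator S).2 fun v hv => le_antisymm ?_ ?_
    · simpa only [LinearMap.mem_ker.1 hv, hP0] using hS v
    · have := hS (-v)
      rw [map_neg, map_neg, LinearMap.mem_ker.1 hv, neg_zero, hP0] at this
      linarith
  rw [← LinearMap.range_dualMap_eq_dualAnnihilator_ker] at hker
  obtain ⟨g₀, rfl⟩ := hker
  obtain ⟨g, hg, hgP⟩ := exists_extension_of_le_sublinear
    ⟨LinearMap.range A, g₀.domRestrict (LinearMap.range A)⟩ P hsmul hadd
    (by rintro ⟨_, v, rfl⟩; exact hS v)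
  exact ⟨g, fun v => hg ⟨A v, v, rfl⟩, hgP⟩

variable {α : Type*} [MeasurableSpace α] {ν : Measure α}

lemma Lp_two_integrable [IsFiniteMeasure ν] (x : Lp ℝ 2 ν) : Integrable x ν :=
  (Lp.memLp x).integrable one_le_two

lemma integral_max_zero_smul (x : Lp ℝ 2 ν) {c : ℝ} (hc : 0 ≤ c) :
    ∫ a, max ((c • x) a) 0 ∂ν = c * ∫ a, max (x a) 0 ∂ν := by
  rw [← integral_const_mul]
  refine integral_congr_ae ?_
  filter_upwards [Lp.coeFn_smul c x] with a ha
  rw [ha, Pi.smul_apply, smul_eq_mul, mul_max_of_nonneg _ _ hc, mul_zero]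

lemma integral_max_zero_add_le [IsFiniteMeasure ν] (x y : Lp ℝ 2 ν) :
    ∫ a, max ((x + y) a) 0 ∂ν ≤ (∫ a, max (x a) 0 ∂ν) + ∫ a, max (y a) 0 ∂ν := by
  have hmax (z : Lp ℝ 2 ν) : Integrable (fun a => max (z a) 0) ν := (Lp_two_integrable z).pos_part
  rw [← integral_add (hmax x) (hmax y)]
  refine integral_mono_ae (hmax _) ((hmax x).add (hmax y)) ?_
  filter_upwards [Lp.coeFn_add x y] with a ha
  rw [ha, Pi.add_apply]
  exact max_le (add_le_add (le_max_left _ _) (le_max_left _ _))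
    (add_nonneg (le_max_right _ _) (le_max_right _ _))

lemma exists_integral_max_zero_le_norm (ν : Measure α) [IsFiniteMeasure ν] :
    ∃ C : ℝ, ∀ x : Lp ℝ 2 ν, ∫ a, max (x a) 0 ∂ν ≤ C * ‖x‖ := by
  refine ⟨(ν univ ^ (1 / (1 : ℝ≥0∞).toReal - 1 / (2 : ℝ≥0∞).toReal)).toReal, fun x => ?_⟩
  have hmeas := Lp.aestronglyMeasurable x
  have hint := Lp_two_integrable x
  have hle := eLpNorm_le_eLpNorm_mul_rpow_measure_univ (p := 1) (q := 2) one_le_two hmeas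
  rw [eLpNorm_one_eq_lintegral_enorm] at hle
  calc ∫ a, max (x a) 0 ∂ν
      ≤ ∫ a, ‖x a‖ ∂ν := integral_mono hint.pos_part hint.norm fun a =>
        max_le (Real.le_norm_self _) (norm_nonneg _)
    _ = (∫⁻ a, ‖x a‖ₑ ∂ν).toReal := integral_norm_eq_lintegral_enorm hmeas
    _ ≤ _ := ENNReal.toReal_mono (ENNReal.mul_ne_top (Lp.eLpNorm_ne_top x)
        (ENNReal.rpow_ne_top_of_nonneg (by norm_num) (measure_ne_top _ _))) hle
    _ = _ := by rw [ENNReal.toReal_mul, Lp.norm_def, mul_comm]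

lemma exists_toDual_of_le_integral_max_zero [IsFiniteMeasure ν] {g : Lp ℝ 2 ν →ₗ[ℝ] ℝ}
    (hg : ∀ x, g x ≤ ∫ a, max (x a) 0 ∂ν) :
    ∃ θ : Lp ℝ 2 ν, ∀ x, inner ℝ θ x = g x := by
  obtain ⟨C, hC⟩ := exists_integral_max_zero_le_norm ν
  have hbound (x : Lp ℝ 2 ν) : g x ≤ C * ‖x‖ := (hg x).trans (hC x)
  let L : StrongDual ℝ (Lp ℝ 2 ν) := g.mkContinuous C fun x =>
    abs_le.2 ⟨by have := hbound (-x); rw [map_neg, norm_neg] at this; linarith, hbound x⟩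
  exact ⟨(InnerProductSpace.toDual ℝ (Lp ℝ 2 ν)).symm L, fun x =>
    InnerProductSpace.toDual_symm_apply⟩

/-- The dominating functional vanishes on `-𝟙_t` and equals `ν t` on `𝟙_t`. -/
lemma ae_mem_Icc_of_inner_le [IsFiniteMeasure ν] {θ : Lp ℝ 2 ν}
    (hθ : ∀ x : Lp ℝ 2 ν, inner ℝ θ x ≤ ∫ a, max (x a) 0 ∂ν) : ∀ᵐ a ∂ν, θ a ∈ Icc 0 1 := by
  let e {t : Set α} (ht : MeasurableSet t) : Lp ℝ 2 ν :=
    indicatorConstLp 2 ht (measure_ne_top ν t) 1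
  have he {t : Set α} (ht : MeasurableSet t) : e ht =ᵐ[ν] t.indicator fun _ => 1 :=
    indicatorConstLp_coeFn
  have hset {t : Set α} (ht : MeasurableSet t) : ∫ a in t, θ a ∂ν = inner ℝ θ (e ht) := by
    rw [← L2.inner_indicatorConstLp_one ht (measure_ne_top ν t), real_inner_comm]
  have hnonneg : 0 ≤ᵐ[ν] θ := by
    refine ae_nonneg_of_forall_setIntegral_nonneg (Lp_two_integrable θ) fun t ht _ => ?_
    have hneg : ∫ a, max ((-e ht) a) 0 ∂ν = 0 := by
      refine integral_eq_zero_of_ae ?_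
      filter_upwards [Lp.coeFn_neg (e ht), he ht] with a ha hind
      rw [ha, Pi.neg_apply, hind]
      by_cases hat : a ∈ t <;> simp [hat]
    have := hθ (-e ht)
    rw [hneg, inner_neg_right] at this
    rw [hset ht]
    linarith
  have hle : θ ≤ᵐ[ν] fun _ => (1 : ℝ) := by
    refine ae_le_of_forall_setIntegral_le (Lp_two_integrable θ) (integrable_const 1)
      fun t ht _ => ?_
    rw [hset ht, ← integral_indicator ht]
    refine (hθ _).trans_eq (integral_congr_ae ?_)
    filter_upwards [he ht] with a hind
    rw [hind]
    by_cases hat : a ∈ t <;> simp [hat]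
  filter_upwards [hnonneg, hle] with a h₀ h₁ using ⟨h₀, h₁⟩

/-- Hahn–Banach in `L²`: the extension of `S` is represented by a function which the domination
forces to take values in `[0, 1]`. -/
lemma exists_density_of_le_integral_max_zero {V : Type*} [AddCommGroup V] [Module ℝ V]
    [IsFiniteMeasure ν] (a : V →ₗ[ℝ] (α → ℝ)) (ha : ∀ v, MemLp (a v) 2 ν) (S : V →ₗ[ℝ] ℝ)
    (hS : ∀ v, S v ≤ ∫ x, max (a v x) 0 ∂ν) :
    ∃ θ : α → ℝ, Measurable θ ∧ (∀ x, θ x ∈ Icc 0 1) ∧ ∀ v, S v = ∫ x, θ x * a v x ∂ν := by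
  let A : V →ₗ[ℝ] Lp ℝ 2 ν :=
    { toFun := fun v => (ha v).toLp (a v)
      map_add' := fun v w => by
        rw [← MemLp.toLp_add]
        exact MemLp.toLp_congr _ _ (by rw [map_add])
      map_smul' := fun c v => by
        rw [RingHom.id_apply, ← MemLp.toLp_const_smul]
        exact MemLp.toLp_congr _ _ (by rw [map_smul]) }
  have hA (v : V) : A v =ᵐ[ν] a v := MemLp.coeFn_toLp (ha v)
  obtain ⟨g, hgA, hg⟩ := exists_linearMap_comp_eq_of_le_sublinear A S
    (P := fun x : Lp ℝ 2 ν => ∫ y, max (x y) 0 ∂ν) (fun c hc x => integral_max_zero_smul x hc.le)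
    integral_max_zero_add_le fun v => (hS v).trans_eq <| integral_congr_ae <| by
      filter_upwards [hA v] with x hx
      rw [hx]
  obtain ⟨θ, hθ⟩ := exists_toDual_of_le_integral_max_zero hg
  have hIcc := ae_mem_Icc_of_inner_le fun x => (hθ x).trans_le (hg x)
  refine ⟨fun x => projIcc 0 1 zero_le_one (θ x), ?_, fun x => Subtype.coe_prop _, fun v => ?_⟩
  · exact measurable_subtype_coe.comp
      (continuous_projIcc.measurable.comp (Lp.stronglyMeasurable θ).measurable)
  · rw [← hgA, ← hθ, L2.inner_def]
    refine integral_congr_ae ?_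
    filter_upwards [hIcc, hA v] with x hx hAx
    rw [hAx, projIcc_of_mem zero_le_one hx]
    exact mul_comm _ _

end DominatedFunctionals

section SoftPositivePart

/-- A convex `C²` approximation of the positive part which vanishes on `(-∞, ε]`. -/
def softPosPart (ε s : ℝ) : ℝ := ∫ r in (0 : ℝ)..s, Real.smoothTransition (ε⁻¹ * r - 1)

variable {ε : ℝ}

lemma contDiff_softPosPart_slope (ε : ℝ) :
    ContDiff ℝ 1 fun s => Real.smoothTransition (ε⁻¹ * s - 1) :=
  Real.smoothTransition.contDiff.comp (by fun_prop)

lemma monotone_softPosPart_slope (hε : 0 < ε) :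
    Monotone fun s => Real.smoothTransition (ε⁻¹ * s - 1) := fun a b hab =>
  Real.smoothTransition.monotone (by gcongr)

lemma softPosPart_slope_of_le (hε : 0 < ε) {s : ℝ} (hs : s ≤ ε) :
    Real.smoothTransition (ε⁻¹ * s - 1) = 0 :=
  Real.smoothTransition.zero_of_nonpos (by
    rw [sub_nonpos, inv_mul_le_iff₀ hε, mul_one]
    exact hs)

lemma intervalIntegrable_softPosPart_slope (ε a b : ℝ) :
    IntervalIntegrable (fun s => Real.smoothTransition (ε⁻¹ * s - 1)) volume a b :=
  (contDiff_softPosPart_slope ε).continuous.intervalIntegrable a b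

lemma hasDerivAt_softPosPart (ε s : ℝ) :
    HasDerivAt (softPosPart ε) (Real.smoothTransition (ε⁻¹ * s - 1)) s :=
  intervalIntegral.integral_hasDerivAt_right (intervalIntegrable_softPosPart_slope ε 0 s)
    (contDiff_softPosPart_slope ε).continuous.stronglyMeasurable.stronglyMeasurableAtFilter
    (contDiff_softPosPart_slope ε).continuous.continuousAt

lemma softPosPart_of_le (hε : 0 < ε) {s : ℝ} (hs : s ≤ ε) : softPosPart ε s = 0 := by
  refine intervalIntegral.integral_zero_ae (Eventually.of_forall fun r hr =>
    softPosPart_slope_of_le hε (hr.2.trans (max_le hε.le hs)))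

lemma softPosPart_nonneg (hε : 0 < ε) (s : ℝ) : 0 ≤ softPosPart ε s := by
  rcases le_total 0 s with h | h
  · exact intervalIntegral.integral_nonneg h fun r _ => Real.smoothTransition.nonneg _
  · rw [softPosPart_of_le hε (h.trans hε.le)]

lemma sub_le_softPosPart (hε : 0 < ε) (s : ℝ) : s - 2 * ε ≤ softPosPart ε s := by
  rcases le_total s (2 * ε) with h | h
  · linarith [softPosPart_nonneg hε s]
  have hone : ∫ r in (2 * ε)..s, Real.smoothTransition (ε⁻¹ * r - 1) = s - 2 * ε := by
    rw [intervalIntegral.integral_congr (g := fun _ => (1 : ℝ)), intervalIntegral.integral_const,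
      smul_eq_mul, mul_one]
    intro r hr
    rw [uIcc_of_le h] at hr
    refine Real.smoothTransition.one_of_one_le ?_
    rw [le_sub_iff_add_le, le_inv_mul_iff₀ hε]
    linarith [hr.1]
  rw [softPosPart, ← intervalIntegral.integral_add_adjacent_intervals
    (intervalIntegrable_softPosPart_slope ε 0 (2 * ε))
    (intervalIntegrable_softPosPart_slope ε (2 * ε) s), hone]
  linarith [softPosPart_nonneg hε (2 * ε), softPosPart.eq_1 ε (2 * ε)]

lemma softPosPart_le_mul (hε : 0 < ε) (s : ℝ) :
    softPosPart ε s ≤ s * Real.smoothTransition (ε⁻¹ * s - 1) := by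
  rcases le_total 0 s with h | h
  · simpa [softPosPart] using intervalIntegral.integral_mono_on h
      (intervalIntegrable_softPosPart_slope ε 0 s)
      intervalIntegrable_const fun r hr => monotone_softPosPart_slope hε hr.2
  · have hs := h.trans hε.le
    rw [softPosPart_of_le hε hs, softPosPart_slope_of_le hε hs, mul_zero]

lemma hasDerivAt_softPosPart_slope (ε s : ℝ) :
    HasDerivAt (fun s => Real.smoothTransition (ε⁻¹ * s - 1))
      (deriv (fun s => Real.smoothTransition (ε⁻¹ * s - 1)) s) s :=
  ((contDiff_softPosPart_slope ε).differentiable one_ne_zero s).hasDerivAt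

variable {N : ℕ} {ζ : Euc N × ℝ → ℝ}

lemma IsC21.softPosPart (hζ : IsC21 ζ) (ε : ℝ) : IsC21 fun p => softPosPart ε (ζ p) :=
  hζ.comp (hasDerivAt_softPosPart ε) (hasDerivAt_softPosPart_slope ε)
    ((contDiff_softPosPart_slope ε).continuous_deriv le_rfl)

/-- Kato's inequality: composing with a convex function only increases `∂_t + Δ`. -/
lemma neg_adjHeat_softPosPart_add_le (hζ : IsC21 ζ) (hε : 0 < ε) {M : ℝ} (hM : 0 ≤ M) (p) :
    -adjHeat (fun p => softPosPart ε (ζ p)) p + M * softPosPart ε (ζ p) ≤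
      max (-adjHeat ζ p + M * ζ p) 0 := by
  rw [adjHeat_comp (hasDerivAt_softPosPart ε) (hasDerivAt_softPosPart_slope ε)
    ((contDiff_softPosPart_slope ε).continuous_deriv le_rfl) hζ]
  set θ := Real.smoothTransition (ε⁻¹ * ζ p - 1)
  have hconv : 0 ≤ deriv (fun s => Real.smoothTransition (ε⁻¹ * s - 1)) (ζ p) *
      ∑ i, spaceFDeriv ζ p (unitVec i) ^ 2 :=
    mul_nonneg (monotone_softPosPart_slope hε).deriv_nonneg
      (Finset.sum_nonneg fun i _ => sq_nonneg _)
  have hmul : M * softPosPart ε (ζ p) ≤ M * (ζ p * θ) := by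
    gcongr
    exact softPosPart_le_mul hε _
  have hθ : θ * (-adjHeat ζ p + M * ζ p) ≤ max (-adjHeat ζ p + M * ζ p) 0 := by
    rcases le_total 0 (-adjHeat ζ p + M * ζ p) with h | h
    · exact (mul_le_of_le_one_left h (Real.smoothTransition.le_one _)).trans (le_max_left _ _)
    · exact (mul_nonpos_of_nonneg_of_nonpos (Real.smoothTransition.nonneg _) h).trans
        (le_max_right _ _)
  linarith

end SoftPositivePart

section GlobalTests

variable {N : ℕ} {Ω : Set (Euc N)} {T : ℝ} {ζ ξ η : Euc N × ℝ → ℝ}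

/-- The uncurried form of `TestZero`: `ζ` is an admissible test function in `WeakSol`. -/
def IsGlobalTest (Ω : Set (Euc N)) (T : ℝ) (ζ : Euc N × ℝ → ℝ) : Prop :=
  TestZero Ω T fun x t => ζ (x, t)

lemma IsLocalTest.mem_of_ne_zero (hη : IsLocalTest Ω T η) {p : Euc N × ℝ} (hp : η p ≠ 0) :
    p ∈ Ω ×ˢ Iio T :=
  hη.tsupport_subset (subset_tsupport _ hp)

lemma IsLocalTest.isGlobalTest (hη : IsLocalTest Ω T η) (hΩ : IsOpen Ω) : IsGlobalTest Ω T η := by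
  refine ⟨hη.isC21, fun x hx t _ => by_contra fun hne => ?_, fun x _ => by_contra fun hne => ?_⟩
  · rw [hΩ.frontier_eq] at hx
    exact hx.2 (hη.mem_of_ne_zero hne).1
  · exact lt_irrefl T (hη.mem_of_ne_zero hne).2

namespace IsGlobalTest

lemma isC21 (hζ : IsGlobalTest Ω T ζ) : IsC21 ζ := hζ.1

lemma add (hζ : IsGlobalTest Ω T ζ) (hξ : IsGlobalTest Ω T ξ) : IsGlobalTest Ω T (ζ + ξ) :=
  ⟨hζ.isC21.add hξ.isC21, fun x hx t ht => by simp [hζ.2.1 x hx t ht, hξ.2.1 x hx t ht],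
    fun x hx => by simp [hζ.2.2 x hx, hξ.2.2 x hx]⟩

lemma smul (c : ℝ) (hζ : IsGlobalTest Ω T ζ) : IsGlobalTest Ω T (c • ζ) :=
  ⟨hζ.isC21.smul c, fun x hx t ht => by simp [hζ.2.1 x hx t ht],
    fun x hx => by simp [hζ.2.2 x hx]⟩

lemma zero : IsGlobalTest Ω T (0 : Euc N × ℝ → ℝ) :=
  ⟨isC21_of_contDiff contDiff_const, fun _ _ _ _ => rfl, fun _ _ => rfl⟩

lemma isCompact_setOf_le (hζ : IsGlobalTest Ω T ζ) (hΩb : Bornology.IsBounded Ω) (ε : ℝ) :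
    IsCompact ((closure Ω ×ˢ Icc 0 T) ∩ {p | ε ≤ ζ p}) :=
  (hΩb.isCompact_closure.prod isCompact_Icc).inter_right
    (isClosed_le continuous_const hζ.isC21.continuous)

lemma setOf_le_subset (hζ : IsGlobalTest Ω T ζ) (hΩ : IsOpen Ω) {ε : ℝ} (hε : 0 < ε) :
    (closure Ω ×ˢ Icc 0 T) ∩ {p | ε ≤ ζ p} ⊆ Ω ×ˢ Iio T := by
  rintro ⟨x, t⟩ ⟨⟨hx, ht⟩, hle⟩
  have hpos : 0 < ζ (x, t) := hε.trans_le hle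
  refine ⟨by_contra fun hxΩ => hpos.ne' (hζ.2.1 x ?_ t ht), ht.2.lt_of_ne ?_⟩
  · rw [hΩ.frontier_eq]
    exact ⟨hx, hxΩ⟩
  · rintro rfl
    exact hpos.ne' (hζ.2.2 x hx)

/-- Since `ζ` vanishes on the lateral and final boundary, its soft positive part is supported, up
to a cutoff, in a compact subset of `Ω × (-∞, T)`. -/
lemma exists_isLocalTest (hζ : IsGlobalTest Ω T ζ) (hΩ : IsOpen Ω) (hΩb : Bornology.IsBounded Ω)
    {M ε : ℝ} (hM : 0 ≤ M) (hε : 0 < ε) :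
    ∃ η, IsLocalTest Ω T η ∧ (∀ p, 0 ≤ η p) ∧ (∀ p ∈ Ω ×ˢ Ico 0 T, ζ p - 2 * ε ≤ η p) ∧
      ∀ p ∈ QT Ω T, -adjHeat η p + M * η p ≤ max (-adjHeat ζ p + M * ζ p) 0 := by
  obtain ⟨c, hc, hc0, hcK, hcs, hcΩ⟩ := exists_contDiff_eventually_eq_one
    (hζ.isCompact_setOf_le hΩb ε) (hΩ.prod isOpen_Iio) (hζ.setOf_le_subset hΩ hε)
  set σ : Euc N × ℝ → ℝ := fun p => softPosPart ε (ζ p)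
  have hcσ {p : Euc N × ℝ} (hp : p ∈ closure Ω ×ˢ Icc 0 T) : c * σ =ᶠ[𝓝 p] σ := by
    rcases le_or_gt ε (ζ p) with hle | hlt
    · filter_upwards [hcK p ⟨hp, hle⟩] with q hq
      rw [Pi.mul_apply, hq, Pi.one_apply, one_mul]
    · filter_upwards [hζ.isC21.continuous.continuousAt.eventually_lt continuousAt_const hlt]
        with q hq
      simp only [Pi.mul_apply, σ, softPosPart_of_le hε hq.le, mul_zero]
  refine ⟨c * σ, ⟨(isC21_of_contDiff (contDiff_infty.1 hc 2)).mul (hζ.isC21.softPosPart ε),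
    hcs.mul_right, (closure_mono (Function.support_mul_subset_left c σ)).trans hcΩ⟩,
    fun p => mul_nonneg (hc0 p) (softPosPart_nonneg hε _), fun p hp => ?_, fun p hp => ?_⟩
  · rw [(hcσ ⟨subset_closure hp.1, hp.2.1, hp.2.2.le⟩).eq_of_nhds]
    exact sub_le_softPosPart hε _
  · have heq := hcσ ⟨subset_closure hp.1, hp.2.1.le, hp.2.2.le⟩
    rw [heq.eq_of_nhds, adjHeat_congr heq]
    exact neg_adjHeat_softPosPart_add_le hζ.isC21 hε hM p

end IsGlobalTest

end GlobalTests

section LinearProblem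

lemma memLp_of_isBounded {X : Type*} [PseudoMetricSpace X] [ProperSpace X] [MeasurableSpace X]
    [OpensMeasurableSpace X] {μ : Measure X} [IsFiniteMeasure μ] {S : Set X}
    (hS : Bornology.IsBounded S) (hμ : μ Sᶜ = 0) {w : X → ℝ} (hw : Continuous w) (p : ℝ≥0∞) :
    MemLp w p μ := by
  obtain ⟨C, hC⟩ := hS.isCompact_closure.exists_bound_of_continuousOn hw.continuousOn
  refine MemLp.of_bound hw.aestronglyMeasurable C ?_
  filter_upwards [compl_mem_ae_iff.2 hμ] with x hx
    using hC x (subset_closure (notMem_compl_iff.1 hx))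

lemma integrableOn_mul_of_isBounded {X : Type*} [PseudoMetricSpace X] [ProperSpace X]
    [MeasurableSpace X] [OpensMeasurableSpace X] {μ : Measure X} {S : Set X}
    (hS : Bornology.IsBounded S) (hSm : MeasurableSet S) {v w : X → ℝ} (hv : IntegrableOn v S μ)
    (hw : Continuous w) : IntegrableOn (fun x => v x * w x) S μ := by
  obtain ⟨C, hC⟩ := hS.isCompact_closure.exists_bound_of_continuousOn hw.continuousOn
  refine Integrable.mul_bdd (c := C) hv hw.aestronglyMeasurable ?_
  filter_upwards [ae_restrict_mem hSm] with x hx using hC x (subset_closure hx)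

variable {N : ℕ} {Ω : Set (Euc N)} {T M : ℝ}

lemma isBounded_QT (hΩb : Bornology.IsBounded Ω) (T : ℝ) : Bornology.IsBounded (QT Ω T) :=
  hΩb.prod (Metric.isBounded_Ioo 0 T)

lemma sourceMeasure_compl {Q : Set (Euc N × ℝ)} (hQ : MeasurableSet Q) (f : Euc N × ℝ → ℝ) :
    sourceMeasure Q f Qᶜ = 0 :=
  withDensity_absolutelyContinuous _ _ (by rw [Measure.restrict_apply hQ.compl, compl_inter_self,
    measure_empty])

/-- The space of global test functions. -/
def globalTests (Ω : Set (Euc N)) (T : ℝ) : Submodule ℝ (Euc N × ℝ → ℝ) where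
  carrier := {ζ | IsGlobalTest Ω T ζ}
  add_mem' hζ hξ := hζ.add hξ
  zero_mem' := IsGlobalTest.zero
  smul_mem' c _ hζ := hζ.smul c

/-- The operator `-∂_t - Δ + M`, which is the formal adjoint of `∂_t - Δ + M`. -/
def adjointOperator (Ω : Set (Euc N)) (T M : ℝ) : globalTests Ω T →ₗ[ℝ] Euc N × ℝ → ℝ where
  toFun ζ p := -adjHeat ζ p + M * ζ.1 p
  map_add' ζ ξ := by
    funext p
    simp only [Submodule.coe_add, adjHeat_add ζ.2.isC21 ξ.2.isC21, Pi.add_apply]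
    ring
  map_smul' c ζ := by
    funext p
    simp only [Submodule.coe_smul, adjHeat_smul c ζ.2.isC21, Pi.smul_apply, smul_eq_mul,
      RingHom.id_apply]
    ring

lemma continuous_neg_adjHeat_add {η : Euc N × ℝ → ℝ} (hη : IsC21 η) (M : ℝ) :
    Continuous fun p => -adjHeat η p + M * η p :=
  hη.continuous_adjHeat.neg.add (hη.continuous.const_mul M)

variable {κ : Measure (Euc N × ℝ)} [IsFiniteMeasure κ] {d : Euc N × ℝ → ℝ}

lemma integrable_of_isC21 (hΩb : Bornology.IsBounded Ω) (hκ : κ (Ω ×ˢ Ico 0 T)ᶜ = 0)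
    {ζ : Euc N × ℝ → ℝ} (hζ : IsC21 ζ) : Integrable ζ κ :=
  memLp_one_iff_integrable.1
    (memLp_of_isBounded (hΩb.prod (Metric.isBounded_Ico 0 T)) hκ hζ.continuous 1)

lemma integral_le_setIntegral_mul_max_zero (hΩ : IsOpen Ω) (hΩb : Bornology.IsBounded Ω)
    (hM : 0 ≤ M) (hκ : κ (Ω ×ˢ Ico 0 T)ᶜ = 0) (hd : IntegrableOn d (QT Ω T))
    (hd0 : ∀ᵐ p ∂volume.restrict (QT Ω T), 0 ≤ d p)
    (hsuper : ∀ η, IsLocalTest Ω T η → (∀ p, 0 ≤ η p) →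
      ∫ p, η p ∂κ ≤ ∫ p in QT Ω T, d p * (-adjHeat η p + M * η p))
    {ζ : Euc N × ℝ → ℝ} (hζ : IsGlobalTest Ω T ζ) :
    ∫ p, ζ p ∂κ ≤ ∫ p in QT Ω T, d p * max (-adjHeat ζ p + M * ζ p) 0 := by
  have hQb := isBounded_QT hΩb T
  have hQm := measurableSet_QT hΩ T
  have happrox (ε : ℝ) (hε : 0 < ε) : ∫ p, ζ p ∂κ ≤
      (∫ p in QT Ω T, d p * max (-adjHeat ζ p + M * ζ p) 0) + 2 * ε * κ.real univ := by
    obtain ⟨η, hη, hη0, hζη, hle⟩ := hζ.exists_isLocalTest hΩ hΩb hM hε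
    have hηκ := integrable_of_isC21 hΩb hκ hη.isC21
    have hdata : ∫ p, ζ p ∂κ ≤ ∫ p, η p + 2 * ε ∂κ := by
      refine integral_mono_ae (integrable_of_isC21 hΩb hκ hζ.isC21)
        (hηκ.add (integrable_const _)) ?_
      filter_upwards [compl_mem_ae_iff.2 hκ] with p hp
      linarith [hζη p (notMem_compl_iff.1 hp)]
    rw [integral_add hηκ (integrable_const _), integral_const, smul_eq_mul] at hdata
    have hmono : ∫ p in QT Ω T, d p * (-adjHeat η p + M * η p) ≤
        ∫ p in QT Ω T, d p * max (-adjHeat ζ p + M * ζ p) 0 := by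
      refine integral_mono_ae
        (integrableOn_mul_of_isBounded hQb hQm hd (continuous_neg_adjHeat_add hη.isC21 M))
        (integrableOn_mul_of_isBounded hQb hQm hd
          ((continuous_neg_adjHeat_add hζ.isC21 M).max continuous_const)) ?_
      filter_upwards [hd0, ae_restrict_mem hQm] with p hp hpQ
        using mul_le_mul_of_nonneg_left (hle p hpQ) hp
    linarith [hsuper η hη hη0]
  have hlim : Tendsto (fun ε => (∫ p in QT Ω T, d p * max (-adjHeat ζ p + M * ζ p) 0) +
      2 * ε * κ.real univ) (𝓝[>] 0)
      (𝓝 ((∫ p in QT Ω T, d p * max (-adjHeat ζ p + M * ζ p) 0) + 2 * 0 * κ.real univ)) :=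
    ContinuousWithinAt.tendsto (f := fun ε => _ + 2 * ε * κ.real univ) (by fun_prop)
  rw [mul_zero, zero_mul, add_zero] at hlim
  exact ge_of_tendsto hlim (eventually_mem_nhdsWithin.mono happrox)

/-- If `d` is a local supersolution of `∂_t q - Δq + M q = κ`, then this problem, with zero boundary
data, has a solution between `0` and `d`. -/
lemma exists_linear_solution_le (hΩ : IsOpen Ω) (hΩb : Bornology.IsBounded Ω) (hM : 0 ≤ M)
    (hκ : κ (Ω ×ˢ Ico 0 T)ᶜ = 0) (hd : IntegrableOn d (QT Ω T))
    (hd0 : ∀ᵐ p ∂volume.restrict (QT Ω T), 0 ≤ d p)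
    (hsuper : ∀ η, IsLocalTest Ω T η → (∀ p, 0 ≤ η p) →
      ∫ p, η p ∂κ ≤ ∫ p in QT Ω T, d p * (-adjHeat η p + M * η p)) :
    ∃ q, IntegrableOn q (QT Ω T) ∧ (∀ᵐ p ∂volume.restrict (QT Ω T), 0 ≤ q p ∧ q p ≤ d p) ∧
      ∀ ζ, IsGlobalTest Ω T ζ →
        ∫ p in QT Ω T, q p * (-adjHeat ζ p + M * ζ p) = ∫ p, ζ p ∂κ := by
  have hQm := measurableSet_QT hΩ T
  have := isFiniteMeasure_sourceMeasure hd
  have hint (ζ : globalTests Ω T) : Integrable ζ.1 κ := integrable_of_isC21 hΩb hκ ζ.2.isC21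
  let S : globalTests Ω T →ₗ[ℝ] ℝ :=
    { toFun := fun ζ => ∫ p, ζ.1 p ∂κ
      map_add' := fun ζ ξ => integral_add (hint ζ) (hint ξ)
      map_smul' := fun c ζ => integral_const_mul c ζ.1 }
  obtain ⟨θ, hθm, hθ, hrep⟩ := exists_density_of_le_integral_max_zero
    (ν := sourceMeasure (QT Ω T) d) (adjointOperator Ω T M)
    (fun ζ => memLp_of_isBounded (isBounded_QT hΩb T) (sourceMeasure_compl hQm d)
      (continuous_neg_adjHeat_add ζ.2.isC21 M) 2) S
    (fun ζ => by
      rw [integral_sourceMeasure hd hd0]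
      exact integral_le_setIntegral_mul_max_zero hΩ hΩb hM hκ hd hd0 hsuper ζ.2)
  refine ⟨fun p => d p * θ p, ?_, ?_, fun ζ hζ => ?_⟩
  · refine Integrable.mul_bdd (c := 1) hd hθm.aestronglyMeasurable
      (Eventually.of_forall fun p => ?_)
    rw [Real.norm_eq_abs, abs_of_nonneg (hθ p).1]
    exact (hθ p).2
  · filter_upwards [hd0] with p hp
      using ⟨mul_nonneg hp (hθ p).1, mul_le_of_le_one_right hp (hθ p).2⟩
  · have hζθ := hrep ⟨ζ, hζ⟩
    rw [integral_sourceMeasure hd hd0] at hζθ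
    simp only [mul_assoc]
    exact hζθ.symm

end LinearProblem

section Correctors

variable {N : ℕ} {Ω : Set (Euc N)} {T : ℝ} {f f₁ f₂ b b₁ b₂ η : Euc N × ℝ → ℝ}

lemma QT_subset_timeBelow : QT Ω T ⊆ timeBelow N T := fun _ hp => hp.2.2

lemma initialMeasure_compl (hΩ : IsOpen Ω) (hT : 0 < T) {m : Measure (Euc N)} (hm : m Ωᶜ = 0) :
    initialMeasure m (Ω ×ˢ Ico 0 T)ᶜ = 0 := by
  refine compl_mem_ae_iff.1 ((ae_initialMeasure_iff ?_).2 ?_)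
  · exact (hΩ.measurableSet.prod measurableSet_Ico).compl.compl
  · filter_upwards [compl_mem_ae_iff.2 hm] with y hy
    simpa [hT] using hy

lemma sourceMeasure_compl_cylinder (hΩ : IsOpen Ω) (f : Euc N × ℝ → ℝ) :
    sourceMeasure (QT Ω T) f (Ω ×ˢ Ico 0 T)ᶜ = 0 :=
  measure_mono_null (compl_subset_compl.2 (prod_mono_right Ioo_subset_Ico_self))
    (sourceMeasure_compl (measurableSet_QT hΩ T) f)

lemma IsLocalTest.setIntegral_mul_neg_adjHeat (hη : IsLocalTest Ω T η)
    (hf : ∀ p : Euc N × ℝ, p.2 ≤ 0 → f p = 0) :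
    ∫ p in QT Ω T, f p * -adjHeat η p = -∫ p, f p * adjHeat η p := by
  rw [← integral_neg]
  simp only [mul_neg]
  refine setIntegral_eq_integral_of_forall_compl_eq_zero fun p hp => ?_
  rcases le_or_gt p.2 0 with ht | ht
  · rw [hf p ht, zero_mul, neg_zero]
  · have hpη : p ∉ tsupport η := fun hn =>
      hp ⟨(hη.tsupport_subset hn).1, ht, (hη.tsupport_subset hn).2⟩
    rw [adjHeat_eq_zero_of_notMem_tsupport hpη, mul_zero, neg_zero]

lemma IsLocalTest.setIntegral_initialPotential (hη : IsLocalTest Ω T η) (m : Measure (Euc N))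
    [IsFiniteMeasure m] :
    ∫ p in QT Ω T, heatPotential (initialMeasure m) p * -adjHeat η p = ∫ y, η (y, 0) ∂m := by
  have h0 := ae_initialMeasure_nonneg_snd m
  rw [hη.setIntegral_mul_neg_adjHeat fun p hp => heatPotential_of_nonpos h0 hp,
    (integral_heatPotential_mul_adjHeat h0 hη.isC21 hη.hasCompactSupport).2, neg_neg,
    integral_initialMeasure m hη.isC21.continuous]

lemma IsLocalTest.setIntegral_sourcePotential (hη : IsLocalTest Ω T η) (hΩ : IsOpen Ω)
    (hf : IntegrableOn f (QT Ω T)) (hf0 : ∀ p, 0 ≤ f p) :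
    ∫ p in QT Ω T, heatPotential (sourceMeasure (QT Ω T) f) p * -adjHeat η p =
      ∫ p in QT Ω T, f p * η p := by
  have := isFiniteMeasure_sourceMeasure hf
  have h0 := ae_sourceMeasure_nonneg_snd hΩ T f
  rw [hη.setIntegral_mul_neg_adjHeat fun p hp => heatPotential_of_nonpos h0 hp,
    (integral_heatPotential_mul_adjHeat h0 hη.isC21 hη.hasCompactSupport).2, neg_neg,
    integral_sourceMeasure hf (Eventually.of_forall hf0)]

lemma IsLocalTest.setIntegral_posSq_nonneg (hη : IsLocalTest Ω T η) (hη0 : ∀ p, 0 ≤ η p) :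
    0 ≤ ∫ p in QT Ω T, posSq p.2 * -adjHeat η p := by
  rw [hη.setIntegral_mul_neg_adjHeat (f := fun p => posSq p.2) fun p hp => posSq_of_nonpos hp,
    (hasParabolicDerivs_time hasDerivAt_posSq (by fun_prop)).integral_mul_adjHeat hη.isC21
      hη.hasCompactSupport, ← integral_neg]
  refine integral_nonneg fun p => ?_
  simp only [_root_.zero_apply, Finset.sum_const_zero, add_zero, Pi.zero_apply]
  linarith [mul_nonneg (le_max_right p.2 0) (hη0 p)]

/-- `b ≥ 0` is a supersolution of `∂ₜb - Δb = f` in `Q_T` whose initial data vanish in the strong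
sense that the integral of `b` over `Ω × (0, ε)` is `o(ε)`. -/
structure IsCorrector (Ω : Set (Euc N)) (T : ℝ) (f b : Euc N × ℝ → ℝ) : Prop where
  integrableOn_source : IntegrableOn f (QT Ω T)
  integrableOn : IntegrableOn b (QT Ω T)
  nonneg : ∀ p, 0 ≤ b p
  le_integral : ∀ η, IsLocalTest Ω T η → (∀ p, 0 ≤ η p) →
    ∫ p in QT Ω T, f p * η p ≤ ∫ p in QT Ω T, b p * -adjHeat η p
  isLittleO : (fun ε => ∫ p in QT Ω T ∩ timeBelow N ε, b p) =o[𝓝[>] 0] fun ε : ℝ => ε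

lemma IsCorrector.add (hΩ : IsOpen Ω) (hΩb : Bornology.IsBounded Ω)
    (h₁ : IsCorrector Ω T f₁ b₁) (h₂ : IsCorrector Ω T f₂ b₂) :
    IsCorrector Ω T (fun p => f₁ p + f₂ p) fun p => b₁ p + b₂ p where
  integrableOn_source := h₁.integrableOn_source.add h₂.integrableOn_source
  integrableOn := h₁.integrableOn.add h₂.integrableOn
  nonneg p := add_nonneg (h₁.nonneg p) (h₂.nonneg p)
  le_integral η hη hη0 := by
    have hmul {v w : Euc N × ℝ → ℝ} (hv : IntegrableOn v (QT Ω T)) (hw : Continuous w) :=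
      integrableOn_mul_of_isBounded (isBounded_QT hΩb T) (measurableSet_QT hΩ T) hv hw
    have hη' := hη.isC21.continuous
    have hadj : Continuous fun p => -adjHeat η p := hη.isC21.continuous_adjHeat.neg
    simp only [add_mul]
    rw [integral_add (hmul h₁.integrableOn_source hη') (hmul h₂.integrableOn_source hη'),
      integral_add (hmul h₁.integrableOn hadj) (hmul h₂.integrableOn hadj)]
    exact add_le_add (h₁.le_integral η hη hη0) (h₂.le_integral η hη hη0)
  isLittleO := by
    refine (h₁.isLittleO.add h₂.isLittleO).congr_left fun ε => ?_
    rw [integral_add (h₁.integrableOn.mono_set inter_subset_left)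
      (h₂.integrableOn.mono_set inter_subset_left)]

lemma tendsto_sourceMeasure_timeBelow (hΩ : IsOpen Ω) (hf : IntegrableOn f (QT Ω T)) :
    Tendsto (fun ε => (sourceMeasure (QT Ω T) f).real (timeBelow N ε)) (𝓝[>] 0) (𝓝 0) := by
  have := isFiniteMeasure_sourceMeasure hf
  have hlim := tendsto_measure_biInter_gt (μ := sourceMeasure (QT Ω T) f) (a := (0 : ℝ))
    (s := timeBelow N) (fun ε _ => (measurableSet_timeBelow N ε).nullMeasurableSet)
    (fun i j _ hij p hp => lt_of_lt_of_le hp hij) ⟨1, one_pos, measure_ne_top _ _⟩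
  have hnull : sourceMeasure (QT Ω T) f (⋂ ε > (0 : ℝ), timeBelow N ε) = 0 := by
    refine measure_mono_null ?_ (sourceMeasure_compl (measurableSet_QT hΩ T) f)
    exact fun p hp hpQ => lt_irrefl p.2 (mem_iInter₂.1 hp p.2 hpQ.2.1)
  rw [hnull] at hlim
  exact (ENNReal.tendsto_toReal ENNReal.zero_ne_top).comp hlim

lemma isCorrector_heatPotential (hΩ : IsOpen Ω) (hf : IntegrableOn f (QT Ω T))
    (hf0 : ∀ p, 0 ≤ f p) : IsCorrector Ω T f (heatPotential (sourceMeasure (QT Ω T) f)) := by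
  have := isFiniteMeasure_sourceMeasure hf
  have h0 := ae_sourceMeasure_nonneg_snd hΩ T f
  have hnonneg := heatPotential_nonneg (sourceMeasure (QT Ω T) f)
  refine ⟨hf, (integrableOn_heatPotential h0 T).mono_set QT_subset_timeBelow, hnonneg,
    fun η hη _ => (hη.setIntegral_sourcePotential hΩ hf hf0).ge, ?_⟩
  have hsmall : (fun ε => (sourceMeasure (QT Ω T) f).real (timeBelow N ε) * ε)
      =o[𝓝[>] 0] fun ε : ℝ => 1 * ε :=
    ((Asymptotics.isLittleO_one_iff ℝ).2 (tendsto_sourceMeasure_timeBelow hΩ hf)).mul_isBigO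
      (Asymptotics.isBigO_refl _ _)
  simp only [one_mul] at hsmall
  refine (Asymptotics.IsBigO.of_bound' ?_).trans_isLittleO hsmall
  refine Eventually.of_forall fun ε => ?_
  rw [Real.norm_of_nonneg (integral_nonneg hnonneg)]
  refine le_trans ?_ (le_abs_self _)
  calc ∫ p in QT Ω T ∩ timeBelow N ε, heatPotential (sourceMeasure (QT Ω T) f) p
      ≤ ∫ p in timeBelow N ε, heatPotential (sourceMeasure (QT Ω T) f) p :=
        setIntegral_mono_set (integrableOn_heatPotential h0 ε) (Eventually.of_forall hnonneg)
          inter_subset_right.eventuallyLE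
    _ ≤ ε * (sourceMeasure (QT Ω T) f).real (timeBelow N ε) :=
        setIntegral_heatPotential_timeBelow_le h0 ε
    _ = (sourceMeasure (QT Ω T) f).real (timeBelow N ε) * ε := mul_comm _ _

lemma setIntegral_posSq_le (hΩ : IsOpen Ω) (hΩb : Bornology.IsBounded Ω) {ε : ℝ} (hε : 0 < ε) :
    ∫ p in QT Ω T ∩ timeBelow N ε, posSq p.2 ≤ volume.real (QT Ω T) * ε ^ 2 := by
  have hvol : volume (QT Ω T) ≠ ⊤ := (isBounded_QT hΩb T).measure_lt_top.ne
  have hvol' : volume (QT Ω T ∩ timeBelow N ε) ≠ ⊤ :=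
    measure_ne_top_of_subset inter_subset_left hvol
  calc ∫ p in QT Ω T ∩ timeBelow N ε, posSq p.2
      ≤ ∫ _ in QT Ω T ∩ timeBelow N ε, ε ^ 2 := by
        refine setIntegral_mono_on ((integrableOn_posSq (isBounded_QT hΩb T)).mono_set
          inter_subset_left) (integrableOn_const hvol')
          ((measurableSet_QT hΩ T).inter (measurableSet_timeBelow N ε)) fun p hp => ?_
        rw [← posSq_of_nonneg hε.le]
        exact posSq_mono (le_of_lt hp.2)
    _ = volume.real (QT Ω T ∩ timeBelow N ε) * ε ^ 2 := by rw [setIntegral_const, smul_eq_mul]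
    _ ≤ volume.real (QT Ω T) * ε ^ 2 := by
        have := measureReal_mono (inter_subset_left (t := timeBelow N ε)) hvol
        gcongr

lemma isCorrector_posSq (hΩ : IsOpen Ω) (hΩb : Bornology.IsBounded Ω) {C : ℝ} (hC : 0 ≤ C) :
    IsCorrector Ω T (fun _ => 0) fun p => C * posSq p.2 where
  integrableOn_source := integrableOn_zero
  integrableOn := (integrableOn_posSq (isBounded_QT hΩb T)).const_mul C
  nonneg p := mul_nonneg hC (posSq_nonneg p.2)
  le_integral η hη hη0 := by
    simp only [zero_mul, integral_zero, mul_assoc, integral_const_mul]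
    exact mul_nonneg hC (hη.setIntegral_posSq_nonneg hη0)
  isLittleO := by
    simp only [integral_const_mul]
    refine Asymptotics.IsLittleO.const_mul_left ?_ C
    refine Asymptotics.IsBigO.trans_isLittleO (g := fun ε : ℝ => ε ^ 2)
      (.of_bound (volume.real (QT Ω T)) ?_)
      ((Asymptotics.isLittleO_pow_id one_lt_two).mono nhdsWithin_le_nhds)
    filter_upwards [self_mem_nhdsWithin] with ε hε
    rw [Real.norm_of_nonneg (integral_nonneg fun p : Euc N × ℝ => posSq_nonneg p.2),
      Real.norm_of_nonneg (sq_nonneg ε)]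
    exact setIntegral_posSq_le hΩ hΩb hε

lemma IsCorrector.exists_setIntegral_le (h : IsCorrector Ω T f b) (hT : 0 < T) {e : ℝ}
    (he : 0 < e) :
    ∃ ε, 0 < ε ∧ ε ≤ 1 ∧ ε ≤ T ∧ ∫ p in QT Ω T ∩ timeBelow N ε, b p ≤ e * ε := by
  have hev := ((h.isLittleO.bound he).and self_mem_nhdsWithin).and
    (mem_nhdsWithin_of_mem_nhds ((gt_mem_nhds one_pos).and (gt_mem_nhds hT)))
  obtain ⟨ε, ⟨hle, hε⟩, h1, hεT⟩ := hev.exists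
  refine ⟨ε, hε, h1.le, hεT.le, (le_abs_self _).trans ?_⟩
  rwa [Real.norm_eq_abs, Real.norm_of_nonneg (le_of_lt hε)] at hle

end Correctors

section Barrier

variable {N : ℕ} {Ω E U K : Set (Euc N)} {T δ : ℝ} {g : ℝ → ℝ} {φ : Euc N → ℝ}
  {m μ : Measure (Euc N)} {f u η : Euc N × ℝ → ℝ}

lemma exists_pos_le_rho (hΩ : IsOpen Ω) (hne : Ωᶜ.Nonempty) (hK : IsCompact K) (hKΩ : K ⊆ Ω) :
    ∃ c, 0 < c ∧ ∀ x ∈ K, c ≤ rho Ω x := by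
  rcases K.eq_empty_or_nonempty with rfl | hK0
  · exact ⟨1, one_pos, by simp⟩
  obtain ⟨x, hx, hmin⟩ := hK.exists_isMinOn hK0 (Metric.continuous_infDist_pt Ωᶜ).continuousOn
  refine ⟨rho Ω x, ?_, fun y hy => hmin hy⟩
  exact (hΩ.isClosed_compl.notMem_iff_infDist_pos hne).1 (by simpa using hKΩ hx)

lemma integrableOn_mul_of_mul_rho (hΩ : IsOpen Ω) (hne : Ωᶜ.Nonempty) (hK : IsCompact K)
    (hKΩ : K ⊆ Ω) (hf : IntegrableOn (fun p => f p * rho Ω p.1) (QT Ω T))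
    {w : Euc N × ℝ → ℝ} (hw : Continuous w) {C : ℝ} (hC : ∀ p, |w p| ≤ C)
    (hwK : ∀ p, p.1 ∉ K → w p = 0) : IntegrableOn (fun p => f p * w p) (QT Ω T) := by
  obtain ⟨c, hc, hcρ⟩ := exists_pos_le_rho hΩ hne hK hKΩ
  have hρ : Continuous fun p : Euc N × ℝ => rho Ω p.1 :=
    (Metric.continuous_infDist_pt Ωᶜ).comp continuous_fst
  have hC0 : 0 ≤ C := (abs_nonneg _).trans (hC 0)
  have hbound : ∀ p : Euc N × ℝ, ‖w p / rho Ω p.1‖ ≤ C / c := by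
    intro p
    by_cases hp : p.1 ∈ K
    · rw [norm_div, Real.norm_eq_abs, Real.norm_eq_abs, abs_of_pos (hc.trans_le (hcρ _ hp))]
      exact div_le_div₀ hC0 (hC p) hc (hcρ _ hp)
    · rw [hwK p hp, zero_div, norm_zero]
      positivity
  have hquot := Integrable.mul_bdd (c := C / c) hf (g := fun p => w p / rho Ω p.1)
    (hw.measurable.div hρ.measurable).aestronglyMeasurable (Eventually.of_forall hbound)
  refine hquot.congr (Eventually.of_forall fun p => ?_)
  by_cases hp : p.1 ∈ K
  · have hρp : rho Ω p.1 ≠ 0 := (hc.trans_le (hcρ _ hp)).ne'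
    simp only
    field_simp
  · simp [hwK p hp]

lemma IsLocalTest.isCompact_image_fst (hη : IsLocalTest Ω T η) :
    IsCompact (Prod.fst '' tsupport η) :=
  IsCompact.image hη.hasCompactSupport continuous_fst

lemma IsLocalTest.image_fst_subset (hη : IsLocalTest Ω T η) : Prod.fst '' tsupport η ⊆ Ω :=
  image_subset_iff.2 fun _ hp => (hη.tsupport_subset hp).1

lemma IsLocalTest.integrableOn_mul_of_mul_rho (hη : IsLocalTest Ω T η) (hΩ : IsOpen Ω)
    (hne : Ωᶜ.Nonempty) (hf : IntegrableOn (fun p => f p * rho Ω p.1) (QT Ω T)) :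
    IntegrableOn (fun p => f p * η p) (QT Ω T) := by
  have hcont := hη.isC21.continuous
  obtain ⟨C, -, -, hC, -⟩ := exists_bound_of_hasCompactSupport hcont hη.hasCompactSupport
  refine _root_.integrableOn_mul_of_mul_rho hΩ hne hη.isCompact_image_fst hη.image_fst_subset hf
    hcont hC fun p hp => ?_
  exact image_eq_zero_of_notMem_tsupport fun hn => hp (mem_image_of_mem _ hn)

lemma IsLocalTest.integrable_initial (hη : IsLocalTest Ω T η)
    (hμ : ∀ K ⊆ Ω, IsCompact K → μ K < ⊤) : Integrable (fun y => η (y, 0)) μ := by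
  have hcont : Continuous fun y : Euc N => η (y, 0) :=
    hη.isC21.continuous.comp (by fun_prop)
  refine (integrableOn_iff_integrable_of_support_subset (s := Prod.fst '' tsupport η) ?_).1 ?_
  · exact fun y hy => ⟨(y, 0), subset_tsupport _ hy, rfl⟩
  · obtain ⟨C, -, -, hC, -⟩ :=
      exists_bound_of_hasCompactSupport hη.isC21.continuous hη.hasCompactSupport
    have hfin := hμ _ hη.image_fst_subset hη.isCompact_image_fst
    exact Measure.integrableOn_of_bounded hfin.ne hcont.aestronglyMeasurable
      (Eventually.of_forall fun y => hC (y, 0))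

lemma WeakSol.integral_sub_le (hΩ : IsOpen Ω) (hne : Ωᶜ.Nonempty) (hu : WeakSol Ω T g μ u)
    (hμ : ∀ K ⊆ Ω, IsCompact K → μ K < ⊤) (hmμ : m ≤ μ) (hη : IsLocalTest Ω T η)
    (hη0 : ∀ p, 0 ≤ η p) :
    (∫ y, η (y, 0) ∂m) - (∫ p in QT Ω T, g (u p) * η p) ≤
      ∫ p in QT Ω T, u p * -adjHeat η p := by
  obtain ⟨C, -, -, hC, -⟩ := exists_bound_of_hasCompactSupport hη.isC21.continuous_adjHeat
    (hasCompactSupport_adjHeat hη.hasCompactSupport)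
  have hadj : IntegrableOn (fun p => u p * -adjHeat η p) (QT Ω T) :=
    Integrable.mul_bdd (c := C) hu.1 hη.isC21.continuous_adjHeat.neg.aestronglyMeasurable
      (Eventually.of_forall fun p => by simpa using hC p)
  have habs := hη.integrableOn_mul_of_mul_rho hΩ hne hu.2.1
  have hweak : (∫ p in QT Ω T, u p * -adjHeat η p) + ∫ p in QT Ω T, g (u p) * η p =
      ∫ y, η (y, 0) ∂μ := by
    rw [← integral_add hadj habs, ← hu.2.2 (fun x t => η (x, t)) (hη.isGlobalTest hΩ)]
    refine integral_congr_ae (Eventually.of_forall fun p => ?_)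
    simp only [adjHeat, heatAdj]
    ring
  have hmono := integral_mono_measure hmμ (Eventually.of_forall fun y => hη0 (y, 0))
    (hη.integrable_initial hμ)
  linarith

lemma GoodG.nonneg (hg : GoodG g) (r : ℝ) : 0 ≤ g r := by
  rcases le_total r 0 with h | h
  · rw [hg.2.2 r h]
  · rw [← hg.2.2 0 le_rfl]
    exact hg.2.1 h

lemma WeakSol.integrableOn_localized (G : IsLocalizer Ω E U φ δ) (hΩ : IsOpen Ω)
    (hne : Ωᶜ.Nonempty) (hu : WeakSol Ω T g μ u) :
    IntegrableOn (fun p => φ p.1 * g (u p)) (QT Ω T) := by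
  have h := _root_.integrableOn_mul_of_mul_rho (w := fun p : Euc N × ℝ => φ p.1) (C := 1) hΩ hne
    G.hasCompactSupport G.tsupport_subset hu.2.1 (G.contDiff.continuous.comp continuous_fst)
    (fun p => by rw [abs_of_nonneg (G.nonneg _)]; exact G.le_one _)
    fun p hp => image_eq_zero_of_notMem_tsupport hp
  simpa only [mul_comm] using h

lemma IsLocalizer.exists_initialPotential_le_posSq (G : IsLocalizer Ω E U φ δ) (hE : IsClosed E)
    (hT : 0 < T) [IsFiniteMeasure m] (hm : m Eᶜ = 0) :
    ∃ C, 0 ≤ C ∧ ∀ p : Euc N × ℝ, p.1 ∉ U → p.2 ≤ T →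
      heatPotential (initialMeasure m) p ≤ C * posSq p.2 := by
  obtain ⟨C, hC0, hC⟩ := exists_heatKernel_le_posSq N G.pos hT
  have hconc : ∀ᵐ r ∂initialMeasure m, r.1 ∈ E ∧ r.2 = 0 := by
    refine (ae_initialMeasure_iff ?_).2 ?_
    · exact (hE.measurableSet.preimage measurable_fst).inter
        (measurableSet_eq_fun measurable_snd measurable_const)
    · filter_upwards [compl_mem_ae_iff.2 hm] with y hy using ⟨notMem_compl_iff.1 hy, rfl⟩
  refine ⟨C * (initialMeasure m).real univ, by positivity, fun p hp hpT => ?_⟩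
  calc heatPotential (initialMeasure m) p
      ≤ ∫ _, C * posSq p.2 ∂initialMeasure m := by
        refine integral_mono_of_nonneg (Eventually.of_forall fun r => heatKernel_nonneg _)
          (integrable_const _) ?_
        filter_upwards [hconc] with r ⟨hrE, hr0⟩
        simpa [hr0] using hC (p - r) (G.le_norm_sub _ hp _ hrE) (by simpa [hr0] using hpT)
    _ = C * (initialMeasure m).real univ * posSq p.2 := by
        rw [integral_const, smul_eq_mul]
        ring

lemma exists_initialPotential_le (m : Measure (Euc N)) [IsFiniteMeasure m] {τ : ℝ} (hτ : 0 < τ) :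
    ∃ C, ∀ p : Euc N × ℝ, τ ≤ p.2 → heatPotential (initialMeasure m) p ≤ C := by
  refine ⟨∫ _, (4 * Real.pi * τ) ^ (-(N : ℝ) / 2) ∂initialMeasure m, fun p hp => ?_⟩
  have hzero : ∀ᵐ r ∂initialMeasure m, r.2 = 0 :=
    (ae_initialMeasure_iff (measurableSet_eq_fun measurable_snd measurable_const)).2
      (Eventually.of_forall fun _ => rfl)
  refine integral_mono_of_nonneg (Eventually.of_forall fun r => heatKernel_nonneg _)
    (integrable_const _) ?_
  filter_upwards [hzero] with r hr
  exact heatKernel_le hτ _ (by simpa [hr] using hp)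

lemma IsLocalizer.ae_of_ae_of_notMem (G : IsLocalizer Ω E U φ δ) (hΩ : IsOpen Ω)
    {P : Euc N × ℝ → Prop} (hU : ∀ᵐ p ∂volume.restrict (U ×ˢ Ioo 0 T), P p)
    (hUc : ∀ p ∈ QT Ω T, p.1 ∉ U → P p) : ∀ᵐ p ∂volume.restrict (QT Ω T), P p := by
  rw [ae_restrict_iff' (G.isOpen.measurableSet.prod measurableSet_Ioo)] at hU
  rw [ae_restrict_iff' (measurableSet_QT hΩ T)]
  filter_upwards [hU] with p hp hpQ
  by_cases hpU : p.1 ∈ U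
  · exact hp ⟨hpU, hpQ.2⟩
  · exact hUc p hpQ hpU

lemma integrableOn_initialPotential (m : Measure (Euc N)) [IsFiniteMeasure m] :
    IntegrableOn (heatPotential (initialMeasure m)) (QT Ω T) :=
  (integrableOn_heatPotential (ae_initialMeasure_nonneg_snd m) T).mono_set QT_subset_timeBelow

/-- `y` is the weak solution of the heat equation in `Q_T` with initial datum `m` and zero lateral
data. -/
def IsHeatSol (Ω : Set (Euc N)) (T : ℝ) (m : Measure (Euc N)) (y : Euc N × ℝ → ℝ) : Prop :=
  IntegrableOn y (QT Ω T) ∧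
    ∀ ζ, IsGlobalTest Ω T ζ → ∫ p in QT Ω T, y p * -adjHeat ζ p = ∫ x, ζ (x, 0) ∂m

lemma exists_isHeatSol_le (hΩ : IsOpen Ω) (hΩb : Bornology.IsBounded Ω) (hT : 0 < T)
    [IsFiniteMeasure m] (hm : m Ωᶜ = 0) :
    ∃ y, IsHeatSol Ω T m y ∧
      ∀ᵐ p ∂volume.restrict (QT Ω T), 0 ≤ y p ∧ y p ≤ heatPotential (initialMeasure m) p := by
  obtain ⟨y, hy, hle, hrep⟩ := exists_linear_solution_le (M := 0) hΩ hΩb le_rfl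
    (initialMeasure_compl hΩ hT hm) (integrableOn_initialPotential m)
    (Eventually.of_forall (heatPotential_nonneg _)) fun η hη _ => by
      simp only [zero_mul, add_zero]
      rw [hη.setIntegral_initialPotential m, integral_initialMeasure m hη.isC21.continuous]
  refine ⟨y, ⟨hy, fun ζ hζ => ?_⟩, hle⟩
  simpa only [zero_mul, add_zero, integral_initialMeasure m hζ.isC21.continuous] using hrep ζ hζ

lemma IsHeatSol.exists_heatPotential_sub_le {y : Euc N × ℝ → ℝ} (hy : IsHeatSol Ω T m y)
    (G : IsLocalizer Ω E U φ δ) (hΩ : IsOpen Ω) (hT : 0 < T) [IsFiniteMeasure m] (hm : m Eᶜ = 0) :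
    ∃ C, 0 ≤ C ∧ ∀ᵐ p ∂volume.restrict (U ×ˢ Ioo 0 T),
      heatPotential (initialMeasure m) p - C * posSq p.2 ≤ y p := by
  obtain ⟨C, hC, hle⟩ := _root_.exists_heatPotential_sub_le (F := fun _ => 0) G hΩ hT hm hy.1
    (by simp) (fun _ => le_rfl) fun η hη _ => by
      simp only [zero_mul, integral_zero, sub_zero]
      exact (hy.2 η (hη.isGlobalTest hΩ)).ge
  have hzero : heatPotential (sourceMeasure (QT Ω T) fun p => φ p.1 * 0) = 0 := by
    ext p
    simp [heatPotential, sourceMeasure]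
  simp only [hzero, Pi.zero_apply, sub_zero] at hle
  exact ⟨C, hC, hle⟩

/-- Comparison functions for the initial datum `m`: a heat potential `k`, the solution `y` of the
linear Dirichlet problem, and a corrector `b` whose source `f` absorbs `g (k - b)`, so that `k - b`
is a subsolution of the semilinear equation. The potential may be singular only at `U × {0}`. -/
structure IsBarrier (Ω : Set (Euc N)) (T : ℝ) (g : ℝ → ℝ) (m : Measure (Euc N))
    (U : Set (Euc N)) (k b f y : Euc N × ℝ → ℝ) : Prop where
  integrableOn_potential : IntegrableOn k (QT Ω T)
  setIntegral_potential : ∀ η, IsLocalTest Ω T η →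
    ∫ p in QT Ω T, k p * -adjHeat η p = ∫ x, η (x, 0) ∂m
  exists_potential_le : ∀ τ, 0 < τ → ∃ C, ∀ p ∈ QT Ω T, (p.1 ∉ U ∨ τ ≤ p.2) → k p ≤ C
  isCorrector : IsCorrector Ω T f b
  absorption_le : ∀ᵐ p ∂volume.restrict (QT Ω T), g (k p - b p) ≤ f p
  isHeatSol : IsHeatSol Ω T m y
  heatSol_bounds : ∀ᵐ p ∂volume.restrict (QT Ω T), 0 ≤ y p ∧ k p - b p ≤ y p ∧ y p ≤ k p

lemma WeakSol.exists_heatPotential_sub_le (hu : WeakSol Ω T g μ u) (G : IsLocalizer Ω E U φ δ)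
    (hΩ : IsOpen Ω) (hne : Ωᶜ.Nonempty) (hT : 0 < T) (hg : GoodG g)
    (hμ : ∀ K ⊆ Ω, IsCompact K → μ K < ⊤) [IsFiniteMeasure m] (hm : m Eᶜ = 0) (hmμ : m ≤ μ) :
    ∃ C, 0 ≤ C ∧ ∀ᵐ p ∂volume.restrict (U ×ˢ Ioo 0 T),
      heatPotential (initialMeasure m) p -
        heatPotential (sourceMeasure (QT Ω T) fun p => φ p.1 * g (u p)) p - C * posSq p.2 ≤ u p :=
  _root_.exists_heatPotential_sub_le (F := fun p => g (u p)) G hΩ hT hm hu.1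
    (hu.integrableOn_localized G hΩ hne) (fun _ => hg.nonneg _)
    fun _ hη hη0 => hu.integral_sub_le hΩ hne hμ hmμ hη hη0

lemma WeakSol.exists_isCorrector (hu : WeakSol Ω T g μ u) (G : IsLocalizer Ω E U φ δ)
    (hΩ : IsOpen Ω) (hΩb : Bornology.IsBounded Ω) (hne : Ωᶜ.Nonempty) (hE : IsClosed E)
    (hT : 0 < T) (hg : GoodG g) (hμ : ∀ K ⊆ Ω, IsCompact K → μ K < ⊤) [IsFiniteMeasure m]
    (hm : m Eᶜ = 0) (hmμ : m ≤ μ) {C₀ : ℝ} (hC₀ : 0 ≤ C₀) :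
    ∃ f b, IsCorrector Ω T f b ∧ (∀ p : Euc N × ℝ, C₀ * posSq p.2 ≤ b p) ∧
      ∀ᵐ p ∂volume.restrict (QT Ω T), g (heatPotential (initialMeasure m) p - b p) ≤ f p := by
  obtain ⟨C₁, hC₁, hin⟩ := hu.exists_heatPotential_sub_le G hΩ hne hT hg hμ hm hmμ
  obtain ⟨C₂, hC₂, hout⟩ := G.exists_initialPotential_le_posSq hE hT hm
  set A := C₂ * posSq T
  have hloc : IsCorrector Ω T (fun p => φ p.1 * g (u p)) _ :=
    isCorrector_heatPotential hΩ (hu.integrableOn_localized G hΩ hne)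
      fun p => mul_nonneg (G.nonneg _) (hg.nonneg _)
  have hfar : IsCorrector Ω T (fun _ => g A) _ :=
    isCorrector_heatPotential hΩ (integrableOn_const (isBounded_QT hΩb T).measure_lt_top.ne)
      fun _ => hg.nonneg _
  have hcorr := (hloc.add hΩ hΩb hfar).add hΩ hΩb (isCorrector_posSq hΩ hΩb (add_nonneg hC₀ hC₁))
  refine ⟨_, _, hcorr, fun p => ?_, G.ae_of_ae_of_notMem hΩ ?_ fun p hpQ hpU => ?_⟩
  · have := mul_nonneg hC₁ (posSq_nonneg p.2)
    linarith [hloc.nonneg p, hfar.nonneg p]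
  · filter_upwards [hin, ae_restrict_mem (G.isOpen.measurableSet.prod measurableSet_Ioo)]
      with p hp hpU
    rw [G.eq_one_of_mem hpU.1, one_mul, add_zero]
    have := mul_nonneg hC₀ (posSq_nonneg p.2)
    exact (hg.2.1 (by linarith [hfar.nonneg p])).trans (le_add_of_nonneg_right (hg.nonneg A))
  · have hkA : heatPotential (initialMeasure m) p ≤ A :=
      (hout p hpU hpQ.2.2.le).trans (mul_le_mul_of_nonneg_left (posSq_mono hpQ.2.2.le) hC₂)
    have hgA := hg.2.1 (sub_le_self_iff _ |>.2 (hcorr.nonneg p) |>.trans hkA)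
    linarith [mul_nonneg (G.nonneg p.1) (hg.nonneg (u p))]

lemma WeakSol.exists_isBarrier (hu : WeakSol Ω T g μ u) (G : IsLocalizer Ω E U φ δ)
    (hΩ : IsOpen Ω) (hΩb : Bornology.IsBounded Ω) (hne : Ωᶜ.Nonempty) (hE : IsClosed E)
    (hEΩ : E ⊆ Ω) (hT : 0 < T) (hg : GoodG g) (hμ : ∀ K ⊆ Ω, IsCompact K → μ K < ⊤)
    [IsFiniteMeasure m] (hm : m Eᶜ = 0) (hmμ : m ≤ μ) :
    ∃ k b f y, IsBarrier Ω T g m U k b f y := by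
  obtain ⟨y, hy, hbounds⟩ :=
    exists_isHeatSol_le hΩ hΩb hT (measure_mono_null (compl_subset_compl.2 hEΩ) hm)
  obtain ⟨C₁, hC₁, hin⟩ := hy.exists_heatPotential_sub_le G hΩ hT hm
  obtain ⟨C₂, hC₂, hout⟩ := G.exists_initialPotential_le_posSq hE hT hm
  obtain ⟨f, b, hcorr, hCb, habs⟩ :=
    hu.exists_isCorrector G hΩ hΩb hne hE hT hg hμ hm hmμ (add_nonneg hC₁ hC₂)
  have hlower : ∀ᵐ p ∂volume.restrict (QT Ω T),
      heatPotential (initialMeasure m) p - b p ≤ max (y p) 0 := by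
    refine G.ae_of_ae_of_notMem hΩ ?_ fun p hpQ hpU => le_max_of_le_right ?_
    · filter_upwards [hin] with p hp
      refine le_max_of_le_left ?_
      linarith [hCb p, mul_nonneg hC₂ (posSq_nonneg p.2)]
    · linarith [hCb p, hout p hpU hpQ.2.2.le, mul_nonneg hC₁ (posSq_nonneg p.2)]
  refine ⟨_, b, f, y, integrableOn_initialPotential m,
    fun η hη => hη.setIntegral_initialPotential m, fun τ hτ => ?_, hcorr, habs, hy, ?_⟩
  · obtain ⟨D, hD⟩ := exists_initialPotential_le m hτ
    refine ⟨max D (C₂ * posSq T), fun p hpQ hp =>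
      hp.elim (fun hpU => le_max_of_le_right ?_) fun hpτ => le_max_of_le_left (hD p hpτ)⟩
    exact (hout p hpU hpQ.2.2.le).trans (mul_le_mul_of_nonneg_left (posSq_mono hpQ.2.2.le) hC₂)
  · filter_upwards [hlower, hbounds] with p hp hy
    exact ⟨hy.1, by rwa [max_eq_left hy.1] at hp, hy.2⟩

end Barrier

section LipschitzRegularization

variable {g : ℝ → ℝ} {n : ℕ} {r r' : ℝ}

/-- The inf-convolution of `g` with the cone `n * |·|`: the largest `n`-Lipschitz minorant of `g`,
by which the nonlinearity is approximated from below. The infimum has the junk value `0` where it is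
not bounded below, so the definition is meant for `0 ≤ g`. -/
def lipReg (g : ℝ → ℝ) (n : ℕ) (r : ℝ) : ℝ :=
  ⨅ s, (g s + n * |r - s|)

lemma lipReg_le (hg : ∀ s, 0 ≤ g s) (n : ℕ) (r s : ℝ) : lipReg g n r ≤ g s + n * |r - s| := by
  refine ciInf_le ⟨0, ?_⟩ s
  rintro _ ⟨t, rfl⟩
  exact add_nonneg (hg t) (by positivity)

lemma lipReg_nonneg (hg : ∀ s, 0 ≤ g s) (n : ℕ) (r : ℝ) : 0 ≤ lipReg g n r :=
  le_ciInf fun s => add_nonneg (hg s) (by positivity)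

lemma lipReg_le_self (hg : ∀ s, 0 ≤ g s) (n : ℕ) (r : ℝ) : lipReg g n r ≤ g r := by
  simpa using lipReg_le hg n r r

lemma lipReg_le_succ (hg : ∀ s, 0 ≤ g s) (n : ℕ) (r : ℝ) :
    lipReg g n r ≤ lipReg g (n + 1) r := by
  refine le_ciInf fun s => (lipReg_le hg n r s).trans ?_
  push_cast
  linarith [abs_nonneg (r - s)]

lemma lipReg_le_add (hg : ∀ s, 0 ≤ g s) (n : ℕ) (r r' : ℝ) :
    lipReg g n r ≤ lipReg g n r' + n * |r - r'| := by
  rw [← sub_le_iff_le_add]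
  refine le_ciInf fun s => ?_
  have htri := mul_le_mul_of_nonneg_left (abs_sub_le r r' s) (n.cast_nonneg (α := ℝ))
  linarith [lipReg_le hg n r s]

lemma monotone_lipReg (hg : ∀ s, 0 ≤ g s) (hmono : Monotone g) (n : ℕ) :
    Monotone (lipReg g n) := by
  refine fun r r' h => le_ciInf fun s => ?_
  calc lipReg g n r ≤ g (s - (r' - r)) + n * |r - (s - (r' - r))| := lipReg_le hg n r _
    _ ≤ g s + n * |r' - s| := by
        rw [show r - (s - (r' - r)) = r' - s by ring]
        gcongr
        exact hmono (by linarith)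

lemma lipReg_le_mul (hg : GoodG g) (hr' : 0 ≤ r') (h : r ≤ r') : lipReg g n r ≤ n * r' := by
  have hle := lipReg_le hg.nonneg n r' 0
  rw [hg.2.2 0 le_rfl, zero_add, sub_zero, abs_of_nonneg hr'] at hle
  exact (monotone_lipReg hg.nonneg hg.2.1 n h).trans hle

lemma continuous_lipReg (hg : ∀ s, 0 ≤ g s) (n : ℕ) : Continuous (lipReg g n) := by
  refine (LipschitzWith.of_dist_le_mul (K := n) fun r r' => ?_).continuous
  have h := lipReg_le_add hg n r' r
  rw [abs_sub_comm] at h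
  rw [Real.dist_eq, Real.dist_eq, abs_sub_le_iff, NNReal.coe_natCast]
  constructor <;> linarith [lipReg_le_add hg n r r']

lemma apply_sub_div_le_lipReg (hg : ∀ s, 0 ≤ g s) (hmono : Monotone g) (hn : 0 < n) (r : ℝ) :
    g (r - g r / n) ≤ lipReg g n r := by
  have hn' : (0 : ℝ) < n := by exact_mod_cast hn
  refine le_ciInf fun s => ?_
  rcases le_total (r - g r / n) s with h | h
  · exact (hmono h).trans (le_add_of_nonneg_right (by positivity))
  · have hgr : g r ≤ (r - s) * n := (div_le_iff₀ hn').1 (by linarith)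
    calc g (r - g r / n) ≤ g r := hmono (sub_le_self _ (div_nonneg (hg r) hn'.le))
      _ ≤ n * |r - s| := by
          rw [mul_comm] at hgr
          exact hgr.trans (by gcongr; exact le_abs_self _)
      _ ≤ g s + n * |r - s| := le_add_of_nonneg_left (hg s)

lemma tendsto_lipReg (hg : ∀ s, 0 ≤ g s) (hmono : Monotone g) (hcont : Continuous g) {y : ℕ → ℝ}
    (h : Tendsto y atTop (𝓝 r)) : Tendsto (fun n => lipReg g n (y n)) atTop (𝓝 (g r)) := by
  have hgy : Tendsto (fun n => g (y n)) atTop (𝓝 (g r)) := (hcont.tendsto r).comp h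
  have hshift : Tendsto (fun n => y n - g (y n) / n) atTop (𝓝 r) := by
    simpa using h.sub (hgy.div_atTop tendsto_natCast_atTop_atTop)
  refine tendsto_of_tendsto_of_tendsto_of_le_of_le' ((hcont.tendsto r).comp hshift) hgy ?_
    (Eventually.of_forall fun n => lipReg_le_self hg n _)
  filter_upwards [eventually_gt_atTop 0] with n hn using apply_sub_div_le_lipReg hg hmono hn _

end LipschitzRegularization

section Convergence

variable {α : Type*} [MeasurableSpace α] {μ : Measure α} {f : ℕ → α → ℝ} {F B : α → ℝ}

lemma integrable_of_tendsto_of_abs_le (hB : Integrable B μ) (hf : ∀ n, AEStronglyMeasurable (f n) μ)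
    (hfB : ∀ n, ∀ᵐ x ∂μ, |f n x| ≤ B x)
    (hlim : ∀ᵐ x ∂μ, Tendsto (fun n => f n x) atTop (𝓝 (F x))) : Integrable F μ := by
  refine hB.mono' (aestronglyMeasurable_of_tendsto_ae _ hf hlim) ?_
  filter_upwards [hlim, ae_all_iff.2 hfB] with x hx hxB
  exact le_of_tendsto' hx.abs hxB

theorem integrable_and_tendsto_lintegral_of_setIntegral_le [IsFiniteMeasure μ]
    (hf : ∀ n, Integrable (f n) μ) (hf0 : ∀ n x, 0 ≤ f n x)
    (hlim : ∀ᵐ x ∂μ, Tendsto (fun n => f n x) atTop (𝓝 (F x)))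
    (hsmall : ∀ e > 0, ∃ A, MeasurableSet A ∧ (∀ n, ∫ x in A, f n x ∂μ ≤ e) ∧
      ∃ C, ∀ n, ∀ᵐ x ∂μ, x ∉ A → f n x ≤ C) :
    Integrable F μ ∧ Tendsto (fun n => ∫⁻ x, ‖f n x - F x‖ₑ ∂μ) atTop (𝓝 0) := by
  have hmeas (n : ℕ) := (hf n).aestronglyMeasurable
  have hunif : UniformIntegrable f 1 μ := by
    refine uniformIntegrable_of le_rfl ENNReal.one_ne_top hmeas fun e he => ?_
    obtain ⟨A, hA, hAe, C, hC⟩ := hsmall e he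
    refine ⟨C.toNNReal + 1, fun n => ?_⟩
    calc eLpNorm ({x | C.toNNReal + 1 ≤ ‖f n x‖₊}.indicator (f n)) 1 μ
        ≤ eLpNorm (A.indicator (f n)) 1 μ := by
          refine eLpNorm_mono_ae ?_
          filter_upwards [hC n] with x hx
          by_cases hxA : x ∈ A
          · rw [indicator_of_mem hxA]
            exact norm_indicator_le_norm_self _ _
          · have hlt : ‖f n x‖₊ < C.toNNReal + 1 := by
              rw [Real.nnnorm_of_nonneg (hf0 n x), ← NNReal.coe_lt_coe]
              push_cast
              linarith [hx hxA, Real.le_coe_toNNReal C]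
            rw [indicator_of_notMem (by simpa using hlt), norm_zero]
            exact norm_nonneg _
      _ = ENNReal.ofReal (∫ x in A, f n x ∂μ) := by
          rw [eLpNorm_indicator_eq_eLpNorm_restrict hA, eLpNorm_one_eq_lintegral_enorm,
            ofReal_integral_eq_lintegral_ofReal (hf n).integrableOn (Eventually.of_forall (hf0 n))]
          exact lintegral_congr fun x => Real.enorm_of_nonneg (hf0 n x)
      _ ≤ ENNReal.ofReal e := ENNReal.ofReal_le_ofReal (hAe n)
  have hF : Integrable F μ :=
    hunif.integrable_of_tendstoInMeasure (tendstoInMeasure_of_tendsto_ae hmeas hlim)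
  refine ⟨hF, ?_⟩
  have hL := tendsto_Lp_finite_of_tendsto_ae le_rfl ENNReal.one_ne_top hmeas
    (memLp_one_iff_integrable.2 hF) hunif.2.1 hlim
  simpa only [eLpNorm_one_eq_lintegral_enorm, Pi.sub_apply] using hL

variable {X : Type*} [PseudoMetricSpace X] [ProperSpace X] [MeasurableSpace X]
  [OpensMeasurableSpace X] {ν : Measure X} {S : Set X} {y : ℕ → X → ℝ} {Y D w : X → ℝ}

lemma tendsto_setIntegral_mul_of_abs_le (hS : Bornology.IsBounded S) (hSm : MeasurableSet S)
    (hD : IntegrableOn D S ν) (hy : ∀ n, IntegrableOn (y n) S ν)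
    (hyD : ∀ n, ∀ᵐ x ∂ν.restrict S, |y n x| ≤ D x)
    (hlim : ∀ᵐ x ∂ν.restrict S, Tendsto (fun n => y n x) atTop (𝓝 (Y x))) (hw : Continuous w) :
    Tendsto (fun n => ∫ x in S, y n x * w x ∂ν) atTop (𝓝 (∫ x in S, Y x * w x ∂ν)) := by
  refine tendsto_integral_of_dominated_convergence (fun x => D x * |w x|)
    (fun n => (integrableOn_mul_of_isBounded hS hSm (hy n) hw).aestronglyMeasurable)
    (integrableOn_mul_of_isBounded hS hSm hD hw.abs) (fun n => ?_) ?_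
  · filter_upwards [hyD n] with x hx
    rw [Real.norm_eq_abs, abs_mul]
    gcongr
  · filter_upwards [hlim] with x hx using hx.mul_const _

lemma tendsto_setIntegral_mul_of_tendsto_lintegral (hS : Bornology.IsBounded S)
    (hSm : MeasurableSet S) (hy : ∀ n, IntegrableOn (y n) S ν) (hY : IntegrableOn Y S ν)
    (hlim : Tendsto (fun n => ∫⁻ x in S, ‖y n x - Y x‖ₑ ∂ν) atTop (𝓝 0)) (hw : Continuous w) :
    Tendsto (fun n => ∫ x in S, y n x * w x ∂ν) atTop (𝓝 (∫ x in S, Y x * w x ∂ν)) := by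
  obtain ⟨C, hC⟩ := hS.isCompact_closure.exists_bound_of_continuousOn hw.continuousOn
  refine tendsto_integral_of_L1 _ (integrableOn_mul_of_isBounded hS hSm hY hw).aestronglyMeasurable
    (Eventually.of_forall fun n => integrableOn_mul_of_isBounded hS hSm (hy n) hw) ?_
  have hmul : Tendsto (fun n => ENNReal.ofReal C * ∫⁻ x in S, ‖y n x - Y x‖ₑ ∂ν) atTop (𝓝 0) := by
    simpa using ENNReal.Tendsto.const_mul hlim (Or.inr ENNReal.ofReal_ne_top)
  refine tendsto_of_tendsto_of_tendsto_of_le_of_le tendsto_const_nhds hmul (fun _ => zero_le)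
    fun n => ?_
  rw [← lintegral_const_mul' _ _ ENNReal.ofReal_ne_top]
  refine setLIntegral_mono_ae' hSm (Eventually.of_forall fun x hx => ?_)
  rw [← sub_mul, enorm_mul, mul_comm, ← ofReal_norm (w x)]
  gcongr
  exact hC x (subset_closure hx)

end Convergence

section MonotoneIteration

lemma exists_seq_of_forall_exists {α : Type*} {P : ℕ → α → Prop} {R : α → α → Prop} {a : α}
    (ha : P 0 a) (hstep : ∀ n a, P n a → ∃ b, P (n + 1) b ∧ R a b) :
    ∃ s : ℕ → α, s 0 = a ∧ ∀ n, P n (s n) ∧ R (s n) (s (n + 1)) := by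
  choose! next hnext using hstep
  let s : ℕ → α := fun n => n.rec a next
  have hs : ∀ n, P n (s n) := fun n => n.rec ha fun k ih => (hnext k (s k) ih).1
  exact ⟨s, rfl, fun n => ⟨hs n, (hnext n (s n) (hs n)).2⟩⟩

lemma ae_tendsto_iInf_of_succ_le {α : Type*} [MeasurableSpace α] {μ : Measure α}
    {l : α → ℝ} {y : ℕ → α → ℝ} (hl : ∀ n, ∀ᵐ x ∂μ, l x ≤ y n x)
    (hy : ∀ n, ∀ᵐ x ∂μ, y (n + 1) x ≤ y n x) :
    ∀ᵐ x ∂μ, Tendsto (fun n => y n x) atTop (𝓝 (⨅ n, y n x)) ∧ ∀ n, ⨅ k, y k x ≤ y n x := by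
  filter_upwards [ae_all_iff.2 hl, ae_all_iff.2 hy] with x hlx hyx
  have hbdd : BddBelow (range fun n => y n x) := ⟨l x, forall_mem_range.2 hlx⟩
  exact ⟨tendsto_atTop_ciInf (antitone_nat_of_succ_le hyx) hbdd, ciInf_le hbdd⟩

variable {N n : ℕ} {Ω : Set (Euc N)} {T : ℝ} {g : ℝ → ℝ} {m : Measure (Euc N)}
  {f f₀ l y y₀ η : Euc N × ℝ → ℝ}

lemma integrableOn_QT_mul (hΩ : IsOpen Ω) (hΩb : Bornology.IsBounded Ω) {v w : Euc N × ℝ → ℝ}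
    (hv : IntegrableOn v (QT Ω T)) (hw : Continuous w) :
    IntegrableOn (fun p => v p * w p) (QT Ω T) :=
  integrableOn_mul_of_isBounded (isBounded_QT hΩb T) (measurableSet_QT hΩ T) hv hw

/-- `l` is a subsolution of `∂ₜl - Δl + g(l) = 0` with initial datum `m`, tested against
nonnegative functions supported away from the lateral boundary; `f₀` is an integrable majorant of
the absorption term `g(l)`. -/
structure IsLocalSubsolution (Ω : Set (Euc N)) (T : ℝ) (g : ℝ → ℝ) (m : Measure (Euc N))
    (l f₀ : Euc N × ℝ → ℝ) : Prop where
  integrableOn : IntegrableOn l (QT Ω T)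
  integrableOn_source : IntegrableOn f₀ (QT Ω T)
  absorption_le : ∀ᵐ p ∂volume.restrict (QT Ω T), g (l p) ≤ f₀ p
  integral_le : ∀ η, IsLocalTest Ω T η → (∀ p, 0 ≤ η p) →
    (∫ p in QT Ω T, l p * -adjHeat η p) + ∫ p in QT Ω T, f₀ p * η p ≤ ∫ x, η (x, 0) ∂m

/-- A solution `y` of `∂ₜy - Δy + f = 0` with initial datum `m` and zero lateral data, lying between
`l` and `y₀`, whose absorption `f` is at most the regularized one: a supersolution of the equation
with nonlinearity `lipReg g n`. -/
structure IsApproxSolution (Ω : Set (Euc N)) (T : ℝ) (g : ℝ → ℝ) (m : Measure (Euc N))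
    (l y₀ : Euc N × ℝ → ℝ) (n : ℕ) (y f : Euc N × ℝ → ℝ) : Prop where
  integrableOn : IntegrableOn y (QT Ω T)
  integrableOn_source : IntegrableOn f (QT Ω T)
  bounds : ∀ᵐ p ∂volume.restrict (QT Ω T), l p ≤ y p ∧ y p ≤ y₀ p
  source_le : ∀ᵐ p ∂volume.restrict (QT Ω T), f p ≤ lipReg g n (y p)
  integral_eq : ∀ ζ, IsGlobalTest Ω T ζ →
    (∫ p in QT Ω T, y p * -adjHeat ζ p) + ∫ p in QT Ω T, f p * ζ p = ∫ x, ζ (x, 0) ∂m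

namespace IsApproxSolution

lemma ae_abs_le (I : IsApproxSolution Ω T g m l y₀ n y f) :
    ∀ᵐ p ∂volume.restrict (QT Ω T), |y p| ≤ |l p| + |y₀ p| := by
  filter_upwards [I.bounds] with p hp
  exact (abs_le_max_abs_abs hp.1 hp.2).trans
    (max_le_add_of_nonneg (abs_nonneg _) (abs_nonneg _))

lemma integrableOn_lipReg (I : IsApproxSolution Ω T g m l y₀ n y f) (hg : GoodG g)
    (hy₀ : IntegrableOn y₀ (QT Ω T)) (hy₀0 : ∀ᵐ p ∂volume.restrict (QT Ω T), 0 ≤ y₀ p) :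
    IntegrableOn (fun p => lipReg g n (y p)) (QT Ω T) := by
  refine (hy₀.const_mul (n : ℝ)).mono' ((continuous_lipReg hg.nonneg n).comp_aestronglyMeasurable
    I.integrableOn.aestronglyMeasurable) ?_
  filter_upwards [I.bounds, hy₀0] with p hp hp0
  rw [Real.norm_eq_abs, abs_of_nonneg (lipReg_nonneg hg.nonneg n _)]
  exact lipReg_le_mul hg hp0 hp.2

lemma lipReg_le_add_mul (I : IsApproxSolution Ω T g m l y₀ n y f) (hg : GoodG g)
    (L : IsLocalSubsolution Ω T g m l f₀) :
    ∀ᵐ p ∂volume.restrict (QT Ω T), lipReg g n (y p) ≤ f₀ p + n * (y p - l p) := by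
  filter_upwards [L.absorption_le, I.bounds] with p hf₀ hp
  have hlip := lipReg_le_add hg.nonneg n (y p) (l p)
  rw [abs_of_nonneg (sub_nonneg.2 hp.1)] at hlip
  linarith [lipReg_le_self hg.nonneg n (l p)]

lemma setIntegral_sub_le (I : IsApproxSolution Ω T g m l y₀ n y f) (hΩ : IsOpen Ω)
    (hΩb : Bornology.IsBounded Ω) (hg : GoodG g) (L : IsLocalSubsolution Ω T g m l f₀)
    (hy₀ : IntegrableOn y₀ (QT Ω T)) (hy₀0 : ∀ᵐ p ∂volume.restrict (QT Ω T), 0 ≤ y₀ p)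
    (hη : IsLocalTest Ω T η) (hη0 : ∀ p, 0 ≤ η p) :
    ∫ p in QT Ω T, (lipReg g n (y p) - f p) * η p ≤
      ∫ p in QT Ω T, (y p - l p) * (-adjHeat η p + n * η p) := by
  have hηc := hη.isC21.continuous
  have hadj : Continuous fun p => -adjHeat η p := hη.isC21.continuous_adjHeat.neg
  have hyl : IntegrableOn (fun p => y p - l p) (QT Ω T) := I.integrableOn.sub L.integrableOn
  have hf₀ := integrableOn_QT_mul hΩ hΩb L.integrableOn_source hηc
  have hn : IntegrableOn (fun p => (y p - l p) * (n * η p)) (QT Ω T) :=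
    integrableOn_QT_mul hΩ hΩb hyl (hηc.const_mul _)
  have hG := integrableOn_QT_mul hΩ hΩb (I.integrableOn_lipReg hg hy₀ hy₀0) hηc
  have hmono : ∫ p in QT Ω T, lipReg g n (y p) * η p ≤
      ∫ p in QT Ω T, (f₀ p * η p + (y p - l p) * (n * η p)) := by
    refine integral_mono_ae hG (hf₀.add hn) ?_
    filter_upwards [I.lipReg_le_add_mul hg L] with p hp
    linarith [mul_le_mul_of_nonneg_right hp (hη0 p)]
  rw [integral_add hf₀ hn] at hmono
  simp only [mul_add]
  rw [integral_add (integrableOn_QT_mul hΩ hΩb hyl hadj) hn]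
  simp only [sub_mul]
  rw [integral_sub hG (integrableOn_QT_mul hΩ hΩb I.integrableOn_source hηc),
    integral_sub (integrableOn_QT_mul hΩ hΩb I.integrableOn hadj)
      (integrableOn_QT_mul hΩ hΩb L.integrableOn hadj)]
  simp only [sub_mul] at hmono
  linarith [I.integral_eq η (hη.isGlobalTest hΩ), L.integral_le η hη hη0]

lemma sub_linear_solution (I : IsApproxSolution Ω T g m l y₀ n y f) (hΩ : IsOpen Ω)
    (hΩb : Bornology.IsBounded Ω) (hg : GoodG g)
    (hG : IntegrableOn (fun p => lipReg g n (y p)) (QT Ω T)) {q : Euc N × ℝ → ℝ}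
    (hq : IntegrableOn q (QT Ω T))
    (hqd : ∀ᵐ p ∂volume.restrict (QT Ω T), 0 ≤ q p ∧ q p ≤ y p - l p)
    (hrep : ∀ ζ, IsGlobalTest Ω T ζ → ∫ p in QT Ω T, q p * (-adjHeat ζ p + n * ζ p) =
      ∫ p in QT Ω T, (lipReg g n (y p) - f p) * ζ p) :
    IsApproxSolution Ω T g m l y₀ n (fun p => y p - q p)
      fun p => lipReg g n (y p) - n * q p where
  integrableOn := I.integrableOn.sub hq
  integrableOn_source := hG.sub (hq.const_mul (n : ℝ))
  bounds := by
    filter_upwards [I.bounds, hqd] with p hp hqp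
    constructor <;> linarith
  source_le := by
    filter_upwards [hqd] with p hqp
    have hlip := lipReg_le_add hg.nonneg n (y p) (y p - q p)
    rw [sub_sub_cancel, abs_of_nonneg hqp.1] at hlip
    linarith
  integral_eq ζ hζ := by
    have hζc := hζ.isC21.continuous
    have hadj : Continuous fun p => -adjHeat ζ p := hζ.isC21.continuous_adjHeat.neg
    have hGζ := integrableOn_QT_mul hΩ hΩb hG hζc
    have hqn : IntegrableOn (fun p => q p * (n * ζ p)) (QT Ω T) :=
      integrableOn_QT_mul hΩ hΩb hq (hζc.const_mul _)
    have hqadj := integrableOn_QT_mul hΩ hΩb hq hadj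
    have hid := hrep ζ hζ
    simp only [sub_mul, mul_add] at hid
    rw [integral_add hqadj hqn,
      integral_sub hGζ (integrableOn_QT_mul hΩ hΩb I.integrableOn_source hζc)] at hid
    have hsource (p : Euc N × ℝ) : (lipReg g n (y p) - n * q p) * ζ p =
        lipReg g n (y p) * ζ p - q p * (n * ζ p) := by ring
    simp only [hsource, sub_mul (y _)]
    rw [integral_sub (integrableOn_QT_mul hΩ hΩb I.integrableOn hadj) hqadj,
      integral_sub hGζ hqn]
    linarith [I.integral_eq ζ hζ]

/-- One step of the monotone iteration `∂ₜy' - Δy' + n y' = n y - lipReg g n y`. -/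
lemma exists_next (I : IsApproxSolution Ω T g m l y₀ n y f) (hΩ : IsOpen Ω)
    (hΩb : Bornology.IsBounded Ω) (hg : GoodG g) (L : IsLocalSubsolution Ω T g m l f₀)
    (hy₀ : IntegrableOn y₀ (QT Ω T)) (hy₀0 : ∀ᵐ p ∂volume.restrict (QT Ω T), 0 ≤ y₀ p) :
    ∃ y' f', IsApproxSolution Ω T g m l y₀ n y' f' ∧ ∀ᵐ p ∂volume.restrict (QT Ω T),
      y' p ≤ y p ∧ f' p = lipReg g n (y p) - n * (y p - y' p) := by
  have hG := I.integrableOn_lipReg hg hy₀ hy₀0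
  have hF : IntegrableOn (fun p => lipReg g n (y p) - f p) (QT Ω T) := hG.sub I.integrableOn_source
  have hF0 : ∀ᵐ p ∂volume.restrict (QT Ω T), 0 ≤ lipReg g n (y p) - f p :=
    I.source_le.mono fun _ => sub_nonneg.2
  have := isFiniteMeasure_sourceMeasure hF
  obtain ⟨q, hq, hqd, hrep⟩ := exists_linear_solution_le hΩ hΩb n.cast_nonneg
    (sourceMeasure_compl_cylinder hΩ _) (I.integrableOn.sub L.integrableOn)
    (I.bounds.mono fun _ hp => sub_nonneg.2 hp.1) fun η hη hη0 => by
      rw [integral_sourceMeasure hF hF0]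
      exact I.setIntegral_sub_le hΩ hΩb hg L hy₀ hy₀0 hη hη0
  simp only [integral_sourceMeasure hF hF0] at hrep
  refine ⟨_, _, I.sub_linear_solution hΩ hΩb hg hG hq hqd hrep, ?_⟩
  filter_upwards [hqd] with p hp
  exact ⟨sub_le_self _ hp.1, by ring⟩

lemma abs_next_source_le (I : IsApproxSolution Ω T g m l y₀ n y f) (hg : GoodG g)
    (hy₀0 : ∀ᵐ p ∂volume.restrict (QT Ω T), 0 ≤ y₀ p) {y' f' : Euc N × ℝ → ℝ}
    (I' : IsApproxSolution Ω T g m l y₀ n y' f') (hnext : ∀ᵐ p ∂volume.restrict (QT Ω T),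
      y' p ≤ y p ∧ f' p = lipReg g n (y p) - n * (y p - y' p)) :
    ∀ᵐ p ∂volume.restrict (QT Ω T), |f' p| ≤ n * (|l p| + |y₀ p|) := by
  filter_upwards [I.bounds, I'.bounds, hy₀0, hnext] with p hp hp' hp0 hnp
  have hn : (0 : ℝ) ≤ n := n.cast_nonneg
  have hdiff : n * (y p - y' p) ≤ n * (|l p| + |y₀ p|) := by
    gcongr
    linarith [neg_abs_le (l p), le_abs_self (y₀ p)]
  have hG : lipReg g n (y p) ≤ n * (|l p| + |y₀ p|) :=
    (lipReg_le_mul hg hp0 hp.2).trans (by gcongr; linarith [abs_nonneg (l p), le_abs_self (y₀ p)])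
  rw [hnp.2, abs_le]
  constructor
  · linarith [lipReg_nonneg hg.nonneg n (y p)]
  · linarith [mul_nonneg hn (sub_nonneg.2 hnp.1)]

lemma ae_tendsto_next_source (hg : GoodG g) {u v : ℕ → Euc N × ℝ → ℝ}
    (hu : ∀ᵐ p ∂volume.restrict (QT Ω T), Tendsto (fun j => u j p) atTop (𝓝 (y p)))
    (hnext : ∀ j, ∀ᵐ p ∂volume.restrict (QT Ω T),
      v (j + 1) p = lipReg g n (u j p) - n * (u j p - u (j + 1) p)) :
    ∀ᵐ p ∂volume.restrict (QT Ω T),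
      Tendsto (fun j => v (j + 1) p) atTop (𝓝 (lipReg g n (y p))) := by
  filter_upwards [hu, ae_all_iff.2 hnext] with p hp hnp
  simp only [hnp]
  have hG := ((continuous_lipReg hg.nonneg n).tendsto _).comp hp
  have hdiff := (hp.sub (hp.comp (tendsto_add_atTop_nat 1))).const_mul (n : ℝ)
  simpa using hG.sub hdiff

lemma iInf_of_next (hΩ : IsOpen Ω) (hΩb : Bornology.IsBounded Ω) (hg : GoodG g)
    (hl : IntegrableOn l (QT Ω T)) (hy₀ : IntegrableOn y₀ (QT Ω T))
    (hy₀0 : ∀ᵐ p ∂volume.restrict (QT Ω T), 0 ≤ y₀ p) {u v : ℕ → Euc N × ℝ → ℝ}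
    (I : ∀ j, IsApproxSolution Ω T g m l y₀ n (u j) (v j))
    (hnext : ∀ j, ∀ᵐ p ∂volume.restrict (QT Ω T), u (j + 1) p ≤ u j p ∧
      v (j + 1) p = lipReg g n (u j p) - n * (u j p - u (j + 1) p)) :
    IsApproxSolution Ω T g m l y₀ n (fun p => ⨅ j, u j p)
      fun p => lipReg g n (⨅ j, u j p) := by
  have hD : IntegrableOn (fun p => |l p| + |y₀ p|) (QT Ω T) := hl.abs.add hy₀.abs
  have hlim := ae_tendsto_iInf_of_succ_le (fun j => (I j).bounds.mono fun _ hp => hp.1)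
    fun j => (hnext j).mono fun _ hp => hp.1
  have hu := hlim.mono fun _ hp => hp.1
  have hv := ae_tendsto_next_source hg hu fun j => (hnext j).mono fun _ hp => hp.2
  have hvD (j : ℕ) := (I j).abs_next_source_le hg hy₀0 (I (j + 1)) (hnext j)
  refine ⟨integrable_of_tendsto_of_abs_le hD (fun j => (I j).integrableOn.aestronglyMeasurable)
      (fun j => (I j).ae_abs_le) hu, integrable_of_tendsto_of_abs_le (hD.const_mul (n : ℝ))
      (fun j => (I (j + 1)).integrableOn_source.aestronglyMeasurable) hvD hv, ?_,
    Eventually.of_forall fun _ => le_rfl, fun ζ hζ => ?_⟩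
  · filter_upwards [ae_all_iff.2 fun j => (I j).bounds, hlim] with p hp hlp
    exact ⟨le_ciInf fun j => (hp j).1, (hlp.2 0).trans (hp 0).2⟩
  · have hQb := isBounded_QT hΩb T
    have hQ := measurableSet_QT hΩ T
    have hulim := tendsto_setIntegral_mul_of_abs_le hQb hQ hD (fun j => (I j).integrableOn)
      (fun j => (I j).ae_abs_le) hu hζ.isC21.continuous_adjHeat.neg
    have hvlim := tendsto_setIntegral_mul_of_abs_le hQb hQ (hD.const_mul (n : ℝ))
      (fun j => (I (j + 1)).integrableOn_source) hvD hv hζ.isC21.continuous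
    refine tendsto_nhds_unique ((hulim.comp (tendsto_add_atTop_nat 1)).add hvlim) ?_
    simp only [Function.comp_apply, Pi.neg_apply, fun j => (I (j + 1)).integral_eq ζ hζ]
    exact tendsto_const_nhds

lemma exists_fixed_source (I : IsApproxSolution Ω T g m l y₀ n y f) (hΩ : IsOpen Ω)
    (hΩb : Bornology.IsBounded Ω) (hg : GoodG g) (L : IsLocalSubsolution Ω T g m l f₀)
    (hy₀ : IntegrableOn y₀ (QT Ω T)) (hy₀0 : ∀ᵐ p ∂volume.restrict (QT Ω T), 0 ≤ y₀ p) :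
    ∃ y', IsApproxSolution Ω T g m l y₀ n y' (fun p => lipReg g n (y' p)) ∧
      ∀ᵐ p ∂volume.restrict (QT Ω T), y' p ≤ y p := by
  obtain ⟨s, hs0, hs⟩ := exists_seq_of_forall_exists
    (P := fun _ a => IsApproxSolution Ω T g m l y₀ n a.1 a.2)
    (R := fun a a' => ∀ᵐ p ∂volume.restrict (QT Ω T),
      a'.1 p ≤ a.1 p ∧ a'.2 p = lipReg g n (a.1 p) - n * (a.1 p - a'.1 p))
    (a := (y, f)) I fun _ a Ia => by
      obtain ⟨y', f', I', hnext⟩ := Ia.exists_next hΩ hΩb hg L hy₀ hy₀0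
      exact ⟨(y', f'), I', hnext⟩
  refine ⟨_, iInf_of_next hΩ hΩb hg L.integrableOn hy₀ hy₀0 (fun j => (hs j).1)
    fun j => (hs j).2, ?_⟩
  filter_upwards [ae_tendsto_iInf_of_succ_le (fun j => (hs j).1.bounds.mono fun _ hp => hp.1)
    fun j => (hs j).2.mono fun _ hp => hp.1] with p hp
  simpa only [hs0] using hp.2 0

end IsApproxSolution

theorem IsLocalSubsolution.exists_seq_isApproxSolution (L : IsLocalSubsolution Ω T g m l f₀)
    (hΩ : IsOpen Ω) (hΩb : Bornology.IsBounded Ω) (hg : GoodG g) (hy₀ : IsHeatSol Ω T m y₀)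
    (hbounds : ∀ᵐ p ∂volume.restrict (QT Ω T), 0 ≤ y₀ p ∧ l p ≤ y₀ p) :
    ∃ Y : ℕ → Euc N × ℝ → ℝ, ∀ n,
      IsApproxSolution Ω T g m l y₀ n (Y n) (fun p => lipReg g n (Y n p)) ∧
        ∀ᵐ p ∂volume.restrict (QT Ω T), Y (n + 1) p ≤ Y n p := by
  have hy₀0 := hbounds.mono fun _ hp => hp.1
  have hinit : IsApproxSolution Ω T g m l y₀ 0 y₀ fun _ => 0 :=
    ⟨hy₀.1, integrableOn_zero, hbounds.mono fun _ hp => ⟨hp.2, le_rfl⟩,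
      Eventually.of_forall fun _ => lipReg_nonneg hg.nonneg 0 _,
      fun ζ hζ => by simpa only [zero_mul, integral_zero, add_zero] using hy₀.2 ζ hζ⟩
  obtain ⟨Y₀, hY₀, -⟩ := hinit.exists_fixed_source hΩ hΩb hg L hy₀.1 hy₀0
  obtain ⟨Y, -, hY⟩ := exists_seq_of_forall_exists
    (P := fun n y => IsApproxSolution Ω T g m l y₀ n y fun p => lipReg g n (y p))
    (R := fun y y' => ∀ᵐ p ∂volume.restrict (QT Ω T), y' p ≤ y p) hY₀ fun n y I => by
      have Isucc : IsApproxSolution Ω T g m l y₀ (n + 1) y fun p => lipReg g n (y p) :=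
        { I with source_le := Eventually.of_forall fun _ => lipReg_le_succ hg.nonneg n _ }
      exact Isucc.exists_fixed_source hΩ hΩb hg L hy₀.1 hy₀0
  exact ⟨Y, hY⟩

end MonotoneIteration

section InitialLayer

variable {N n : ℕ} {Ω E U : Set (Euc N)} {T δ ε C e : ℝ} {g : ℝ → ℝ} {φ : Euc N → ℝ}
  {m : Measure (Euc N)} {l y₀ b Y : Euc N × ℝ → ℝ}

/-- A continuously differentiable cutoff in time, equal to `1` at `t = 0` and vanishing for
`t ≥ ε`. -/
def timeCutoff (ε t : ℝ) : ℝ := posSq (1 - t / ε)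

lemma hasDerivAt_timeCutoff (ε t : ℝ) :
    HasDerivAt (timeCutoff ε) (2 * max (1 - t / ε) 0 * -(1 / ε)) t :=
  (hasDerivAt_posSq _).comp t (((hasDerivAt_id t).div_const ε).const_sub 1)

lemma timeCutoff_nonneg (ε t : ℝ) : 0 ≤ timeCutoff ε t := posSq_nonneg _

lemma timeCutoff_of_le (hε : 0 < ε) {t : ℝ} (ht : ε ≤ t) : timeCutoff ε t = 0 :=
  posSq_of_nonpos (sub_nonpos.2 ((one_le_div hε).2 ht))

lemma timeCutoff_le_one (hε : 0 < ε) {t : ℝ} (ht : 0 ≤ t) : timeCutoff ε t ≤ 1 := by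
  calc posSq (1 - t / ε) ≤ posSq 1 := posSq_mono (sub_le_self 1 (div_nonneg ht hε.le))
    _ = 1 := by rw [posSq_of_nonneg zero_le_one, one_pow]

lemma one_fourth_le_timeCutoff (hε : 0 < ε) {t : ℝ} (ht : t ≤ ε / 2) : 1 / 4 ≤ timeCutoff ε t := by
  have hquot : t / ε ≤ 1 / 2 := by
    rw [div_le_iff₀ hε]
    linarith
  calc (1 / 4 : ℝ) = posSq (1 / 2) := by rw [posSq_of_nonneg (by norm_num)]; norm_num
    _ ≤ posSq (1 - t / ε) := posSq_mono (by linarith)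

lemma isC21_timeCutoff (N : ℕ) (ε : ℝ) : IsC21 fun p : Euc N × ℝ => timeCutoff ε p.2 :=
  (hasParabolicDerivs_time (hasDerivAt_timeCutoff ε) (by fun_prop)).isC21

/-- The test function `φ(x) (1 - t / ε)₊²` concentrating on the initial layer. -/
def layerTest (φ : Euc N → ℝ) (ε : ℝ) : Euc N × ℝ → ℝ :=
  (fun p => φ p.1) * fun p => timeCutoff ε p.2

lemma IsLocalizer.isC21_space (G : IsLocalizer Ω E U φ δ) : IsC21 fun p : Euc N × ℝ => φ p.1 :=
  (hasParabolicDerivs_space (contDiff_infty.1 G.contDiff 2)).isC21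

lemma IsLocalizer.isGlobalTest_layerTest (G : IsLocalizer Ω E U φ δ) (hΩ : IsOpen Ω) (hε : 0 < ε)
    (hεT : ε ≤ T) : IsGlobalTest Ω T (layerTest φ ε) := by
  refine ⟨G.isC21_space.mul (isC21_timeCutoff N ε), fun x hx t _ => ?_, fun x _ => ?_⟩
  · rw [hΩ.frontier_eq] at hx
    change φ x * timeCutoff ε t = 0
    rw [image_eq_zero_of_notMem_tsupport fun hxφ => hx.2 (G.tsupport_subset hxφ), zero_mul]
  · change φ x * timeCutoff ε T = 0
    rw [timeCutoff_of_le hε hεT, mul_zero]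

lemma IsLocalizer.layerTest_nonneg (G : IsLocalizer Ω E U φ δ) (ε : ℝ) (p : Euc N × ℝ) :
    0 ≤ layerTest φ ε p :=
  mul_nonneg (G.nonneg p.1) (timeCutoff_nonneg ε p.2)

lemma IsLocalizer.one_fourth_le_layerTest (G : IsLocalizer Ω E U φ δ) (hε : 0 < ε)
    {p : Euc N × ℝ} (hp : p ∈ U ×ˢ Iio (ε / 2)) : 1 / 4 ≤ layerTest φ ε p := by
  change 1 / 4 ≤ φ p.1 * timeCutoff ε p.2
  rw [G.eq_one_of_mem hp.1, one_mul]
  exact one_fourth_le_timeCutoff hε (le_of_lt hp.2)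

lemma IsLocalizer.neg_adjHeat_layerTest (G : IsLocalizer Ω E U φ δ) (ε : ℝ) (p : Euc N × ℝ) :
    -adjHeat (layerTest φ ε) p = φ p.1 * (2 * max (1 - p.2 / ε) 0 * (1 / ε)) -
      timeCutoff ε p.2 * adjHeat (fun p : Euc N × ℝ => φ p.1) p := by
  have hc : Continuous fun t : ℝ => 2 * max (1 - t / ε) 0 * -(1 / ε) := by fun_prop
  rw [layerTest, adjHeat_mul G.isC21_space (isC21_timeCutoff N ε),
    adjHeat_time (hasDerivAt_timeCutoff ε) hc, spaceFDeriv_time (hasDerivAt_timeCutoff ε) hc]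
  simp only [zero_apply, mul_zero, Finset.sum_const_zero]
  ring

lemma IsLocalizer.neg_adjHeat_layerTest_le (G : IsLocalizer Ω E U φ δ) (hε : 0 < ε)
    {p : Euc N × ℝ} (hp : 0 ≤ p.2) (hC : |adjHeat (fun p : Euc N × ℝ => φ p.1) p| ≤ C) :
    -adjHeat (layerTest φ ε) p ≤ 2 / ε + C := by
  have hmax : max (1 - p.2 / ε) 0 ≤ 1 :=
    max_le (sub_le_self 1 (div_nonneg hp hε.le)) zero_le_one
  have htime : φ p.1 * (2 * max (1 - p.2 / ε) 0 * (1 / ε)) ≤ 1 * (2 * 1 * (1 / ε)) := by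
    gcongr
    exact G.le_one p.1
  have hspace : -(timeCutoff ε p.2 * adjHeat (fun p : Euc N × ℝ => φ p.1) p) ≤ 1 * C := by
    refine (neg_le_abs _).trans ?_
    rw [abs_mul, abs_of_nonneg (timeCutoff_nonneg ε p.2)]
    exact mul_le_mul (timeCutoff_le_one hε hp) hC (abs_nonneg _) zero_le_one
  rw [G.neg_adjHeat_layerTest, sub_eq_add_neg]
  exact (add_le_add htime hspace).trans_eq (by ring)

lemma IsLocalizer.neg_adjHeat_layerTest_of_le (G : IsLocalizer Ω E U φ δ) (hε : 0 < ε)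
    {p : Euc N × ℝ} (hp : ε ≤ p.2) : -adjHeat (layerTest φ ε) p = 0 := by
  have hmax : max (1 - p.2 / ε) 0 = 0 := max_eq_right (sub_nonpos.2 ((one_le_div hε).2 hp))
  rw [G.neg_adjHeat_layerTest, hmax, timeCutoff_of_le hε hp]
  ring

lemma IsApproxSolution.setIntegral_lipReg_mul_eq
    (I : IsApproxSolution Ω T g m l y₀ n Y fun p => lipReg g n (Y p)) (hΩ : IsOpen Ω)
    (hΩb : Bornology.IsBounded Ω) (hy₀ : IsHeatSol Ω T m y₀) {ζ : Euc N × ℝ → ℝ}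
    (hζ : IsGlobalTest Ω T ζ) :
    ∫ p in QT Ω T, lipReg g n (Y p) * ζ p = ∫ p in QT Ω T, (y₀ p - Y p) * -adjHeat ζ p := by
  have hadj : Continuous fun p => -adjHeat ζ p := hζ.isC21.continuous_adjHeat.neg
  simp only [sub_mul]
  rw [integral_sub (integrableOn_QT_mul hΩ hΩb hy₀.1 hadj)
    (integrableOn_QT_mul hΩ hΩb I.integrableOn hadj)]
  linarith [I.integral_eq ζ hζ, hy₀.2 ζ hζ]

lemma IsLocalizer.setIntegral_mul_neg_adjHeat_layerTest_le (G : IsLocalizer Ω E U φ δ)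
    (hΩ : IsOpen Ω) (hΩb : Bornology.IsBounded Ω) (hε : 0 < ε) (hεT : ε ≤ T)
    (hC : ∀ p ∈ QT Ω T, |adjHeat (fun p : Euc N × ℝ => φ p.1) p| ≤ C)
    {d : Euc N × ℝ → ℝ} (hd : IntegrableOn d (QT Ω T)) (hb : IntegrableOn b (QT Ω T))
    (hdb : ∀ᵐ p ∂volume.restrict (QT Ω T), 0 ≤ d p ∧ d p ≤ b p) (hC0 : 0 ≤ C) :
    ∫ p in QT Ω T, d p * -adjHeat (layerTest φ ε) p ≤
      (2 / ε + C) * ∫ p in QT Ω T ∩ timeBelow N ε, b p := by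
  have hadj : Continuous fun p => -adjHeat (layerTest φ ε) p :=
    (G.isGlobalTest_layerTest hΩ hε hεT).isC21.continuous_adjHeat.neg
  rw [← integral_const_mul, ← setIntegral_indicator (measurableSet_timeBelow N ε)]
  refine integral_mono_ae (integrableOn_QT_mul hΩ hΩb hd hadj)
    ((hb.const_mul _).indicator (measurableSet_timeBelow N ε)) ?_
  filter_upwards [hdb, ae_restrict_mem (measurableSet_QT hΩ T)] with p hp hpQ
  by_cases hpε : p.2 < ε
  · rw [indicator_of_mem (show p ∈ timeBelow N ε from hpε), mul_comm (2 / ε + C)]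
    have hle := G.neg_adjHeat_layerTest_le hε (le_of_lt hpQ.2.1) (hC p hpQ)
    calc d p * -adjHeat (layerTest φ ε) p ≤ d p * (2 / ε + C) :=
          mul_le_mul_of_nonneg_left hle hp.1
      _ ≤ b p * (2 / ε + C) := mul_le_mul_of_nonneg_right hp.2 (by positivity)
  · rw [indicator_of_notMem (show p ∉ timeBelow N ε from hpε),
      G.neg_adjHeat_layerTest_of_le hε (not_lt.1 hpε), mul_zero]

lemma IsLocalizer.setIntegral_layer_le (G : IsLocalizer Ω E U φ δ) (hΩ : IsOpen Ω)
    (hΩb : Bornology.IsBounded Ω) (hε : 0 < ε) (hεT : ε ≤ T) {f : Euc N × ℝ → ℝ}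
    (hf : IntegrableOn f (QT Ω T)) (hf0 : ∀ p, 0 ≤ f p) :
    ∫ p in U ×ˢ Iio (ε / 2), f p ∂volume.restrict (QT Ω T) ≤
      4 * ∫ p in QT Ω T, f p * layerTest φ ε p := by
  have hA : MeasurableSet (U ×ˢ Iio (ε / 2)) := G.isOpen.measurableSet.prod measurableSet_Iio
  have hζ := (G.isGlobalTest_layerTest hΩ hε hεT).isC21.continuous
  rw [← integral_indicator hA, ← integral_const_mul]
  refine integral_mono (hf.indicator hA) ((integrableOn_QT_mul hΩ hΩb hf hζ).const_mul 4)
    fun p => ?_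
  by_cases hp : p ∈ U ×ˢ Iio (ε / 2)
  · rw [indicator_of_mem hp]
    nlinarith [G.one_fourth_le_layerTest hε hp, hf0 p]
  · rw [indicator_of_notMem hp]
    exact mul_nonneg (by norm_num) (mul_nonneg (hf0 p) (G.layerTest_nonneg ε p))

/- The test function `layerTest φ ε` costs a factor `2 / ε`, which is compensated because the
corrector has integral `o(ε)` over the initial layer. -/
theorem IsBarrier.exists_setIntegral_lipReg_le {k f : Euc N × ℝ → ℝ}
    (B : IsBarrier Ω T g m U k b f y₀) (G : IsLocalizer Ω E U φ δ) (hΩ : IsOpen Ω)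
    (hΩb : Bornology.IsBounded Ω) (hT : 0 < T) (hg : GoodG g) :
    ∃ C, 0 ≤ C ∧ ∀ e > 0, ∃ ε > 0, ∀ n Y,
      IsApproxSolution Ω T g m (fun p => k p - b p) y₀ n Y (fun p => lipReg g n (Y p)) →
        ∫ p in U ×ˢ Iio (ε / 2), lipReg g n (Y p) ∂volume.restrict (QT Ω T) ≤ C * e := by
  obtain ⟨C, hC⟩ := (isBounded_QT hΩb T).isCompact_closure.exists_bound_of_continuousOn
    G.isC21_space.continuous_adjHeat.continuousOn
  have hC' : ∀ p ∈ QT Ω T, |adjHeat (fun p : Euc N × ℝ => φ p.1) p| ≤ max C 0 :=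
    fun p hp => (hC p (subset_closure hp)).trans (le_max_left _ _)
  refine ⟨4 * (2 + max C 0), by positivity, fun e he => ?_⟩
  obtain ⟨ε, hε, hε1, hεT, hbε⟩ := B.isCorrector.exists_setIntegral_le hT he
  refine ⟨ε, hε, fun n Y I => ?_⟩
  have hdb : ∀ᵐ p ∂volume.restrict (QT Ω T), 0 ≤ y₀ p - Y p ∧ y₀ p - Y p ≤ b p := by
    filter_upwards [I.bounds, B.heatSol_bounds] with p hp hp₀
    constructor <;> linarith
  calc ∫ p in U ×ˢ Iio (ε / 2), lipReg g n (Y p) ∂volume.restrict (QT Ω T)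
      ≤ 4 * ∫ p in QT Ω T, lipReg g n (Y p) * layerTest φ ε p :=
        G.setIntegral_layer_le hΩ hΩb hε hεT I.integrableOn_source
          fun p => lipReg_nonneg hg.nonneg n _
    _ = 4 * ∫ p in QT Ω T, (y₀ p - Y p) * -adjHeat (layerTest φ ε) p := by
        rw [I.setIntegral_lipReg_mul_eq hΩ hΩb B.isHeatSol
          (G.isGlobalTest_layerTest hΩ hε hεT)]
    _ ≤ 4 * ((2 / ε + max C 0) * (e * ε)) := by
        gcongr
        exact (G.setIntegral_mul_neg_adjHeat_layerTest_le hΩ hΩb hε hεT hC'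
          (B.isHeatSol.1.sub I.integrableOn) B.isCorrector.integrableOn hdb
          (le_max_right _ _)).trans (mul_le_mul_of_nonneg_left hbε (by positivity))
    _ = 4 * (2 + max C 0 * ε) * e := by field_simp
    _ ≤ 4 * (2 + max C 0) * e := by
        gcongr
        exact mul_le_of_le_one_right (le_max_right _ _) hε1

end InitialLayer

section ConcentratedMeasures

variable {N : ℕ} {Ω E U : Set (Euc N)} {T δ : ℝ} {g : ℝ → ℝ} {φ : Euc N → ℝ}
  {m μ : Measure (Euc N)} {k b f y₀ Z : Euc N × ℝ → ℝ} {Y : ℕ → Euc N × ℝ → ℝ}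

lemma IsBarrier.isLocalSubsolution (B : IsBarrier Ω T g m U k b f y₀) (hΩ : IsOpen Ω)
    (hΩb : Bornology.IsBounded Ω) : IsLocalSubsolution Ω T g m (fun p => k p - b p) f where
  integrableOn := B.integrableOn_potential.sub B.isCorrector.integrableOn
  integrableOn_source := B.isCorrector.integrableOn_source
  absorption_le := B.absorption_le
  integral_le η hη hη0 := by
    have hadj : Continuous fun p => -adjHeat η p := hη.isC21.continuous_adjHeat.neg
    simp only [sub_mul]
    rw [integral_sub (integrableOn_QT_mul hΩ hΩb B.integrableOn_potential hadj)
      (integrableOn_QT_mul hΩ hΩb B.isCorrector.integrableOn hadj), B.setIntegral_potential η hη]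
    linarith [B.isCorrector.le_integral η hη hη0]

lemma weakSol_of_forall_isGlobalTest (hΩ : IsOpen Ω) (hΩb : Bornology.IsBounded Ω)
    (hZ : IntegrableOn Z (QT Ω T)) (hgZ : IntegrableOn (fun p => g (Z p)) (QT Ω T))
    (hid : ∀ ζ, IsGlobalTest Ω T ζ →
      (∫ p in QT Ω T, Z p * -adjHeat ζ p) + ∫ p in QT Ω T, g (Z p) * ζ p = ∫ x, ζ (x, 0) ∂m) :
    WeakSol Ω T g m Z := by
  have hrho : Continuous fun p : Euc N × ℝ => rho Ω p.1 :=
    (Metric.continuous_infDist_pt Ωᶜ).comp continuous_fst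
  refine ⟨hZ, integrableOn_QT_mul hΩ hΩb hgZ hrho, fun ζ hζ => ?_⟩
  have hζ' : IsGlobalTest Ω T fun p => ζ p.1 p.2 := hζ
  have hadj : Continuous fun p => -adjHeat (fun p : Euc N × ℝ => ζ p.1 p.2) p :=
    hζ'.isC21.continuous_adjHeat.neg
  rw [← hid _ hζ', ← integral_add (integrableOn_QT_mul hΩ hΩb hZ hadj)
    (integrableOn_QT_mul hΩ hΩb hgZ hζ'.isC21.continuous)]
  refine integral_congr_ae (Eventually.of_forall fun p => ?_)
  simp only [adjHeat, heatAdj]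
  ring

lemma ae_tendsto_iInf_of_isApproxSolution {l : Euc N × ℝ → ℝ}
    (hY : ∀ n, IsApproxSolution Ω T g m l y₀ n (Y n) fun p => lipReg g n (Y n p))
    (hmono : ∀ n, ∀ᵐ p ∂volume.restrict (QT Ω T), Y (n + 1) p ≤ Y n p) :
    ∀ᵐ p ∂volume.restrict (QT Ω T), Tendsto (fun n => Y n p) atTop (𝓝 (⨅ n, Y n p)) :=
  (ae_tendsto_iInf_of_succ_le (fun n => (hY n).bounds.mono fun _ hp => hp.1) hmono).mono
    fun _ hp => hp.1

lemma IsBarrier.lipReg_le_of_notMem_layer (B : IsBarrier Ω T g m U k b f y₀) (hΩ : IsOpen Ω)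
    (hg : GoodG g) {τ : ℝ} (hτ : 0 < τ) :
    ∃ C, ∀ n y, IsApproxSolution Ω T g m (fun p => k p - b p) y₀ n y (fun p => lipReg g n (y p)) →
      ∀ᵐ p ∂volume.restrict (QT Ω T), p ∉ U ×ˢ Iio τ → lipReg g n (y p) ≤ C := by
  obtain ⟨D, hD⟩ := B.exists_potential_le τ hτ
  refine ⟨g D, fun n y I => ?_⟩
  filter_upwards [I.bounds, B.heatSol_bounds, ae_restrict_mem (measurableSet_QT hΩ T)]
    with p hp hp₀ hpQ hpU
  have hoff : p.1 ∉ U ∨ τ ≤ p.2 := by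
    rw [mem_prod, not_and_or] at hpU
    exact hpU.imp_right not_lt.1
  calc lipReg g n (y p) ≤ g (y p) := lipReg_le_self hg.nonneg n _
    _ ≤ g D := hg.2.1 ((hp.2.trans hp₀.2.2).trans (hD p hpQ hoff))

/- Only the initial layer could destroy equi-integrability: away from it the iterates are bounded by
the heat potential. -/
lemma IsBarrier.integrableOn_and_tendsto_lipReg (B : IsBarrier Ω T g m U k b f y₀)
    (G : IsLocalizer Ω E U φ δ) (hΩ : IsOpen Ω) (hΩb : Bornology.IsBounded Ω) (hT : 0 < T)
    (hg : GoodG g)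
    (hY : ∀ n, IsApproxSolution Ω T g m (fun p => k p - b p) y₀ n (Y n)
      fun p => lipReg g n (Y n p))
    (hlim : ∀ᵐ p ∂volume.restrict (QT Ω T), Tendsto (fun n => Y n p) atTop (𝓝 (Z p))) :
    IntegrableOn (fun p => g (Z p)) (QT Ω T) ∧
      Tendsto (fun n => ∫⁻ p in QT Ω T, ‖lipReg g n (Y n p) - g (Z p)‖ₑ) atTop (𝓝 0) := by
  have : IsFiniteMeasure (volume.restrict (QT Ω T)) :=
    isFiniteMeasure_restrict.2 (isBounded_QT hΩb T).measure_lt_top.ne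
  obtain ⟨C, hC, hlayer⟩ := B.exists_setIntegral_lipReg_le G hΩ hΩb hT hg
  refine integrable_and_tendsto_lintegral_of_setIntegral_le (fun n => (hY n).integrableOn_source)
    (fun n p => lipReg_nonneg hg.nonneg n _)
    (hlim.mono fun p hp => tendsto_lipReg hg.nonneg hg.2.1 hg.1 hp) fun e he => ?_
  obtain ⟨ε, hε, hsmall⟩ := hlayer (e / (C + 1)) (by positivity)
  obtain ⟨D, hD⟩ := B.lipReg_le_of_notMem_layer hΩ hg (half_pos hε)
  refine ⟨U ×ˢ Iio (ε / 2), G.isOpen.measurableSet.prod measurableSet_Iio,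
    fun n => (hsmall n _ (hY n)).trans ?_, D, fun n => hD n _ (hY n)⟩
  rw [mul_div_assoc', div_le_iff₀ (by positivity), mul_comm]
  exact mul_le_mul_of_nonneg_left (le_add_of_nonneg_right zero_le_one) he.le

lemma IsBarrier.goodMeasure (B : IsBarrier Ω T g m U k b f y₀) (G : IsLocalizer Ω E U φ δ)
    (hΩ : IsOpen Ω) (hΩb : Bornology.IsBounded Ω) (hT : 0 < T) (hg : GoodG g) :
    GoodMeasure Ω T g m := by
  have L := B.isLocalSubsolution hΩ hΩb
  obtain ⟨Y, hY⟩ := L.exists_seq_isApproxSolution hΩ hΩb hg B.isHeatSol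
    (B.heatSol_bounds.mono fun _ hp => ⟨hp.1, hp.2.1⟩)
  have happrox n := (hY n).1
  have hlim := ae_tendsto_iInf_of_isApproxSolution happrox fun n => (hY n).2
  have hdom : IntegrableOn (fun p => |k p - b p| + |y₀ p|) (QT Ω T) :=
    L.integrableOn.abs.add B.isHeatSol.1.abs
  have hZ := integrable_of_tendsto_of_abs_le hdom
    (fun n => (happrox n).integrableOn.aestronglyMeasurable) (fun n => (happrox n).ae_abs_le) hlim
  obtain ⟨hgZ, hgY⟩ := B.integrableOn_and_tendsto_lipReg G hΩ hΩb hT hg happrox hlim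
  refine ⟨_, weakSol_of_forall_isGlobalTest hΩ hΩb hZ hgZ fun ζ hζ => ?_⟩
  have hadj : Continuous fun p => -adjHeat ζ p := hζ.isC21.continuous_adjHeat.neg
  have hlinear := tendsto_setIntegral_mul_of_abs_le (isBounded_QT hΩb T) (measurableSet_QT hΩ T)
    hdom (fun n => (happrox n).integrableOn) (fun n => (happrox n).ae_abs_le) hlim hadj
  have habsorption := tendsto_setIntegral_mul_of_tendsto_lintegral (isBounded_QT hΩb T)
    (measurableSet_QT hΩ T) (fun n => (happrox n).integrableOn_source) hgZ hgY
    hζ.isC21.continuous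
  refine tendsto_nhds_unique (hlinear.add habsorption) ?_
  simp only [fun n => (happrox n).integral_eq ζ hζ]
  exact tendsto_const_nhds

theorem GoodMeasure.mono_of_isCompact (hμ : GoodMeasure Ω T g μ) (hΩ : IsOpen Ω)
    (hΩb : Bornology.IsBounded Ω) (hne : Ωᶜ.Nonempty) (hE : IsCompact E) (hEΩ : E ⊆ Ω)
    (hT : 0 < T) (hg : GoodG g) (hμK : ∀ K ⊆ Ω, IsCompact K → μ K < ⊤) [IsFiniteMeasure m]
    (hm : m Eᶜ = 0) (hmμ : m ≤ μ) : GoodMeasure Ω T g m := by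
  obtain ⟨u, hu⟩ := hμ
  obtain ⟨U, φ, δ, G⟩ := exists_isLocalizer hΩ hE hEΩ
  obtain ⟨k, b, f, y, B⟩ :=
    hu.exists_isBarrier G hΩ hΩb hne hE.isClosed hEΩ hT hg hμK hm hmμ
  exact B.goodMeasure G hΩ hΩb hT hg

end ConcentratedMeasures

section MeasureLattice

variable {α : Type*}

lemma max_add_min_le_max_add_min [AddCommMonoid α] [LinearOrder α] [IsOrderedAddMonoid α]
    {a b c d : α} (hca : c ≤ a) (hdb : d ≤ b) (hcb : min c b ≤ d) (hda : min d a ≤ c) :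
    max c d + min a b ≤ max a b + min c d := by
  have hordered {a b c d : α} (hdb : d ≤ b) (hda : min d a ≤ c) :
      d + min a b ≤ max a b + c := by
    rcases le_total d a with hle | hle
    · rw [min_eq_left hle] at hda
      rw [add_comm]
      exact add_le_add min_le_max hda
    · rw [min_eq_right hle] at hda
      exact add_le_add (hdb.trans (le_max_right a b)) ((min_le_left a b).trans hda)
  rcases le_total c d with hcd | hcd
  · rw [max_eq_right hcd, min_eq_left hcd]
    exact hordered hdb hda
  · rw [max_eq_left hcd, min_eq_right hcd, min_comm a, max_comm a]
    exact hordered hca hcb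

variable [MeasurableSpace α] {μ ν μ' ν' : Measure α} {f g : α → ℝ≥0∞} {s : Set α}

lemma le_of_restrict_le_restrict (hs : MeasurableSet s) (h : μ.restrict s ≤ ν.restrict s)
    (hc : μ.restrict sᶜ ≤ ν.restrict sᶜ) : μ ≤ ν := by
  rw [← Measure.restrict_add_restrict_compl (μ := μ) hs,
    ← Measure.restrict_add_restrict_compl (μ := ν) hs]
  exact add_le_add h hc

lemma restrict_withDensity_le_restrict_withDensity (hs : MeasurableSet s)
    (h : ∀ x ∈ s, f x ≤ g x) : (μ.withDensity f).restrict s ≤ (μ.withDensity g).restrict s := by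
  rw [restrict_withDensity hs, restrict_withDensity hs]
  exact withDensity_mono (ae_restrict_of_forall_mem hs h)

lemma withDensity_max (hf : Measurable f) (hg : Measurable g) :
    μ.withDensity (fun x => max (f x) (g x)) = μ.withDensity f ⊔ μ.withDensity g := by
  have hs : MeasurableSet {x | f x ≤ g x} := measurableSet_le hf hg
  refine le_antisymm (le_of_restrict_le_restrict hs ?_ ?_)
    (sup_le (withDensity_mono (Eventually.of_forall fun _ => le_max_left _ _))
      (withDensity_mono (Eventually.of_forall fun _ => le_max_right _ _)))
  · exact (restrict_withDensity_le_restrict_withDensity hs fun x hx => max_le hx le_rfl).trans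
      (Measure.restrict_mono_measure le_sup_right _)
  · exact (restrict_withDensity_le_restrict_withDensity hs.compl
      fun x hx => max_le le_rfl (le_of_not_ge hx)).trans
        (Measure.restrict_mono_measure le_sup_left _)

lemma withDensity_min (hf : Measurable f) (hg : Measurable g) :
    μ.withDensity (fun x => min (f x) (g x)) = μ.withDensity f ⊓ μ.withDensity g := by
  have hs : MeasurableSet {x | f x ≤ g x} := measurableSet_le hf hg
  refine le_antisymm
    (le_inf (withDensity_mono (Eventually.of_forall fun _ => min_le_left _ _))
      (withDensity_mono (Eventually.of_forall fun _ => min_le_right _ _)))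
    (le_of_restrict_le_restrict hs ?_ ?_)
  · exact (Measure.restrict_mono_measure inf_le_left _).trans
      (restrict_withDensity_le_restrict_withDensity hs fun x hx => le_min le_rfl hx)
  · exact (Measure.restrict_mono_measure inf_le_right _).trans
      (restrict_withDensity_le_restrict_withDensity hs.compl
        fun x hx => le_min (le_of_not_ge hx) le_rfl)

lemma ae_le_of_withDensity_le [SigmaFinite μ] (hf : Measurable f)
    (h : μ.withDensity f ≤ μ.withDensity g) : f ≤ᵐ[μ] g :=
  ae_le_of_forall_setLIntegral_le_of_sigmaFinite hf fun s hs _ => by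
    rw [← withDensity_apply _ hs, ← withDensity_apply _ hs]
    exact h s

lemma exists_measurable_eq_withDensity_of_le [SigmaFinite μ] [SigmaFinite ν] (h : μ ≤ ν) :
    ∃ f, Measurable f ∧ μ = ν.withDensity f :=
  ⟨μ.rnDeriv ν, Measure.measurable_rnDeriv μ ν,
    (Measure.withDensity_rnDeriv_eq μ ν (Measure.absolutelyContinuous_of_le h)).symm⟩

theorem sup_add_inf_le_sup_add_inf [SigmaFinite μ] [SigmaFinite ν] [SigmaFinite μ']
    [SigmaFinite ν'] (hμ : μ' ≤ μ) (hν : ν' ≤ ν) (hμν : μ' ⊓ ν ≤ ν') (hνμ : ν' ⊓ μ ≤ μ') :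
    (μ' ⊔ ν') + (μ ⊓ ν) ≤ (μ ⊔ ν) + (μ' ⊓ ν') := by
  obtain ⟨σ, hσ, hμσ, hνσ⟩ : ∃ σ : Measure α, SigmaFinite σ ∧ μ ≤ σ ∧ ν ≤ σ :=
    ⟨μ + ν, inferInstance, Measure.le_add_right le_rfl, Measure.le_add_left le_rfl⟩
  obtain ⟨c, hc, rfl⟩ := exists_measurable_eq_withDensity_of_le (hμ.trans hμσ)
  obtain ⟨d, hd, rfl⟩ := exists_measurable_eq_withDensity_of_le (hν.trans hνσ)
  obtain ⟨a, ha, rfl⟩ := exists_measurable_eq_withDensity_of_le hμσ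
  obtain ⟨b, hb, rfl⟩ := exists_measurable_eq_withDensity_of_le hνσ
  rw [← withDensity_min hc hb] at hμν
  rw [← withDensity_min hd ha] at hνμ
  rw [← withDensity_max hc hd, ← withDensity_min ha hb, ← withDensity_max ha hb,
    ← withDensity_min hc hd, ← withDensity_add_left (hc.max hd),
    ← withDensity_add_left (ha.max hb)]
  refine withDensity_mono ?_
  filter_upwards [ae_le_of_withDensity_le hc hμ, ae_le_of_withDensity_le hd hν,
    ae_le_of_withDensity_le (hc.min hb) hμν, ae_le_of_withDensity_le (hd.min ha) hνμ]
    with x hca hdb hcb hda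
  exact max_add_min_le_max_add_min hca hdb hcb hda

lemma le_of_forall_restrict_le {F : ℕ → Set α} (hF : Monotone F) (hμF : μ (⋃ n, F n)ᶜ = 0)
    (h : ∀ n, μ.restrict (F n) ≤ ν) : μ ≤ ν := by
  have hae : ∀ᵐ x ∂μ, x ∈ ⋃ n, F n := hμF
  rw [← Measure.restrict_eq_self_of_ae_mem hae]
  refine Measure.le_iff.2 fun s hs => ?_
  rw [Measure.restrict_iUnion_apply_eq_iSup hF.directed_le hs]
  exact iSup_le fun n => h n s

end MeasureLattice

section ReducedMeasures

variable {N : ℕ} {Ω : Set (Euc N)} {T : ℝ} {g : ℝ → ℝ} {μ μ' ν ν' : Measure (Euc N)}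

lemma MemM1.sigmaFinite (h : MemM1 Ω μ) (hΩ : IsOpen Ω) (hΩb : Bornology.IsBounded Ω) :
    SigmaFinite μ := by
  obtain ⟨F, hF, hFΩ, hFU, -⟩ := hΩ.exists_iUnion_isClosed
  refine ⟨⟨⟨fun n => F n ∪ Ωᶜ, fun _ => trivial, fun n => ?_, ?_⟩⟩⟩
  · refine (measure_union_le _ _).trans_lt ?_
    rw [h.1, add_zero]
    exact h.2.1 _ (hFΩ n) (Metric.isCompact_of_isClosed_isBounded (hF n) (hΩb.subset (hFΩ n)))
  · rw [← iUnion_union, hFU, union_compl_self]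

lemma MemM1.mono (h : MemM1 Ω μ) (hμ : μ' ≤ μ) : MemM1 Ω μ' :=
  ⟨Measure.absolutelyContinuous_of_le hμ h.1, fun K hKΩ hK => (hμ K).trans_lt (h.2.1 K hKΩ hK),
    (lintegral_mono' hμ le_rfl).trans_lt h.2.2⟩

theorem IsReducedMeasure.inf_le (hν : IsReducedMeasure Ω T g ν ν') (hΩ : IsOpen Ω)
    (hΩb : Bornology.IsBounded Ω) (hne : Ωᶜ.Nonempty) (hT : 0 < T) (hg : GoodG g)
    (hμ : MemM1 Ω μ) (hμg : GoodMeasure Ω T g μ) : μ ⊓ ν ≤ ν' := by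
  obtain ⟨F, hF, hFΩ, hFU, hFmono⟩ := hΩ.exists_iUnion_isClosed
  refine le_of_forall_restrict_le hFmono (hFU ▸ (hμ.mono inf_le_left).1) fun n => ?_
  have hcompact : IsCompact (F n) :=
    Metric.isCompact_of_isClosed_isBounded (hF n) (hΩb.subset (hFΩ n))
  have hle : (μ ⊓ ν).restrict (F n) ≤ μ := Measure.restrict_le_self.trans inf_le_left
  have : IsFiniteMeasure ((μ ⊓ ν).restrict (F n)) :=
    isFiniteMeasure_restrict.2 ((hμ.mono inf_le_left).2.1 _ (hFΩ n) hcompact).ne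
  have hconc : (μ ⊓ ν).restrict (F n) (F n)ᶜ = 0 := by
    rw [Measure.restrict_apply (hF n).measurableSet.compl, compl_inter_self, measure_empty]
  exact hν.2.2.2 _ (hμ.mono hle)
    (hμg.mono_of_isCompact hΩ hΩb hne hcompact (hFΩ n) hT hg hμ.2.1 hconc hle)
    (Measure.restrict_le_self.trans inf_le_right)

lemma nonempty_compl_of_isBounded (hN : 1 ≤ N) (hΩb : Bornology.IsBounded Ω) :
    Ωᶜ.Nonempty := by
  have : Nonempty (Fin N) := Fin.pos_iff_nonempty.1 hN
  refine nonempty_compl.2 fun h => ?_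
  exact NormedSpace.unbounded_univ ℝ (EuclideanSpace ℝ (Fin N)) (h ▸ hΩb)

end ReducedMeasures

theorem stmt_17_general {N : ℕ} (hN : 1 ≤ N) {Ω : Set (Euc N)} (hΩo : IsOpen Ω)
    (hΩb : Bornology.IsBounded Ω) {T : ℝ} (hT : 0 < T) {g : ℝ → ℝ} (hg : GoodG g)
    {μ ν μstar νstar : Measure (Euc N)} (hμ : MemM1 Ω μ) (hν : MemM1 Ω ν)
    (hredμ : IsReducedMeasure Ω T g μ μstar) (hredν : IsReducedMeasure Ω T g ν νstar) :
    (μstar ⊔ νstar) + (μ ⊓ ν) ≤ (μ ⊔ ν) + (μstar ⊓ νstar) := by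
  have hne := nonempty_compl_of_isBounded hN hΩb
  have := hμ.sigmaFinite hΩo hΩb
  have := hν.sigmaFinite hΩo hΩb
  have := hredμ.1.sigmaFinite hΩo hΩb
  have := hredν.1.sigmaFinite hΩo hΩb
  exact sup_add_inf_le_sup_add_inf hredμ.2.1 hredν.2.1
    (hredν.inf_le hΩo hΩb hne hT hg hredμ.1 hredμ.2.2.1)
    (hredμ.inf_le hΩo hΩb hne hT hg hredν.1 hredν.2.2.1)

/-- **Theorem 2.21.** `|μ* − ν*| ≤ |μ − ν|`, stated for positive measures as
`(sup{μ*,ν*})(A) + (inf{μ,ν})(A) ≤ (sup{μ,ν})(A) + (inf{μ*,ν*})(A)` for every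
Borel set `A ⊆ Ω`. -/
theorem stmt_17 {N : ℕ} (hN : 1 ≤ N) (Ω : Set (Euc N)) (hΩo : IsOpen Ω)
    (hΩc : IsConnected Ω) (hΩb : Bornology.IsBounded Ω) (T : ℝ) (hT : 0 < T)
    (g : ℝ → ℝ) (hg : GoodG g) (μ ν μstar νstar : Measure (Euc N))
    (hμ : MemM1 Ω μ) (hν : MemM1 Ω ν)
    (hredμ : IsReducedMeasure Ω T g μ μstar)
    (hredν : IsReducedMeasure Ω T g ν νstar) :
    ∀ A : Set (Euc N), MeasurableSet A → A ⊆ Ω →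
      (μstar ⊔ νstar) A + (μ ⊓ ν) A ≤ (μ ⊔ ν) A + (μstar ⊓ νstar) A :=
  fun A _ _ => stmt_17_general hN hΩo hΩb hT hg hμ hν hredμ hredν A
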